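/- Let (u, ϱ) be a smooth solution on [0,∞) of the perturbation system with no-slip boundary condition, with 0 < α₁ ≤ ϱ₀ + ρ_s ≤ α₂ < ∞, initial data (u₀, ϱ₀) ∈ H²(Ω) × L^∞(Ω), and ∇f ∈ W^{1,∞}(Ω). Then the velocity is uniformly bounded in space and time: there is a constant C₀ (independent of t) such that ‖u(t)‖_{L^∞(Ω)} ≤ C₀ for all t ∈ [0,∞). -/

import Mathlib

/-!
The bound rests on an energy argument that becomes effective once the Dirichlet energy is small.
Write `U` for the velocity, `R = ϱ + ρ_s` for the total density, `z = ∫ |∇U|²` and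
`y = ∫ R |∂ₜU|²`. By `Sol.of_perturbation`, `R` and `U` solve the inhomogeneous Navier–Stokes
equations with force `-R ∇f`, the hydrostatic pressure being added to `P`.

*A priori bounds.* The density stays in `[α₁, α₂]` (`Sol.density`), and the kinetic plus potential
energy `∫ (R |U|² / 2 + R f)` has time derivative `-ν z` (`Sol.energy`). It is bounded below, so
`∫ z dt` is finite.

*Static estimate.* At a fixed time, `U` solves a Stokes system. No regularity up to the boundary is
used; second derivatives are estimated with the weight `φ²`, where `φ` is the defining function of
`Ω`. The test field, the rotated gradient of `φ²` times the vorticity, is divergence free and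
vanishes on `∂Ω`, so the pressure disappears (`stokes_le`), and `hess_le` passes from the Laplacian
to the Hessian. Since `φ` vanishes to first order on `∂Ω`, Hardy's inequality (`hardy`,
`hardy_pair`) turns this weighted bound into a bound of `sup |U|²` (`sup_est`, `static_est`). For
small `z` the convective term is absorbed, and `sup |U|²` and the weighted Hessian are at most
`C (1 + y)` (`Sol.static`).

*Evolution of `z` and `y`.* For small `z`, testing with `∂ₜU` gives `y / 4 + (ν / 2) z' ≤ C`
(`Sol.step2`), and differentiating the momentum equation in time and testing with `∂ₜU` gives
`y' ≤ C (1 + y)³` (`Sol.accel`, `Sol.step3`); the second derivatives of `U` that arise are paired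
with `∂ₜU`, which vanishes on `∂Ω`, so Hardy's inequality and the weighted estimates suffice.
Together with the energy identity these inequalities make `z` small and `y` bounded from some time
`T` on (`ode_bound`), and then the static estimate bounds `U`. Before `T` the solution is continuous
on the compact set `[0, T] × closure Ω` (`Sol.bounded`).
-/

open MeasureTheory Real Filter Topology Set
open scoped RealInnerProductSpace

noncomputable section

/-- The plane `ℝ²`. -/
abbrev E2 := EuclideanSpace ℝ (Fin 2)

/-- Divergence of a vector field on `ℝ²`. -/
def vdiv (u : E2 → E2) (x : E2) : ℝ :=
  ∑ i : Fin 2, fderiv ℝ u x (EuclideanSpace.single i 1) i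

/-- Componentwise Laplacian of a vector field on `ℝ²`. -/
def vlap (u : E2 → E2) (x : E2) : E2 :=
  ∑ j : Fin 2, fderiv ℝ (fun y => fderiv ℝ u y (EuclideanSpace.single j 1)) x
    (EuclideanSpace.single j 1)

/-- `Ω` is a bounded domain in `ℝ²` with smooth boundary. -/
def SmoothBoundedDomain (Ω : Set E2) : Prop :=
  IsOpen Ω ∧ Bornology.IsBounded Ω ∧ Ω.Nonempty ∧
    ∃ φ : E2 → ℝ, ContDiff ℝ (⊤ : ℕ∞) φ ∧ Ω = {x | φ x < 0} ∧
      ∀ x ∈ frontier Ω, fderiv ℝ φ x ≠ 0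

/-- Membership in the Sobolev space `H^k(Ω)` (square-integrable derivatives up to order `k`). -/
def MemHk {F : Type*} [NormedAddCommGroup F] [NormedSpace ℝ F]
    (k : ℕ) (Ω : Set E2) (g : E2 → F) : Prop :=
  ∀ j : ℕ, j ≤ k → IntegrableOn (fun x => ‖iteratedFDeriv ℝ j g x‖ ^ 2) Ω

/-- Joint smoothness of a solution `(u, ϱ, P)` of the system. -/
def SmoothSol (u : ℝ → E2 → E2) (ϱ P : ℝ → E2 → ℝ) : Prop :=
  ContDiff ℝ (⊤ : ℕ∞) (fun p : ℝ × E2 => u p.1 p.2) ∧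
    ContDiff ℝ (⊤ : ℕ∞) (fun p : ℝ × E2 => ϱ p.1 p.2) ∧
    ContDiff ℝ (⊤ : ℕ∞) (fun p : ℝ × E2 => P p.1 p.2)

/-- `ρ_s` is a steady hydrostatic density profile: there is a pressure `p_s` with
`∇p_s = −ρ_s ∇f` on `Ω`. -/
def Hydrostatic (Ω : Set E2) (f ρs : E2 → ℝ) : Prop :=
  ∃ ps : E2 → ℝ, ContDiff ℝ (⊤ : ℕ∞) ps ∧ ∀ x ∈ Ω, gradient ps x = -(ρs x • gradient f x)

/-- The 2D inhomogeneous incompressible Navier–Stokes perturbation system on `Ω`: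
`(ϱ+ρ_s) ∂_t u + (ϱ+ρ_s)(u·∇)u = ν Δu − ∇P − ϱ ∇f`, `∂_t ϱ + u·∇ϱ + u·∇ρ_s = 0`,
`∇·u = 0`, with the no-slip boundary condition `u|_{∂Ω} = 0`. -/
def PerturbationSystem (Ω : Set E2) (ν : ℝ) (f ρs : E2 → ℝ)
    (u : ℝ → E2 → E2) (ϱ P : ℝ → E2 → ℝ) : Prop :=
  (∀ t ∈ Ici (0:ℝ), ∀ x ∈ Ω,
    (ϱ t x + ρs x) • deriv (fun s => u s x) t
        + (ϱ t x + ρs x) • fderiv ℝ (u t) x (u t x)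
      = ν • vlap (u t) x - gradient (P t) x - ϱ t x • gradient f x) ∧
  (∀ t ∈ Ici (0:ℝ), ∀ x ∈ Ω,
    deriv (fun s => ϱ s x) t + fderiv ℝ (ϱ t) x (u t x) + fderiv ℝ ρs x (u t x) = 0) ∧
  (∀ t ∈ Ici (0:ℝ), ∀ x ∈ Ω, vdiv (u t) x = 0) ∧
  (∀ t ∈ Ici (0:ℝ), ∀ x ∈ frontier Ω, u t x = 0)

/-- `∇f ∈ W^{1,∞}(Ω)`. -/
def GradfW1inf (Ω : Set E2) (f : E2 → ℝ) : Prop :=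
  ∃ M : ℝ, ∀ x ∈ Ω, ‖gradient f x‖ ≤ M ∧ ‖iteratedFDeriv ℝ 2 f x‖ ≤ M

/-- `f ∈ W^{2,∞}(Ω)`. -/
def fW2inf (Ω : Set E2) (f : E2 → ℝ) : Prop :=
  ∃ M : ℝ, ∀ x ∈ Ω, |f x| ≤ M ∧ ‖gradient f x‖ ≤ M ∧ ‖iteratedFDeriv ℝ 2 f x‖ ≤ M

section
open scoped ContDiff

/-! ### Integration along lines -/

/-- Points where `g` takes the value `c` with nonzero derivative are isolated in the set of all such
points, so there are only countably many of them. -/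
theorem countable_simple_zeros (g : ℝ → ℝ) (c : ℝ) :
    {x | DifferentiableAt ℝ g x ∧ g x = c ∧ deriv g x ≠ 0}.Countable := by
  set s := {x | DifferentiableAt ℝ g x ∧ g x = c ∧ deriv g x ≠ 0}
  have : DiscreteTopology s := by
    rw [discreteTopology_subtype_iff]
    rintro x ⟨hx, hc, hd⟩
    have h := hx.hasDerivAt.eventually_ne (c := c) hd
    rw [← Filter.empty_mem_iff_bot, Filter.mem_inf_principal]
    filter_upwards [h] with z hz hzs
    exact hz hzs.2.1
  have h2 : Countable s := TopologicalSpace.separableSpace_iff_countable.1 inferInstance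
  exact Set.countable_coe_iff.1 h2

/-- The fundamental theorem of calculus for `g` cut off outside an open set `S`, when `g` vanishes on
`∂S`. The cut-off function is differentiable except at zeros of `g` with nonzero derivative, which
are countably many; no regularity of `S` is needed. -/
theorem line_ftc {S : Set ℝ} (hS : IsOpen S) {g : ℝ → ℝ}
    (hg : ∀ x ∈ closure S, ContDiffAt ℝ 1 g x) (h0 : ∀ x ∈ frontier S, g x = 0)
    {a b : ℝ} (hab : a ≤ b) :
    IntegrableOn (S.indicator (deriv g)) (Icc a b) ∧
    ∫ x in a..b, S.indicator (deriv g) x = S.indicator g b - S.indicator g a := by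
  have hdc : ContinuousOn (deriv g) (closure S) := by
    intro x hx
    have h1 := (hg x hx).fderiv_right (m := 0) (by norm_num)
    have : deriv g = fun y => fderiv ℝ g y 1 := by ext y; simp
    rw [this]
    exact (h1.continuousAt.clm_apply continuousAt_const).continuousWithinAt
  have hgd : ∀ x ∈ closure S, DifferentiableAt ℝ g x := fun x hx =>
    (hg x hx).differentiableAt (by norm_num)
  have hint : IntegrableOn (S.indicator (deriv g)) (Icc a b) := by
    have h1 : IntegrableOn (deriv g) (closure S ∩ Icc a b) :=
      (hdc.mono inter_subset_left).integrableOn_compact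
        (isCompact_Icc.inter_left isClosed_closure)
    rw [IntegrableOn, integrable_indicator_iff hS.measurableSet, IntegrableOn,
      Measure.restrict_restrict hS.measurableSet]
    exact h1.mono_set (inter_subset_inter_left _ subset_closure)
  refine ⟨hint, ?_⟩
  refine integral_eq_of_hasDerivAt_off_countable_of_le (S.indicator g) _ hab
    (countable_simple_zeros g 0) ?_ ?_ ?_
  · refine Continuous.continuousOn ?_
    exact continuous_indicator h0 (fun x hx => (hgd x hx).continuousAt.continuousWithinAt)
  · rintro x ⟨-, hx⟩
    by_cases hxS : x ∈ S
    · rw [indicator_of_mem hxS]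
      refine (hgd x (subset_closure hxS)).hasDerivAt.congr_of_eventuallyEq ?_
      filter_upwards [hS.mem_nhds hxS] with y hy
      rw [indicator_of_mem hy]
    rw [indicator_of_notMem hxS]
    by_cases hxc : x ∈ closure S
    · have hxf : x ∈ frontier S := by
        rw [hS.frontier_eq]; exact ⟨hxc, hxS⟩
      have hd0 : deriv g x = 0 := by
        by_contra hne
        exact hx ⟨hgd x hxc, h0 x hxf, hne⟩
      have hd := (hgd x hxc).hasDerivAt
      rw [hd0, hasDerivAt_iff_isLittleO] at hd
      rw [hasDerivAt_iff_isLittleO]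
      refine Asymptotics.IsBigO.trans_isLittleO (Asymptotics.IsBigO.of_bound 1 ?_) hd
      filter_upwards with y
      rw [indicator_of_notMem hxS, h0 x hxf]
      by_cases hy : y ∈ S <;> simp [hy]
    · refine (hasDerivAt_const x (0:ℝ)).congr_of_eventuallyEq ?_
      filter_upwards [isClosed_closure.isOpen_compl.mem_nhds hxc] with y hy
      rw [indicator_of_notMem (fun h => hy (subset_closure h))]
  · rw [intervalIntegrable_iff_integrableOn_Icc_of_le hab]
    exact hint

/-- The directional derivative of `g` along the constant vector `v`. -/
def dd {E : Type*} [NormedAddCommGroup E] [NormedSpace ℝ E] (v : E) (g : E → ℝ) (x : E) : ℝ :=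
  fderiv ℝ g x v

/-- The `i`-th standard basis vector of the plane. -/
abbrev ee (i : Fin 2) : E2 := EuclideanSpace.single i 1

/-- The point of the plane with coordinates `(p.1, p.2)`. -/
def pt (p : ℝ × ℝ) : E2 := !₂[p.1, p.2]

theorem pt_mp : MeasurePreserving pt ∧ MeasurableEmbedding pt := by
  have h1 := ((volume_preserving_finTwoArrow ℝ).symm).trans
    (EuclideanSpace.volume_preserving_symm_measurableEquiv_toLp (Fin 2)).symm
  have h2 : pt = ((MeasurableEquiv.finTwoArrow (α := ℝ)).symm.trans
      (MeasurableEquiv.toLp 2 (Fin 2 → ℝ))) := by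
    ext p i
    fin_cases i <;> simp [pt, MeasurableEquiv.finTwoArrow]
  rw [h2]
  exact ⟨h1, MeasurableEquiv.measurableEmbedding _⟩

theorem pt_surj (x : E2) : pt (x 0, x 1) = x := by
  ext i; fin_cases i <;> simp [pt]

theorem pt_hasDeriv0 (s y : ℝ) : HasDerivAt (fun s => pt (s, y)) (ee 0) s := by
  have : (fun s => pt (s, y)) = fun s => s • ee 0 + y • ee 1 := by
    ext s i; fin_cases i <;> simp [pt]
  rw [this]
  simpa using ((hasDerivAt_id s).smul_const (ee 0)).add_const (y • ee 1)

theorem pt_hasDeriv1 (s y : ℝ) : HasDerivAt (fun y => pt (s, y)) (ee 1) y := by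
  have : (fun y => pt (s, y)) = fun y => s • ee 0 + y • ee 1 := by
    ext s i; fin_cases i <;> simp [pt]
  rw [this]
  simpa using ((hasDerivAt_id y).smul_const (ee 1)).const_add (s • ee 0)

theorem pt_contDiff : ContDiff ℝ ∞ pt := by
  have : pt = fun p => p.1 • ee 0 + p.2 • ee 1 := by
    ext s i; fin_cases i <;> simp [pt]
  rw [this]
  fun_prop

/-- One-dimensional restriction of a function vanishing on `∂Ω`: both the vanishing of the total
integral of the derivative and the bound of the function by the integral of its derivative. -/
theorem line_lemma {Ω : Set E2} (hΩ : IsOpen Ω) {R : ℝ} (hR : ∀ x ∈ Ω, ‖x‖ < R)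
    {w : E2 → ℝ} (hw : ∀ x ∈ closure Ω, ContDiffAt ℝ 1 w x) (h0 : ∀ x ∈ frontier Ω, w x = 0)
    (v : E2) (γ : ℝ → E2) (hγ : ∀ s, HasDerivAt γ v s) (hγc : ContDiff ℝ ∞ γ)
    (hγR : ∀ s, |s| ≤ ‖γ s‖) :
    Integrable (fun s => Ω.indicator (dd v w) (γ s)) ∧
    ∫ s, Ω.indicator (dd v w) (γ s) = 0 ∧
    ∀ s, |Ω.indicator w (γ s)| ≤ ∫ s, |Ω.indicator (dd v w) (γ s)| := by
  set S := γ ⁻¹' Ω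
  have hS : IsOpen S := hΩ.preimage hγc.continuous
  have hSR : ∀ s ∈ S, |s| < R := fun s hs => (hγR s).trans_lt (hR _ hs)
  have hcl : ∀ x ∈ closure S, γ x ∈ closure Ω := fun x hx =>
    hγc.continuous.closure_preimage_subset Ω hx
  have hg : ∀ x ∈ closure S, ContDiffAt ℝ 1 (fun s => w (γ s)) x := fun x hx =>
    (hw _ (hcl x hx)).comp x (hγc.contDiffAt.of_le (by exact_mod_cast le_top))
  have hg0 : ∀ x ∈ frontier S, (fun s => w (γ s)) x = 0 := fun x hx =>
    h0 _ (hγc.continuous.frontier_preimage_subset Ω hx)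
  have hd : ∀ s, S.indicator (deriv (fun s => w (γ s))) s = Ω.indicator (dd v w) (γ s) := by
    intro s
    by_cases hs : s ∈ S
    · rw [indicator_of_mem hs, indicator_of_mem (show γ s ∈ Ω from hs)]
      have h1 := ((hw _ (subset_closure hs)).differentiableAt (by norm_num)).hasFDerivAt
      exact (h1.comp_hasDerivAt s (hγ s)).deriv
    · rw [indicator_of_notMem hs, indicator_of_notMem (show γ s ∉ Ω from hs)]
  have hd' := funext hd
  have hi : ∀ s, S.indicator (fun s => w (γ s)) s = Ω.indicator w (γ s) := by
    intro s
    by_cases hs : s ∈ S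
    · rw [indicator_of_mem hs, indicator_of_mem (show γ s ∈ Ω from hs)]
    · rw [indicator_of_notMem hs, indicator_of_notMem (show γ s ∉ Ω from hs)]
  have hout : ∀ s, s ∉ Icc (-R) R → Ω.indicator (dd v w) (γ s) = 0 := by
    intro s hs
    rw [indicator_of_notMem]
    intro h
    exact hs (abs_le.1 (hSR s h).le)
  have hend : ∀ s, ¬ |s| < R → Ω.indicator w (γ s) = 0 := by
    intro s hs
    rw [indicator_of_notMem]
    intro h
    exact hs (hSR s h)
  by_cases hR0 : 0 ≤ R
  swap
  · have h1 : ∀ s, γ s ∉ Ω := fun s hs =>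
      hR0 ((abs_nonneg s).trans (hSR s hs).le)
    simp [h1]
  have key := fun b hb => line_ftc hS hg hg0 (a := -R) (b := b) hb
  simp only [hd', hi] at key
  have hint : Integrable (fun s => Ω.indicator (dd v w) (γ s)) := by
    rw [← integrableOn_iff_integrable_of_support_subset (s := Icc (-R) R)]
    · exact (key R (by linarith)).1
    · intro s hs; by_contra h; exact hs (hout s h)
  refine ⟨hint, ?_, ?_⟩
  · rw [← setIntegral_eq_integral_of_forall_compl_eq_zero (s := Icc (-R) R) hout,
      integral_Icc_eq_integral_Ioc, ← intervalIntegral.integral_of_le (by linarith),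
      (key R (by linarith)).2, hend, hend] <;> simp [abs_of_nonneg hR0]
  · intro s
    by_cases hs : |s| < R
    · have h1 := (key s (abs_lt.1 hs).1.le).2
      rw [hend (-R) (by simp [abs_of_nonneg hR0]), sub_zero] at h1
      rw [← h1]
      refine (intervalIntegral.abs_integral_le_integral_abs (abs_lt.1 hs).1.le).trans ?_
      rw [intervalIntegral.integral_of_le (abs_lt.1 hs).1.le]
      exact setIntegral_le_integral hint.abs (Eventually.of_forall fun _ => abs_nonneg _)
    · rw [hend s hs, abs_zero]
      exact integral_nonneg fun _ => abs_nonneg _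

/-! ### Directional derivatives -/

section Calculus
variable {E : Type*} [NormedAddCommGroup E] [NormedSpace ℝ E]

@[fun_prop]
theorem dd_contDiff {v : E} {g : E → ℝ} (hg : ContDiff ℝ ∞ g) : ContDiff ℝ ∞ (dd v g) := by
  have h : ContDiff ℝ ∞ (fderiv ℝ g) := hg.fderiv_right (by norm_cast)
  exact h.clm_apply contDiff_const

@[fun_prop]
theorem dd_continuous {v : E} {g : E → ℝ} (hg : ContDiff ℝ ∞ g) : Continuous (dd v g) :=
  (dd_contDiff hg).continuous

theorem smooth_diff {g : E → ℝ} (hg : ContDiff ℝ ∞ g) (x : E) : DifferentiableAt ℝ g x :=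
  hg.differentiable (by norm_num) x

theorem dd_mul {v : E} {g h : E → ℝ} (hg : ContDiff ℝ ∞ g) (hh : ContDiff ℝ ∞ h) (x : E) :
    dd v (fun y => g y * h y) x = dd v g x * h x + g x * dd v h x := by
  simp only [dd]
  rw [fderiv_fun_mul (smooth_diff hg x) (smooth_diff hh x)]
  simp; ring

theorem dd_add {v : E} {g h : E → ℝ} (hg : ContDiff ℝ ∞ g) (hh : ContDiff ℝ ∞ h) (x : E) :
    dd v (fun y => g y + h y) x = dd v g x + dd v h x := by
  simp only [dd]
  rw [fderiv_fun_add (smooth_diff hg x) (smooth_diff hh x)]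
  simp

theorem dd_sub {v : E} {g h : E → ℝ} (hg : ContDiff ℝ ∞ g) (hh : ContDiff ℝ ∞ h) (x : E) :
    dd v (fun y => g y - h y) x = dd v g x - dd v h x := by
  simp only [dd]
  rw [fderiv_fun_sub (smooth_diff hg x) (smooth_diff hh x)]
  simp

theorem dd_neg {v : E} {g : E → ℝ} (x : E) :
    dd v (fun y => - g y) x = - dd v g x := by
  simp only [dd]
  rw [fderiv_fun_neg]
  simp

theorem dd_sq {v : E} {g : E → ℝ} (hg : ContDiff ℝ ∞ g) (x : E) :
    dd v (fun y => g y ^ 2) x = 2 * g x * dd v g x := by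
  simp only [pow_two, dd_mul hg hg]; ring

theorem dd_const {v : E} (c : ℝ) (x : E) : dd v (fun _ => c) x = 0 := by
  simp [dd]

theorem dd_comm {v w : E} {g : E → ℝ} (hg : ContDiff ℝ ∞ g) (x : E) :
    dd v (dd w g) x = dd w (dd v g) x := by
  have h : Differentiable ℝ (fderiv ℝ g) :=
    (hg.fderiv_right (m := ∞) (by norm_cast)).differentiable (by norm_num)
  have h1 : ∀ a b : E, dd a (dd b g) x = fderiv ℝ (fderiv ℝ g) x a b := by
    intro a b
    change fderiv ℝ (fun y => fderiv ℝ g y b) x a = _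
    rw [fderiv_clm_apply (h x) (differentiableAt_const b)]
    simp
  rw [h1, h1]
  exact ((contDiff_infty.1 hg 2).contDiffAt.isSymmSndFDerivAt (by simp)) v w
end Calculus

/-! ### Integration over the domain -/

theorem intOn {Ω : Set E2} (hb : Bornology.IsBounded Ω) {g : E2 → ℝ}
    (hg : ContinuousOn g (closure Ω)) : IntegrableOn g Ω :=
  (hg.integrableOn_compact hb.isCompact_closure).mono_set subset_closure

theorem intC {Ω : Set E2} (hb : Bornology.IsBounded Ω) {g : E2 → ℝ}
    (hg : Continuous g) : IntegrableOn g Ω := intOn hb hg.continuousOn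

theorem le_norm_pt (s y : ℝ) : |s| ≤ ‖pt (s, y)‖ ∧ |y| ≤ ‖pt (s, y)‖ := by
  constructor
  · simpa [pt] using PiLp.norm_apply_le (pt (s, y)) 0
  · simpa [pt] using PiLp.norm_apply_le (pt (s, y)) 1

theorem dd_contOn {Ω : Set E2} {w : E2 → ℝ} (hw : ∀ x ∈ closure Ω, ContDiffAt ℝ 1 w x) (v : E2) :
    ContinuousOn (dd v w) (closure Ω) := by
  intro x hx
  have h1 := (hw x hx).fderiv_right (m := 0) (by norm_num)
  exact (h1.continuousAt.clm_apply continuousAt_const).continuousWithinAt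

theorem line0 {Ω : Set E2} (hΩ : IsOpen Ω) (hb : Bornology.IsBounded Ω)
    {w : E2 → ℝ} (hw : ∀ x ∈ closure Ω, ContDiffAt ℝ 1 w x) (h0 : ∀ x ∈ frontier Ω, w x = 0)
    (y : ℝ) :
    Integrable (fun s => Ω.indicator (dd (ee 0) w) (pt (s, y))) ∧
    ∫ s, Ω.indicator (dd (ee 0) w) (pt (s, y)) = 0 ∧
    ∀ s, |Ω.indicator w (pt (s, y))| ≤ ∫ s, |Ω.indicator (dd (ee 0) w) (pt (s, y))| := by
  obtain ⟨R, hR⟩ := hb.subset_ball 0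
  exact line_lemma hΩ (fun x hx => mem_ball_zero_iff.1 (hR hx)) hw h0 (ee 0) (fun s => pt (s, y))
    (fun s => pt_hasDeriv0 s y) (pt_contDiff.comp (by fun_prop)) (fun s => (le_norm_pt s y).1)

theorem line1 {Ω : Set E2} (hΩ : IsOpen Ω) (hb : Bornology.IsBounded Ω)
    {w : E2 → ℝ} (hw : ∀ x ∈ closure Ω, ContDiffAt ℝ 1 w x) (h0 : ∀ x ∈ frontier Ω, w x = 0)
    (s : ℝ) :
    Integrable (fun y => Ω.indicator (dd (ee 1) w) (pt (s, y))) ∧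
    ∫ y, Ω.indicator (dd (ee 1) w) (pt (s, y)) = 0 ∧
    ∀ y, |Ω.indicator w (pt (s, y))| ≤ ∫ y, |Ω.indicator (dd (ee 1) w) (pt (s, y))| := by
  obtain ⟨R, hR⟩ := hb.subset_ball 0
  exact line_lemma hΩ (fun x hx => mem_ball_zero_iff.1 (hR hx)) hw h0 (ee 1) (fun y => pt (s, y))
    (fun y => pt_hasDeriv1 s y) (pt_contDiff.comp (by fun_prop)) (fun y => (le_norm_pt s y).2)

/-- The integral over `Ω` as an integral over `ℝ × ℝ`, ready for Fubini. -/
theorem int_pt {Ω : Set E2} (hΩ : IsOpen Ω) {g : E2 → ℝ} (hg : IntegrableOn g Ω) :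
    Integrable (fun p => Ω.indicator g (pt p)) ∧
    ∫ x in Ω, g x = ∫ p, Ω.indicator g (pt p) := by
  rw [← integral_indicator hΩ.measurableSet, pt_mp.1.integral_comp pt_mp.2]
  refine ⟨?_, rfl⟩
  exact (pt_mp.1.integrable_comp_emb pt_mp.2).2 <| (integrable_indicator_iff hΩ.measurableSet).2 hg

/-- The divergence theorem for a function vanishing on `∂Ω`, by Fubini and `line_ftc`; the boundary
needs no regularity. -/
theorem ibp {Ω : Set E2} (hΩ : IsOpen Ω) (hb : Bornology.IsBounded Ω)
    {w : E2 → ℝ} (hw : ∀ x ∈ closure Ω, ContDiffAt ℝ 1 w x) (h0 : ∀ x ∈ frontier Ω, w x = 0)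
    (i : Fin 2) : ∫ x in Ω, dd (ee i) w x = 0 := by
  obtain ⟨h1, h2⟩ := int_pt hΩ (intOn hb (dd_contOn hw (ee i)))
  rw [h2]
  fin_cases i
  · rw [Measure.volume_eq_prod, integral_prod_symm _ h1]
    simp only [Fin.zero_eta, (line0 hΩ hb hw h0 _).2.1, integral_zero]
  · rw [Measure.volume_eq_prod, integral_prod _ h1]
    simp only [Fin.mk_one, (line1 hΩ hb hw h0 _).2.1, integral_zero]

theorem indicator_abs (Ω : Set E2) (g : E2 → ℝ) (x : E2) :
    Ω.indicator (fun x => |g x|) x = |Ω.indicator g x| := by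
  by_cases h : x ∈ Ω <;> simp [h]

theorem cda {g : E2 → ℝ} (hg : ContDiff ℝ ∞ g) (Ω : Set E2) : ∀ x ∈ Ω, ContDiffAt ℝ 1 g x :=
  fun _ _ => hg.contDiffAt.of_le (by exact_mod_cast le_top)

/-- The square of a function vanishing on `∂Ω` vanishes to second order there, hence is bounded by
the integral over `Ω` of the absolute value of its mixed second derivative. -/
theorem sup_bound {Ω : Set E2} (hΩ : IsOpen Ω) (hb : Bornology.IsBounded Ω)
    {h : E2 → ℝ} (hh : ContDiff ℝ ∞ h) (h0 : ∀ x ∈ frontier Ω, h x = 0) (x : E2) (hx : x ∈ Ω) :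
    h x ^ 2 ≤ ∫ x in Ω, |dd (ee 1) (fun y => 2 * h y * dd (ee 0) h y) x| := by
  set k : E2 → ℝ := fun y => 2 * h y * dd (ee 0) h y with hk
  have hks : ContDiff ℝ ∞ k := by fun_prop
  have hdk : dd (ee 0) (fun y => h y ^ 2) = k := by ext y; rw [dd_sq hh]
  have hw : ContDiff ℝ ∞ (fun y => h y ^ 2) := by fun_prop
  have l0 := (line0 hΩ hb (cda hw _) (fun x hx => by simp [h0 x hx]) (x 1)).2.2 (x 0)
  rw [pt_surj, hdk, indicator_of_mem hx, abs_of_nonneg (sq_nonneg _)] at l0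
  refine l0.trans ?_
  obtain ⟨h1, h2⟩ := int_pt hΩ (intC hb (g := fun x => |dd (ee 1) k x|) (by fun_prop))
  rw [h2, Measure.volume_eq_prod, integral_prod _ h1]
  refine integral_mono ?_ ?_ ?_
  · have := (line0 hΩ hb (cda hw _) (fun x hx => by simp [h0 x hx]) (x 1)).1
    rw [hdk] at this
    exact this.abs
  · exact h1.integral_prod_left
  · intro s
    have := (line1 hΩ hb (cda hks _) (fun x hx => by simp [hk, h0 x hx]) s).2.2 (x 1)
    simpa only [indicator_abs] using this

/-- The product form of Ladyzhenskaya's inequality: `h²` is bounded by an integral along the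
horizontal line through the point and by one along the vertical line. -/
theorem ladyzhenskaya {Ω : Set E2} (hΩ : IsOpen Ω) (hb : Bornology.IsBounded Ω)
    {h : E2 → ℝ} (hh : ContDiff ℝ ∞ h) (h0 : ∀ x ∈ frontier Ω, h x = 0) :
    ∫ x in Ω, h x ^ 4 ≤ (∫ x in Ω, |2 * h x * dd (ee 0) h x|) *
      ∫ x in Ω, |2 * h x * dd (ee 1) h x| := by
  have hdk : ∀ i, dd (ee i) (fun y => h y ^ 2) = fun y => 2 * h y * dd (ee i) h y := by
    intro i; ext y; rw [dd_sq hh]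
  have hw : ContDiff ℝ ∞ (fun y => h y ^ 2) := by fun_prop
  have h0' : ∀ x ∈ frontier Ω, (fun y => h y ^ 2) x = 0 := fun x hx => by simp [h0 x hx]
  have l0 := fun y => (line0 hΩ hb (cda hw _) h0' y).2.2
  have l1 := fun y => (line1 hΩ hb (cda hw _) h0' y).2.2
  rw [hdk] at l0 l1
  simp only [← indicator_abs Ω (fun y => 2 * h y * _)] at l0 l1
  obtain ⟨a1, a2⟩ := int_pt hΩ (intC hb (g := fun x => |2 * h x * dd (ee 0) h x|) (by fun_prop))
  obtain ⟨b1, b2⟩ := int_pt hΩ (intC hb (g := fun x => |2 * h x * dd (ee 1) h x|) (by fun_prop))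
  obtain ⟨c1, c2⟩ := int_pt hΩ (intC hb (g := fun x => h x ^ 4) (by fun_prop))
  rw [a2, b2, c2, Measure.volume_eq_prod, integral_prod_symm _ a1, integral_prod _ b1, mul_comm,
    ← integral_prod_mul]
  refine integral_mono c1 (b1.integral_prod_left.mul_prod a1.integral_prod_right) ?_
  rintro ⟨s, y⟩
  have e1 := l0 y s
  have e2 := l1 s y
  calc Ω.indicator (fun x => h x ^ 4) (pt (s, y))
      = |Ω.indicator (fun y => h y ^ 2) (pt (s, y))| *
        |Ω.indicator (fun y => h y ^ 2) (pt (s, y))| := by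
        by_cases hm : pt (s, y) ∈ Ω
        · simp only [indicator_of_mem hm]; rw [abs_of_nonneg (sq_nonneg _)]; ring
        · simp [hm]
    _ ≤ _ := mul_le_mul e2 e1 (abs_nonneg _) (integral_nonneg fun y =>
        indicator_nonneg (fun _ _ => abs_nonneg _) _)

/-! ### Domains with a defining function and Poincaré's inequality -/

local notation "∂₀" => dd (EuclideanSpace.single (0 : Fin 2) (1 : ℝ))
local notation "∂₁" => dd (EuclideanSpace.single (1 : Fin 2) (1 : ℝ))

/-- Squared length of the gradient. -/
def gr (v : E2 → ℝ) (x : E2) : ℝ := ∂₀ v x ^ 2 + ∂₁ v x ^ 2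

/-- Sum of the squares of the second derivatives, the mixed one counted once. -/
def hs (v : E2 → ℝ) (x : E2) : ℝ :=
  ∂₀ (∂₀ v) x ^ 2 + ∂₀ (∂₁ v) x ^ 2 + ∂₁ (∂₁ v) x ^ 2

/-- The scalar Laplacian. -/
def lap (v : E2 → ℝ) (x : E2) : ℝ := ∂₀ (∂₀ v) x + ∂₁ (∂₁ v) x

@[fun_prop]
theorem gr_cont {v : E2 → ℝ} (hv : ContDiff ℝ ∞ v) : Continuous (gr v) := by
  unfold gr; fun_prop
@[fun_prop]
theorem hs_cont {v : E2 → ℝ} (hv : ContDiff ℝ ∞ v) : Continuous (hs v) := by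
  unfold hs; fun_prop
@[fun_prop]
theorem lap_contDiff {v : E2 → ℝ} (hv : ContDiff ℝ ∞ v) : ContDiff ℝ ∞ (lap v) := by
  unfold lap; fun_prop
@[fun_prop]
theorem lap_cont {v : E2 → ℝ} (hv : ContDiff ℝ ∞ v) : Continuous (lap v) :=
  (lap_contDiff hv).continuous

theorem gr_nonneg (v : E2 → ℝ) (x : E2) : 0 ≤ gr v x := by unfold gr; positivity
theorem hs_nonneg (v : E2 → ℝ) (x : E2) : 0 ≤ hs v x := by unfold hs; positivity

/-- `Ω` is a bounded open set with the defining function `φ`, regular on the boundary. -/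
structure Dom (Ω : Set E2) (φ : E2 → ℝ) : Prop where
  op : IsOpen Ω
  bd : Bornology.IsBounded Ω
  sm : ContDiff ℝ ∞ φ
  neg : ∀ x ∈ Ω, φ x < 0
  zero : ∀ x ∈ frontier Ω, φ x = 0
  reg : ∀ x ∈ frontier Ω, 0 < gr φ x

variable {Ω : Set E2} {φ : E2 → ℝ}

theorem int_le (hΩ : IsOpen Ω) (hb : Bornology.IsBounded Ω) {g h : E2 → ℝ} (hg : Continuous g)
    (hh : Continuous h) (H : ∀ x ∈ Ω, g x ≤ h x) : ∫ x in Ω, g x ≤ ∫ x in Ω, h x :=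
  setIntegral_mono_on (intC hb hg) (intC hb hh) hΩ.measurableSet H

theorem int_nonneg (hΩ : IsOpen Ω) {g : E2 → ℝ} (H : ∀ x ∈ Ω, 0 ≤ g x) : 0 ≤ ∫ x in Ω, g x :=
  setIntegral_nonneg hΩ.measurableSet H

theorem int_add (hb : Bornology.IsBounded Ω) {g h : E2 → ℝ} (hg : Continuous g)
    (hh : Continuous h) : ∫ x in Ω, (g x + h x) = (∫ x in Ω, g x) + ∫ x in Ω, h x :=
  integral_add (intC hb hg) (intC hb hh)

theorem int_sub (hb : Bornology.IsBounded Ω) {g h : E2 → ℝ} (hg : Continuous g)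
    (hh : Continuous h) : ∫ x in Ω, (g x - h x) = (∫ x in Ω, g x) - ∫ x in Ω, h x :=
  integral_sub (intC hb hg) (intC hb hh)

theorem int_smul (c : ℝ) (g : E2 → ℝ) : ∫ x in Ω, c * g x = c * ∫ x in Ω, g x :=
  integral_const_mul c g

theorem cauchy_schwarz (hΩ : IsOpen Ω) (hb : Bornology.IsBounded Ω) {g h : E2 → ℝ}
    (hg : Continuous g) (hh : Continuous h) :
    (∫ x in Ω, g x * h x) ^ 2 ≤ (∫ x in Ω, g x ^ 2) * ∫ x in Ω, h x ^ 2 := by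
  have key : ∀ c : ℝ, 0 ≤ (∫ x in Ω, h x ^ 2) * (c * c) + (2 * ∫ x in Ω, g x * h x) * c +
      ∫ x in Ω, g x ^ 2 := by
    intro c
    have h1 : 0 ≤ ∫ x in Ω, (c * c * h x ^ 2 + 2 * c * (g x * h x) + g x ^ 2) :=
      int_nonneg hΩ fun x _ => by nlinarith [sq_nonneg (c * h x + g x)]
    rw [int_add hb (by fun_prop) (by fun_prop), int_add hb (by fun_prop) (by fun_prop),
      int_smul, int_smul] at h1
    linarith
  have := discrim_le_zero key
  rw [discrim] at this
  nlinarith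

theorem dd_mul_inv {v : E2} {g ψ : E2 → ℝ} (hg : ContDiff ℝ ∞ g) (hψ : ContDiff ℝ ∞ ψ) (x : E2)
    (hx : ψ x ≠ 0) : dd v (fun y => g y * (ψ y)⁻¹) x =
      dd v g x * (ψ x)⁻¹ - g x * dd v ψ x * ((ψ x) ^ 2)⁻¹ := by
  have h1 := (hasDerivAt_inv hx).comp_hasFDerivAt x (smooth_diff hψ x).hasFDerivAt
  have h2 := ((smooth_diff hg x).hasFDerivAt.mul h1).fderiv
  have h3 : (fun y => g y * (ψ y)⁻¹) = (g * (Inv.inv ∘ ψ)) := rfl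
  unfold dd
  rw [h3, h2]
  simp
  ring

theorem dd_coord (x : E2) : ∂₀ (fun y : E2 => y 0) x = 1 := by
  have : (fun y : E2 => y 0) = (EuclideanSpace.proj (𝕜 := ℝ) (0 : Fin 2) : E2 →L[ℝ] ℝ) := rfl
  unfold dd
  rw [this, ContinuousLinearMap.fderiv]
  simp

theorem coord_contDiff : ContDiff ℝ ∞ (fun y : E2 => y 0) :=
  (EuclideanSpace.proj (𝕜 := ℝ) (0 : Fin 2) : E2 →L[ℝ] ℝ).contDiff

/-- Poincaré's inequality, from the divergence of the field `(x₀ v², 0)`. -/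
theorem poincare (hΩ : IsOpen Ω) (hb : Bornology.IsBounded Ω) :
    ∃ C : ℝ, 0 < C ∧ ∀ v : E2 → ℝ, ContDiff ℝ ∞ v → (∀ x ∈ frontier Ω, v x = 0) →
      ∫ x in Ω, v x ^ 2 ≤ C * ∫ x in Ω, gr v x := by
  obtain ⟨R, hR⟩ := hb.subset_ball 0
  refine ⟨4 * R ^ 2 + 1, by positivity, fun v hv h0 => ?_⟩
  have hc := coord_contDiff
  have hw : ContDiff ℝ ∞ (fun y : E2 => y 0 * v y ^ 2) := hc.mul (hv.pow 2)
  have h1 := ibp hΩ hb (cda hw _) (fun x hx => by simp [h0 x hx]) 0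
  have h2 : ∀ x, ∂₀ (fun y : E2 => y 0 * v y ^ 2) x = v x ^ 2 + x 0 * (2 * v x * ∂₀ v x) := by
    intro x
    rw [dd_mul hc (hv.pow 2), dd_sq hv, dd_coord]; ring
  have h3 : ∫ x in Ω, v x ^ 2 ≤ ∫ x in Ω, (2 * ∂₀ (fun y : E2 => y 0 * v y ^ 2) x +
      (4 * R ^ 2 + 1) * gr v x) := by
    refine int_le hΩ hb (by fun_prop) (by fun_prop) fun x hx => ?_
    rw [h2]; unfold gr
    have h4 : |x 0| ≤ R := by
      have := PiLp.norm_apply_le x 0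
      have h5 := mem_ball_zero_iff.1 (hR hx)
      rw [Real.norm_eq_abs] at this
      linarith
    have h5 : x 0 ^ 2 ≤ R ^ 2 := sq_le_sq' (abs_le.1 h4).1 (abs_le.1 h4).2
    nlinarith [sq_nonneg (v x + 2 * x 0 * ∂₀ v x), sq_nonneg (∂₀ v x), sq_nonneg (∂₁ v x),
      mul_le_mul_of_nonneg_right h5 (sq_nonneg (∂₀ v x)),
      mul_nonneg (sq_nonneg R) (sq_nonneg (∂₁ v x))]
  rw [int_add hb (by fun_prop) (by fun_prop), int_smul, int_smul] at h3
  change ∫ x in Ω, ∂₀ _ x = 0 at h1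
  rw [h1] at h3
  linarith

theorem closure_bound (hb : Bornology.IsBounded Ω) {g : E2 → ℝ} (hg : Continuous g) :
    ∃ M : ℝ, 1 ≤ M ∧ ∀ x ∈ closure Ω, |g x| ≤ M := by
  obtain ⟨M, hM⟩ := hb.isCompact_closure.exists_bound_of_continuousOn hg.continuousOn
  exact ⟨max M 1, le_max_right _ _, fun x hx => (hM x hx).trans (le_max_left _ _)⟩

theorem Dom.bounds (d : Dom Ω φ) : ∃ M : ℝ, 1 ≤ M ∧ ∀ x ∈ closure Ω,
    |φ x| ≤ M ∧ |∂₀ φ x| ≤ M ∧ |∂₁ φ x| ≤ M ∧ |lap φ x| ≤ M := by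
  have hs := d.sm
  obtain ⟨M, h1, h2⟩ := closure_bound d.bd
    (g := fun x => |φ x| + |∂₀ φ x| + |∂₁ φ x| + |lap φ x|) (by fun_prop)
  refine ⟨M, h1, fun x hx => ?_⟩
  have h3 := (le_abs_self _).trans (h2 x hx)
  have := abs_nonneg (φ x)
  have := abs_nonneg (∂₀ φ x)
  have := abs_nonneg (∂₁ φ x)
  have := abs_nonneg (lap φ x)
  refine ⟨?_, ?_, ?_, ?_⟩ <;> linarith

/-- The defining function and its gradient have no common zero on the closure. -/
theorem Dom.nondeg (d : Dom Ω φ) (hne : Ω.Nonempty) :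
    ∃ c : ℝ, 0 < c ∧ ∀ x ∈ closure Ω, c ≤ gr φ x + φ x ^ 2 := by
  have hs := d.sm
  obtain ⟨x, hx, hm⟩ := d.bd.isCompact_closure.exists_isMinOn hne.closure
    (f := fun x => gr φ x + φ x ^ 2) (Continuous.continuousOn (by fun_prop))
  refine ⟨gr φ x + φ x ^ 2, ?_, fun y hy => hm hy⟩
  by_cases hxΩ : x ∈ Ω
  · have := d.neg x hxΩ
    have := gr_nonneg φ x
    nlinarith
  · have : x ∈ frontier Ω := by rw [d.op.frontier_eq]; exact ⟨hx, hxΩ⟩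
    have := d.reg x this
    positivity

/-! ### Hardy's inequality -/

theorem Dom.nonpos (d : Dom Ω φ) : ∀ x ∈ closure Ω, φ x ≤ 0 := by
  intro x hx
  by_cases hxΩ : x ∈ Ω
  · exact (d.neg x hxΩ).le
  · exact (d.zero x (by rw [d.op.frontier_eq]; exact ⟨hx, hxΩ⟩)).le

/-- Hardy's inequality with the regularised weight `(ε - φ)⁻²`; the constant does not depend
on `ε`. It comes from integrating the divergence of `v² ∇φ / (ε - φ)`. -/
theorem hardy (d : Dom Ω φ) (hne : Ω.Nonempty) :
    ∃ C : ℝ, 0 < C ∧ ∀ ε : ℝ, 0 < ε → ∀ v : E2 → ℝ, ContDiff ℝ ∞ v →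
      (∀ x ∈ frontier Ω, v x = 0) →
      ∫ x in Ω, v x ^ 2 * ((ε - φ x)⁻¹) ^ 2 ≤ C * ∫ x in Ω, gr v x := by
  obtain ⟨c, hc, hcb⟩ := d.nondeg hne
  obtain ⟨M, hM1, hM⟩ := d.bounds
  obtain ⟨Cp, hCp, hp⟩ := poincare d.op d.bd
  have hφ := d.sm
  refine ⟨2 / c * (8 * M ^ 2 / c + (M ^ 2 / c + 1) * Cp), by positivity, fun ε hε v hv h0 => ?_⟩
  have hψ : ContDiff ℝ ∞ (fun x => ε - φ x) := by fun_prop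
  have hpos : ∀ x ∈ closure Ω, 0 < ε - φ x := fun x hx => by linarith [d.nonpos x hx]
  have hdψ : ∀ (e : E2) x, dd e (fun x => ε - φ x) x = - dd e φ x := by
    intro e x
    rw [dd_sub (by fun_prop) hφ, dd_const]; ring
  have hg : ∀ e : E2, ContDiff ℝ ∞ (fun x => v x ^ 2 * dd e φ x) := by intro e; fun_prop
  have hcd : ∀ e : E2, ∀ x ∈ closure Ω,
      ContDiffAt ℝ 1 (fun x => (v x ^ 2 * dd e φ x) * (ε - φ x)⁻¹) x := by
    intro e x hx
    exact (cda (hg e) (closure Ω) x hx).mul ((cda hψ (closure Ω) x hx).inv (hpos x hx).ne')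
  have hI : ∀ i : Fin 2, ∫ x in Ω, dd (ee i) (fun x => (v x ^ 2 * dd (ee i) φ x) * (ε - φ x)⁻¹) x
      = 0 := fun i => ibp d.op d.bd (hcd _) (fun x hx => by simp [h0 x hx]) i
  have hdd : ∀ e : E2, ∀ x ∈ closure Ω,
      dd e (fun x => (v x ^ 2 * dd e φ x) * (ε - φ x)⁻¹) x =
      (2 * v x * dd e v x * dd e φ x + v x ^ 2 * dd e (dd e φ) x) * (ε - φ x)⁻¹ +
        v x ^ 2 * dd e φ x ^ 2 * ((ε - φ x)⁻¹) ^ 2 := by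
    intro e x hx
    rw [dd_mul_inv (hg e) hψ x (hpos x hx).ne', hdψ, dd_mul (by fun_prop) (by fun_prop), dd_sq hv,
      inv_pow]
    ring
  have hq : ContinuousOn (fun x => (ε - φ x)⁻¹) (closure Ω) :=
    hψ.continuous.continuousOn.inv₀ fun x hx => (hpos x hx).ne'
  have hTc : ∀ e : E2, IntegrableOn
      (dd e (fun x => (v x ^ 2 * dd e φ x) * (ε - φ x)⁻¹)) Ω := by
    intro e
    refine intOn d.bd (ContinuousOn.congr ?_ (hdd e))
    refine ContinuousOn.add (ContinuousOn.mul (Continuous.continuousOn (by fun_prop)) hq)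
      (ContinuousOn.mul (Continuous.continuousOn (by fun_prop)) (hq.pow 2))
  have hT : Integrable (fun x => v x ^ 2 * ((ε - φ x)⁻¹) ^ 2) (volume.restrict Ω) := intOn d.bd
    (ContinuousOn.mul (Continuous.continuousOn (by fun_prop)) (hq.pow 2))
  have key : c / 2 * ∫ x in Ω, v x ^ 2 * ((ε - φ x)⁻¹) ^ 2 ≤
      (∫ x in Ω, dd (ee 0) (fun x => (v x ^ 2 * dd (ee 0) φ x) * (ε - φ x)⁻¹) x) +
      (∫ x in Ω, dd (ee 1) (fun x => (v x ^ 2 * dd (ee 1) φ x) * (ε - φ x)⁻¹) x) +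
      ((8 * M ^ 2 / c * ∫ x in Ω, gr v x) + (M ^ 2 / c + 1) * ∫ x in Ω, v x ^ 2) := by
    have hTT : Integrable (fun x =>
        dd (ee 0) (fun x => (v x ^ 2 * dd (ee 0) φ x) * (ε - φ x)⁻¹) x +
        dd (ee 1) (fun x => (v x ^ 2 * dd (ee 1) φ x) * (ε - φ x)⁻¹) x) (volume.restrict Ω) :=
      Integrable.add (hTc _) (hTc _)
    rw [← int_smul, ← int_smul, ← int_smul, ← integral_add (hTc _) (hTc _),
      ← int_add d.bd (by fun_prop) (by fun_prop), ← integral_add hTT (intC d.bd (by fun_prop))]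
    refine setIntegral_mono_on (hT.const_mul _) (hTT.add
      (intC d.bd (by fun_prop))) d.op.measurableSet fun x hxΩ => ?_
    have hx := subset_closure hxΩ
    rw [hdd _ x hx, hdd _ x hx]
    obtain ⟨-, hM2, hM3, hM4⟩ := hM x hx
    have hc1 := hcb x hx
    have hq1 : φ x ^ 2 * ((ε - φ x)⁻¹) ^ 2 ≤ 1 := by
      have h1 := hpos x hx
      have h2 := d.nonpos x hx
      rw [inv_pow, ← div_eq_mul_inv, div_le_one (by positivity)]
      nlinarith
    unfold gr lap at *
    change _ ≤ (2 * v x * ∂₀ v x * ∂₀ φ x + v x ^ 2 * ∂₀ (∂₀ φ) x) * (ε - φ x)⁻¹ +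
        v x ^ 2 * ∂₀ φ x ^ 2 * ((ε - φ x)⁻¹) ^ 2 +
        ((2 * v x * ∂₁ v x * ∂₁ φ x + v x ^ 2 * ∂₁ (∂₁ φ) x) * (ε - φ x)⁻¹ +
        v x ^ 2 * ∂₁ φ x ^ 2 * ((ε - φ x)⁻¹) ^ 2) + (_ + _)
    generalize (ε - φ x)⁻¹ = q at *
    generalize ∂₀ φ x = a at *
    generalize ∂₁ φ x = b at *
    generalize ∂₀ (∂₀ φ) x = l at *
    generalize ∂₁ (∂₁ φ) x = m at *
    generalize ∂₀ v x = r at *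
    generalize ∂₁ v x = s at *
    generalize v x = w at *
    generalize φ x = p at *
    have y1 : c * (w ^ 2 * q ^ 2) ≤ w ^ 2 * q ^ 2 * (a ^ 2 + b ^ 2) + w ^ 2 := by
      nlinarith [mul_le_mul_of_nonneg_left hc1 (by positivity : 0 ≤ w ^ 2 * q ^ 2),
        mul_le_mul_of_nonneg_left hq1 (sq_nonneg w)]
    have y2 : -(2 * w * q * (r * a + s * b)) ≤ c / 4 * (w ^ 2 * q ^ 2) +
        8 * M ^ 2 / c * (r ^ 2 + s ^ 2) := by
      have h1 : a ^ 2 ≤ M ^ 2 := sq_le_sq' (abs_le.1 hM2).1 (abs_le.1 hM2).2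
      have h2 : b ^ 2 ≤ M ^ 2 := sq_le_sq' (abs_le.1 hM3).1 (abs_le.1 hM3).2
      have h3 : (r * a + s * b) ^ 2 ≤ 2 * M ^ 2 * (r ^ 2 + s ^ 2) := by
        nlinarith [sq_nonneg (r * b - s * a), mul_le_mul_of_nonneg_left h1 (sq_nonneg r),
          mul_le_mul_of_nonneg_left h2 (sq_nonneg s), mul_le_mul_of_nonneg_left h1 (sq_nonneg s),
          mul_le_mul_of_nonneg_left h2 (sq_nonneg r)]
      have h4 : 8 * M ^ 2 / c * (r ^ 2 + s ^ 2) = 4 / c * (2 * M ^ 2 * (r ^ 2 + s ^ 2)) := by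
        field_simp; ring
      have h5 := mul_le_mul_of_nonneg_left h3 (by positivity : 0 ≤ 4 / c)
      have h6 : 0 ≤ (c / 2 * (w * q) + 2 * (r * a + s * b)) ^ 2 / c := by positivity
      have h7 : (c / 2 * (w * q) + 2 * (r * a + s * b)) ^ 2 / c = c / 4 * (w ^ 2 * q ^ 2) +
        2 * w * q * (r * a + s * b) + 4 / c * (r * a + s * b) ^ 2 := by field_simp; ring
      linarith
    have y3 : -(w ^ 2 * (l + m) * q) ≤ c / 4 * (w ^ 2 * q ^ 2) + M ^ 2 / c * w ^ 2 := by
      have h1 : (l + m) ^ 2 ≤ M ^ 2 := sq_le_sq' (abs_le.1 hM4).1 (abs_le.1 hM4).2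
      have h6 : 0 ≤ w ^ 2 * (c / 2 * q + (l + m)) ^ 2 / c := by positivity
      have h7 : w ^ 2 * (c / 2 * q + (l + m)) ^ 2 / c = c / 4 * (w ^ 2 * q ^ 2) +
        w ^ 2 * (l + m) * q + (l + m) ^ 2 / c * w ^ 2 := by field_simp; ring
      have h8 : (l + m) ^ 2 / c * w ^ 2 ≤ M ^ 2 / c * w ^ 2 := by gcongr
      linarith
    nlinarith
  rw [hI, hI] at key
  have hp1 := mul_le_mul_of_nonneg_left (hp v hv h0) (by positivity : 0 ≤ M ^ 2 / c + 1)
  have : ∫ x in Ω, v x ^ 2 * ((ε - φ x)⁻¹) ^ 2 =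
      2 / c * (c / 2 * ∫ x in Ω, v x ^ 2 * ((ε - φ x)⁻¹) ^ 2) := by field_simp
  rw [this, mul_assoc]
  refine mul_le_mul_of_nonneg_left ?_ (by positivity)
  linarith

/-- Pairing a function vanishing on the boundary with one controlled only with the weight `φ`. -/
theorem hardy_pair (d : Dom Ω φ) (hne : Ω.Nonempty) :
    ∃ C : ℝ, 0 < C ∧ ∀ k : ℝ, 0 < k → ∀ v : E2 → ℝ, ContDiff ℝ ∞ v →
      (∀ x ∈ frontier Ω, v x = 0) → ∀ g : E2 → ℝ, Continuous g →
      ∫ x in Ω, |v x * g x| ≤ k * (∫ x in Ω, gr v x) + C / k * ∫ x in Ω, φ x ^ 2 * g x ^ 2 := by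
  obtain ⟨C, hC, H⟩ := hardy d hne
  have hφ := d.sm
  refine ⟨C, hC, fun k hk v hv h0 g hg => le_of_forall_pos_le_add fun δ hδ => ?_⟩
  have hG : 0 ≤ ∫ x in Ω, g x ^ 2 := int_nonneg d.op fun x _ => sq_nonneg _
  set G := ∫ x in Ω, g x ^ 2 with hGd
  -- the error `C / k * ε² * ∫ g²` from regularising the weight stays below `δ`
  set ε := √(δ / (C / k * G + 1)) with hεd
  have hε : 0 < ε := by positivity
  have hε2 : ε ^ 2 = δ / (C / k * G + 1) := Real.sq_sqrt (by positivity)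
  have hεδ : C / k * ε ^ 2 * G ≤ δ := by
    rw [hε2]
    have : C / k * (δ / (C / k * G + 1)) * G = δ * ((C / k * G) / (C / k * G + 1)) := by ring
    rw [this]
    have h1 : (C / k * G) / (C / k * G + 1) ≤ 1 := by
      rw [div_le_one (by positivity)]; linarith
    nlinarith
  have hpos : ∀ x ∈ closure Ω, 0 < ε - φ x := fun x hx => by linarith [d.nonpos x hx]
  have hq : ContinuousOn (fun x => (ε - φ x)⁻¹) (closure Ω) :=
    ContinuousOn.inv₀ (Continuous.continuousOn (by fun_prop)) fun x hx => (hpos x hx).ne'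
  have hT : Integrable (fun x => v x ^ 2 * ((ε - φ x)⁻¹) ^ 2) (volume.restrict Ω) := intOn d.bd
    (ContinuousOn.mul (Continuous.continuousOn (by fun_prop)) (hq.pow 2))
  have h1 : ∫ x in Ω, |v x * g x| ≤ k / C * (∫ x in Ω, v x ^ 2 * ((ε - φ x)⁻¹) ^ 2) +
      (C / k * (∫ x in Ω, φ x ^ 2 * g x ^ 2) + C / k * ε ^ 2 * ∫ x in Ω, g x ^ 2) := by
    rw [← int_smul, ← int_smul, ← int_smul, ← int_add d.bd (by fun_prop) (by fun_prop),
      ← integral_add (hT.const_mul _) (intC d.bd (by fun_prop))]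
    refine setIntegral_mono_on (intC d.bd (by fun_prop)) ((hT.const_mul _).add
      (intC d.bd (by fun_prop))) d.op.measurableSet fun x hxΩ => ?_
    have h2 := hpos x (subset_closure hxΩ)
    have h3 : v x * g x = (v x * (ε - φ x)⁻¹) * ((ε - φ x) * g x) := by field_simp
    have h5 : ((ε - φ x) * g x) ^ 2 ≤ 2 * (ε ^ 2 + φ x ^ 2) * g x ^ 2 := by
      have : (ε - φ x) ^ 2 ≤ 2 * (ε ^ 2 + φ x ^ 2) := by nlinarith [sq_nonneg (ε + φ x)]
      rw [mul_pow]; gcongr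
    rw [h3]
    have h4 : ∀ a b : ℝ, |a * b| ≤ k / C * a ^ 2 + C / k / 2 * b ^ 2 := by
      intro a b
      have e1 : 0 ≤ C / k / 2 * (b - k / C * a) ^ 2 := by positivity
      have e2 : 0 ≤ C / k / 2 * (b + k / C * a) ^ 2 := by positivity
      have e3 : C / k / 2 * (b - k / C * a) ^ 2 =
        C / k / 2 * b ^ 2 - a * b + k / C / 2 * a ^ 2 := by field_simp; ring
      have e4 : C / k / 2 * (b + k / C * a) ^ 2 =
        C / k / 2 * b ^ 2 + a * b + k / C / 2 * a ^ 2 := by field_simp; ring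
      have e5 : 0 ≤ k / C / 2 * a ^ 2 := by positivity
      rw [abs_le]; constructor <;> linarith
    refine (h4 _ _).trans ?_
    have h6 := mul_le_mul_of_nonneg_left h5 (by positivity : 0 ≤ C / k / 2)
    rw [mul_pow (v x)]
    linarith
  have h2 := mul_le_mul_of_nonneg_left (H ε hε v hv h0) (by positivity : 0 ≤ k / C)
  have h3 : k / C * (C * ∫ x in Ω, gr v x) = k * ∫ x in Ω, gr v x := by field_simp
  linarith

/-! ### Weighted interior estimates -/

/-- Integral form of a pointwise inequality modulo a divergence of a field vanishing on `∂Ω`. -/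
theorem div_le (hΩ : IsOpen Ω) (hb : Bornology.IsBounded Ω) {W0 W1 G H : E2 → ℝ}
    (h0 : ContDiff ℝ ∞ W0) (h1 : ContDiff ℝ ∞ W1)
    (z0 : ∀ x ∈ frontier Ω, W0 x = 0) (z1 : ∀ x ∈ frontier Ω, W1 x = 0)
    (hG : Continuous G) (hH : Continuous H)
    (h : ∀ x ∈ Ω, G x ≤ ∂₀ W0 x + ∂₁ W1 x + H x) : ∫ x in Ω, G x ≤ ∫ x in Ω, H x := by
  have e0 : ∫ x in Ω, ∂₀ W0 x = 0 := ibp hΩ hb (cda h0 _) z0 0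
  have e1 : ∫ x in Ω, ∂₁ W1 x = 0 := ibp hΩ hb (cda h1 _) z1 1
  have := int_le hΩ hb hG (by fun_prop) h
  rw [int_add hb (by fun_prop) hH, int_add hb (by fun_prop) (by fun_prop), e0, e1] at this
  linarith

theorem div_eq (hΩ : IsOpen Ω) (hb : Bornology.IsBounded Ω) {W0 W1 G H : E2 → ℝ}
    (h0 : ContDiff ℝ ∞ W0) (h1 : ContDiff ℝ ∞ W1)
    (z0 : ∀ x ∈ frontier Ω, W0 x = 0) (z1 : ∀ x ∈ frontier Ω, W1 x = 0)
    (hG : Continuous G) (hH : Continuous H)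
    (h : ∀ x ∈ Ω, G x = ∂₀ W0 x + ∂₁ W1 x + H x) : ∫ x in Ω, G x = ∫ x in Ω, H x := by
  refine le_antisymm (div_le hΩ hb h0 h1 z0 z1 hG hH fun x hx => (h x hx).le) ?_
  refine div_le hΩ hb h0.neg h1.neg (fun x hx => by simp [z0 x hx])
    (fun x hx => by simp [z1 x hx]) hH hG fun x hx => ?_
  have e0 : ∂₀ (-W0) x = - ∂₀ W0 x := dd_neg x
  have e1 : ∂₁ (-W1) x = - ∂₁ W1 x := dd_neg x
  change H x ≤ ∂₀ (-W0) x + ∂₁ (-W1) x + G x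
  rw [e0, e1, h x hx]; linarith

/-- Weighted Young inequality. -/
theorem young {k : ℝ} (hk : 0 < k) (a b : ℝ) : a * b ≤ k * a ^ 2 + 1 / k * b ^ 2 := by
  have h : k * a ^ 2 + 1 / k * b ^ 2 - a * b =
    k * (a - b / (2 * k)) ^ 2 + 3 / (4 * k) * b ^ 2 := by field_simp; ring
  have : 0 ≤ k * (a - b / (2 * k)) ^ 2 + 3 / (4 * k) * b ^ 2 := by positivity
  linarith

theorem sq_le_of_abs {a M : ℝ} (h : |a| ≤ M) : a ^ 2 ≤ M ^ 2 :=
  sq_le_sq' (abs_le.1 h).1 (abs_le.1 h).2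

/-- Interior estimate of the Hessian by the Laplacian, with weight `φ²`. -/
theorem hess_le (d : Dom Ω φ) : ∃ C : ℝ, 0 < C ∧ ∀ g : E2 → ℝ, ContDiff ℝ ∞ g →
    ∫ x in Ω, φ x ^ 2 * hs g x ≤
      C * ((∫ x in Ω, φ x ^ 2 * lap g x ^ 2) + ∫ x in Ω, gr g x) := by
  obtain ⟨M, hM1, hM⟩ := d.bounds
  have hφ := d.sm
  refine ⟨2 + 128 * M ^ 2, by positivity, fun g hg => ?_⟩
  have h := div_le d.op d.bd (W0 := fun x => - 2 * (φ x * φ x * (∂₀ g x * ∂₁ (∂₁ g) x)))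
    (W1 := fun x => 2 * (φ x * φ x * (∂₀ g x * ∂₀ (∂₁ g) x)))
    (G := fun x => 1 / 2 * (φ x ^ 2 * hs g x))
    (H := fun x => φ x ^ 2 * lap g x ^ 2 + 64 * M ^ 2 * gr g x) (by fun_prop) (by fun_prop)
    (fun x hx => by simp [d.zero x hx]) (fun x hx => by simp [d.zero x hx])
    (by fun_prop) (by fun_prop) (fun x hx => by
      simp (disch := fun_prop) only [dd_mul, dd_const]
      obtain ⟨-, m1, m2, -⟩ := hM x (subset_closure hx)
      have e1 : ∂₁ (∂₀ g) x = ∂₀ (∂₁ g) x := dd_comm hg x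
      have e2 : ∂₁ (∂₀ (∂₁ g)) x = ∂₀ (∂₁ (∂₁ g)) x := dd_comm (by fun_prop) x
      rw [e1, e2]
      unfold hs lap gr
      have m1 := sq_le_of_abs m1
      have m2 := sq_le_of_abs m2
      generalize ∂₀ (∂₁ (∂₁ g)) x = t
      generalize ∂₀ (∂₁ g) x = g01
      generalize ∂₁ (∂₁ g) x = g11
      generalize ∂₀ (∂₀ g) x = g00
      generalize ∂₀ g x = g0
      generalize ∂₁ g x = g1
      generalize ∂₀ φ x = a at *
      generalize ∂₁ φ x = b at *
      generalize φ x = p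
      have y1 := young (k := 1 / 2) (by norm_num) (p * g01) (- 4 * g0 * b)
      have y2 := young (k := 1 / 2) (by norm_num) (p * g11) (4 * g0 * a)
      have y3 := mul_le_mul_of_nonneg_left m1 (sq_nonneg g0)
      have y4 := mul_le_mul_of_nonneg_left m2 (sq_nonneg g0)
      nlinarith [mul_nonneg (sq_nonneg g1) (sq_nonneg M), sq_nonneg (p * g01), sq_nonneg (p * g00), sq_nonneg (p * g11)])
  rw [int_smul, int_add d.bd (by fun_prop) (by fun_prop), int_smul] at h
  have p1 : 0 ≤ ∫ x in Ω, φ x ^ 2 * lap g x ^ 2 := int_nonneg d.op fun x _ => by positivity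
  have p2 : 0 ≤ ∫ x in Ω, gr g x := int_nonneg d.op fun x _ => gr_nonneg _ _
  nlinarith [mul_nonneg (sq_nonneg M) p1]

/-- Interior estimate of the fourth power of the gradient of a bounded function: integrate by parts
the divergence of the field with components `φ² g (∂ᵢ g)³`. -/
theorem grad4_le (d : Dom Ω φ) : ∃ C : ℝ, 0 < C ∧ ∀ g : E2 → ℝ, ContDiff ℝ ∞ g → ∀ K : ℝ, 0 ≤ K →
    (∀ x ∈ Ω, g x ^ 2 ≤ K) →
    ∫ x in Ω, φ x ^ 2 * gr g x ^ 2 ≤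
      C * K * ((∫ x in Ω, φ x ^ 2 * hs g x) + ∫ x in Ω, gr g x) := by
  obtain ⟨M, hM1, hM⟩ := d.bounds
  have hφ := d.sm
  refine ⟨150 + 100 * M ^ 2, by positivity, fun g hg K hK hgK => ?_⟩
  have h := div_le d.op d.bd
    (W0 := fun x => φ x * φ x * (g x * (∂₀ g x * (∂₀ g x * ∂₀ g x))))
    (W1 := fun x => φ x * φ x * (g x * (∂₁ g x * (∂₁ g x * ∂₁ g x))))
    (G := fun x => 1 / 4 * (φ x ^ 2 * gr g x ^ 2))
    (H := fun x => 36 * K * (φ x ^ 2 * hs g x) + 16 * M ^ 2 * K * gr g x)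
    (by fun_prop) (by fun_prop)
    (fun x hx => by simp [d.zero x hx]) (fun x hx => by simp [d.zero x hx])
    (by fun_prop) (by fun_prop) (fun x hx => by
      simp (disch := fun_prop) only [dd_mul]
      obtain ⟨-, m1, m2, -⟩ := hM x (subset_closure hx)
      have hk := hgK x hx
      unfold hs gr
      have m1 := sq_le_of_abs m1
      have m2 := sq_le_of_abs m2
      have Y : ∀ a r s : ℝ, a ^ 2 ≤ M ^ 2 → 1 / 2 * (φ x ^ 2 * r ^ 4) ≤
          (a * φ x + φ x * a) * (g x * (r * (r * r))) + φ x * φ x * (r * (r * (r * r)) +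
            g x * (s * (r * r) + r * (s * r + r * s))) + (16 * M ^ 2 * K * r ^ 2 +
            36 * K * (φ x ^ 2 * s ^ 2)) := by
        intro a r s ha
        have y1 := young (k := 1 / 4) (by norm_num) (φ x * r ^ 2) (- 2 * a * g x * r)
        have y2 := young (k := 1 / 4) (by norm_num) (φ x * r ^ 2) (- 3 * g x * φ x * s)
        have y3 := mul_le_mul_of_nonneg_left hk (sq_nonneg (φ x * s))
        have y4 : a ^ 2 * g x ^ 2 ≤ M ^ 2 * K := mul_le_mul ha hk (sq_nonneg _) (sq_nonneg _)
        have y5 := mul_le_mul_of_nonneg_left y4 (sq_nonneg r)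
        nlinarith only [y1, y2, y3, y5]
      have Y0 := Y _ (∂₀ g x) (∂₀ (∂₀ g) x) m1
      have Y1 := Y _ (∂₁ g x) (∂₁ (∂₁ g) x) m2
      have y6 : 0 ≤ K * (φ x ^ 2 * ∂₀ (∂₁ g) x ^ 2) := by positivity
      nlinarith [sq_nonneg (φ x * (∂₀ g x ^ 2 - ∂₁ g x ^ 2))])
  rw [int_smul, int_add d.bd (by fun_prop) (by fun_prop), int_smul, int_smul] at h
  have p1 : 0 ≤ ∫ x in Ω, φ x ^ 2 * hs g x := int_nonneg d.op fun x _ => mul_nonneg (sq_nonneg _) (hs_nonneg _ _)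
  have p2 : 0 ≤ ∫ x in Ω, gr g x := int_nonneg d.op fun x _ => gr_nonneg _ _
  nlinarith [mul_nonneg (mul_nonneg hK (sq_nonneg M)) p1, mul_nonneg (mul_nonneg hK (sq_nonneg M)) p2, mul_nonneg hK p1, mul_nonneg hK p2]

/-- The supremum is controlled by the gradient and the weighted Hessian: in `sup_bound` the product of
`g` with its mixed derivative is split by Hardy's inequality, which costs exactly the weight `φ`. -/
theorem sup_est (d : Dom Ω φ) (hne : Ω.Nonempty) : ∃ C : ℝ, 0 < C ∧ ∀ g : E2 → ℝ,
    ContDiff ℝ ∞ g → (∀ x ∈ frontier Ω, g x = 0) → ∀ x ∈ Ω,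
    g x ^ 2 ≤ C * ((∫ x in Ω, φ x ^ 2 * hs g x) + ∫ x in Ω, gr g x) := by
  obtain ⟨C, hC, H⟩ := hardy_pair d hne
  have hφ := d.sm
  refine ⟨3 + 2 * C, by positivity, fun g hg h0 x hx => ?_⟩
  have h1 := sup_bound d.op d.bd hg h0 x hx
  have h2 := H 1 one_pos g hg h0 (∂₀ (∂₁ g)) (by fun_prop)
  have h3 : ∫ x in Ω, |dd (ee 1) (fun y => 2 * g y * dd (ee 0) g y) x| ≤
      ∫ x in Ω, (gr g x + 2 * |g x * ∂₀ (∂₁ g) x|) := by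
    refine int_le d.op d.bd (by fun_prop) (by fun_prop) fun x _ => ?_
    simp (disch := fun_prop) only [dd_mul, dd_const]
    have e1 : ∂₁ (∂₀ g) x = ∂₀ (∂₁ g) x := dd_comm hg x
    change |(0 * g x + 2 * ∂₁ g x) * ∂₀ g x + 2 * g x * ∂₁ (∂₀ g) x| ≤ _
    rw [e1]
    unfold gr
    calc _ = |2 * (∂₁ g x * ∂₀ g x) + 2 * (g x * ∂₀ (∂₁ g) x)| := by ring_nf
      _ ≤ |2 * (∂₁ g x * ∂₀ g x)| + |2 * (g x * ∂₀ (∂₁ g) x)| := abs_add_le _ _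
      _ ≤ _ := by
        rw [abs_mul 2, abs_mul 2, abs_two]
        have : 2 * |∂₁ g x * ∂₀ g x| ≤ ∂₀ g x ^ 2 + ∂₁ g x ^ 2 := by
          rcases abs_cases (∂₁ g x * ∂₀ g x) with h | h <;>
          nlinarith [sq_nonneg (∂₀ g x - ∂₁ g x), sq_nonneg (∂₀ g x + ∂₁ g x)]
        linarith
  rw [int_add d.bd (by fun_prop) (by fun_prop), int_smul] at h3
  have h4 : ∫ x in Ω, φ x ^ 2 * ∂₀ (∂₁ g) x ^ 2 ≤ ∫ x in Ω, φ x ^ 2 * hs g x := by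
    refine int_le d.op d.bd (by fun_prop) (by fun_prop) fun x _ => ?_
    unfold hs
    gcongr
    nlinarith [sq_nonneg (∂₀ (∂₀ g) x), sq_nonneg (∂₁ (∂₁ g) x)]
  have p1 : 0 ≤ ∫ x in Ω, φ x ^ 2 * hs g x :=
    int_nonneg d.op fun x _ => mul_nonneg (sq_nonneg _) (hs_nonneg _ _)
  have p2 : 0 ≤ ∫ x in Ω, gr g x := int_nonneg d.op fun x _ => gr_nonneg _ _
  rw [one_mul, div_one] at h2
  have h5 := mul_le_mul_of_nonneg_left h4 hC.le
  have h6 := mul_nonneg hC.le p2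
  linarith

/-- Ladyzhenskaya's inequality. -/
theorem lady (hΩ : IsOpen Ω) (hb : Bornology.IsBounded Ω)
    {h : E2 → ℝ} (hh : ContDiff ℝ ∞ h) (h0 : ∀ x ∈ frontier Ω, h x = 0) :
    ∫ x in Ω, h x ^ 4 ≤ 4 * (∫ x in Ω, h x ^ 2) * ∫ x in Ω, gr h x := by
  have h1 := ladyzhenskaya hΩ hb hh h0
  have h2 : ∀ i : Fin 2, (∫ x in Ω, |2 * h x * dd (ee i) h x|) ^ 2 ≤
      4 * (∫ x in Ω, h x ^ 2) * ∫ x in Ω, gr h x := by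
    intro i
    have e1 : ∀ x, |2 * h x * dd (ee i) h x| = |2 * h x| * |dd (ee i) h x| := fun x => abs_mul _ _
    simp only [e1]
    refine (cauchy_schwarz hΩ hb (by fun_prop) (by fun_prop)).trans ?_
    simp only [sq_abs, mul_pow]
    rw [int_smul]
    have p1 : 0 ≤ ∫ x in Ω, h x ^ 2 := int_nonneg hΩ fun x _ => sq_nonneg _
    have : ∫ x in Ω, dd (ee i) h x ^ 2 ≤ ∫ x in Ω, gr h x := by
      refine int_le hΩ hb (by fun_prop) (by fun_prop) fun x _ => ?_
      unfold gr
      fin_cases i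
      · change ∂₀ h x ^ 2 ≤ _
        nlinarith [sq_nonneg (∂₁ h x)]
      · change ∂₁ h x ^ 2 ≤ _
        nlinarith [sq_nonneg (∂₀ h x)]
    norm_num
    gcongr
  have a0 := h2 0
  have a1 := h2 1
  set A := ∫ x in Ω, |2 * h x * dd (ee 0) h x|
  set B := ∫ x in Ω, |2 * h x * dd (ee 1) h x|
  nlinarith [sq_nonneg (A - B)]

/-! ### The Stokes system -/

theorem dd_eq_zero_of_open (hΩ : IsOpen Ω) {g : E2 → ℝ} (h : ∀ x ∈ Ω, g x = 0) (v : E2) :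
    ∀ x ∈ Ω, dd v g x = 0 := by
  intro x hx
  have : g =ᶠ[𝓝 x] fun _ => 0 := by
    filter_upwards [hΩ.mem_nhds hx] with y hy using h y hy
  unfold dd
  rw [this.fderiv_eq]; simp

/-- Weighted interior regularity for the Stokes system. The test field is the rotated gradient of
`φ² ω`, where `ω` is the vorticity: it is divergence free and vanishes on `∂Ω`, so the pressure
drops out. -/
theorem stokes_le (d : Dom Ω φ) {ν : ℝ} (hν : 0 < ν) : ∃ C : ℝ, 0 < C ∧
    ∀ u0 u1 Q F0 F1 : E2 → ℝ, ContDiff ℝ ∞ u0 → ContDiff ℝ ∞ u1 → ContDiff ℝ ∞ Q →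
      Continuous F0 → Continuous F1 → (∀ x ∈ Ω, ∂₀ u0 x + ∂₁ u1 x = 0) →
      (∀ x ∈ Ω, ν * lap u0 x = ∂₀ Q x + F0 x) → (∀ x ∈ Ω, ν * lap u1 x = ∂₁ Q x + F1 x) →
      ∫ x in Ω, φ x ^ 2 * (lap u0 x ^ 2 + lap u1 x ^ 2) ≤
        C * ((∫ x in Ω, (F0 x ^ 2 + F1 x ^ 2)) + ∫ x in Ω, (gr u0 x + gr u1 x)) := by
  obtain ⟨M, hM1, hM⟩ := d.bounds
  have hφ := d.sm
  refine ⟨2 / ν * (1 + 8 * M ^ 2 / ν + (128 * ν * M ^ 2 + 16 * M ^ 4)), by positivity,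
    fun u0 u1 Q F0 F1 h0 h1 hQ hF0 hF1 hdiv e0 e1 => ?_⟩
  set m : E2 → ℝ := fun x => φ x * φ x * (∂₀ u1 x - ∂₁ u0 x) with hm
  have hms : ContDiff ℝ ∞ m := by fun_prop
  have hdm : ∀ (e x : E2), dd e m x = (dd e φ x * φ x + φ x * dd e φ x) * (∂₀ u1 x - ∂₁ u0 x) +
      φ x * φ x * (dd e (∂₀ u1) x - dd e (∂₁ u0) x) := by
    intro e x
    rw [hm]
    simp (disch := fun_prop) only [dd_mul, dd_sub]
  have h := div_le d.op d.bd
    (W0 := fun x => - (Q x * ∂₁ m x)) (W1 := fun x => Q x * ∂₀ m x)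
    (G := fun x => ν / 2 * (φ x ^ 2 * (lap u0 x ^ 2 + lap u1 x ^ 2)))
    (H := fun x => (1 + 8 * M ^ 2 / ν) * (F0 x ^ 2 + F1 x ^ 2) +
      (128 * ν * M ^ 2 + 16 * M ^ 4) * (gr u0 x + gr u1 x))
    (by fun_prop) (by fun_prop)
    (fun x hx => by simp [hdm, d.zero x hx]) (fun x hx => by simp [hdm, d.zero x hx])
    (by fun_prop) (by fun_prop) (fun x hx => by
      simp (disch := fun_prop) only [dd_mul, dd_neg]
      have c1 : ∂₁ (∂₀ m) x = ∂₀ (∂₁ m) x := dd_comm hms x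
      have c2 : ∂₁ (∂₀ u1) x = ∂₀ (∂₁ u1) x := dd_comm h1 x
      have c3 : ∂₁ (∂₀ u0) x = ∂₀ (∂₁ u0) x := dd_comm h0 x
      have d0 := dd_eq_zero_of_open d.op hdiv (EuclideanSpace.single (0 : Fin 2) (1 : ℝ)) x hx
      have d1 := dd_eq_zero_of_open d.op hdiv (EuclideanSpace.single (1 : Fin 2) (1 : ℝ)) x hx
      rw [dd_add (by fun_prop) (by fun_prop)] at d0 d1
      have q0 := e0 x hx
      have q1 := e1 x hx
      have k0 : ∂₁ (∂₀ u1) x - ∂₁ (∂₁ u0) x = - lap u0 x := by unfold lap; linarith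
      have k1 : ∂₀ (∂₀ u1) x - ∂₀ (∂₁ u0) x = lap u1 x := by unfold lap; linarith
      obtain ⟨m0, m1, m2, -⟩ := hM x (subset_closure hx)
      have m0 := sq_le_of_abs m0
      have m1 := sq_le_of_abs m1
      have m2 := sq_le_of_abs m2
      rw [c1, hdm, hdm, k0, k1]
      have r0 : ∂₀ Q x = ν * lap u0 x - F0 x := by linarith
      have r1 : ∂₁ Q x = ν * lap u1 x - F1 x := by linarith
      rw [r0, r1]
      have ho : (∂₀ u1 x - ∂₁ u0 x) ^ 2 ≤ 2 * (gr u0 x + gr u1 x) := by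
        unfold gr
        nlinarith [sq_nonneg (∂₀ u1 x + ∂₁ u0 x), sq_nonneg (∂₀ u0 x), sq_nonneg (∂₁ u1 x)]
      generalize ∂₀ u1 x - ∂₁ u0 x = o at *
      generalize gr u0 x + gr u1 x = z at *
      clear d0 d1 k0 k1 c1 c2 c3 q0 q1 r0 r1 hdm
      generalize ∂₀ (∂₁ m) x = n at *
      generalize lap u0 x = L0 at *
      generalize lap u1 x = L1 at *
      generalize F0 x = f0 at *
      generalize F1 x = f1 at *
      generalize ∂₀ φ x = a at *
      generalize ∂₁ φ x = b at *
      generalize φ x = p at *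
      have hk : 0 < ν / 8 := by positivity
      have y1 := young hk (p * L1) (-2 * ν * o * a)
      have y2 := young hk (p * L0) (2 * ν * o * b)
      have y3 := young hk (p * L0) (p * f0)
      have y4 := young hk (p * L1) (p * f1)
      have y5 : f0 * (-2 * p * b * o) ≤ f0 ^ 2 + 4 * M ^ 4 * o ^ 2 := by
        have : p ^ 2 * b ^ 2 ≤ M ^ 2 * M ^ 2 := mul_le_mul m0 m2 (sq_nonneg _) (sq_nonneg _)
        have := mul_le_mul_of_nonneg_right this (sq_nonneg o)
        nlinarith [sq_nonneg (f0 + 2 * p * b * o), sq_nonneg (f0)]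
      have y6 : f1 * (2 * p * a * o) ≤ f1 ^ 2 + 4 * M ^ 4 * o ^ 2 := by
        have : p ^ 2 * a ^ 2 ≤ M ^ 2 * M ^ 2 := mul_le_mul m0 m1 (sq_nonneg _) (sq_nonneg _)
        have := mul_le_mul_of_nonneg_right this (sq_nonneg o)
        nlinarith [sq_nonneg (f1 - 2 * p * a * o), sq_nonneg (f1)]
      have y7 : 1 / (ν / 8) * (-2 * ν * o * a) ^ 2 ≤ 32 * ν * M ^ 2 * o ^ 2 := by
        have e : 1 / (ν / 8) * (-2 * ν * o * a) ^ 2 = 32 * ν * a ^ 2 * o ^ 2 := by field_simp; ring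
        rw [e]; gcongr
      have y8 : 1 / (ν / 8) * (2 * ν * o * b) ^ 2 ≤ 32 * ν * M ^ 2 * o ^ 2 := by
        have e : 1 / (ν / 8) * (2 * ν * o * b) ^ 2 = 32 * ν * b ^ 2 * o ^ 2 := by field_simp; ring
        rw [e]; gcongr
      have y9 : 1 / (ν / 8) * (p * f0) ^ 2 ≤ 8 * M ^ 2 / ν * f0 ^ 2 := by
        have e : 1 / (ν / 8) * (p * f0) ^ 2 = 8 * p ^ 2 / ν * f0 ^ 2 := by field_simp
        rw [e]; gcongr
      have y10 : 1 / (ν / 8) * (p * f1) ^ 2 ≤ 8 * M ^ 2 / ν * f1 ^ 2 := by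
        have e : 1 / (ν / 8) * (p * f1) ^ 2 = 8 * p ^ 2 / ν * f1 ^ 2 := by field_simp
        rw [e]; gcongr
      have y11 := mul_le_mul_of_nonneg_left ho
        (by positivity : 0 ≤ 64 * ν * M ^ 2 + 8 * M ^ 4)
      have y12 : 0 ≤ ν * (p * L0) ^ 2 := by positivity
      have y13 : 0 ≤ ν * (p * L1) ^ 2 := by positivity
      linarith)
  rw [int_smul, int_add d.bd (by fun_prop) (by fun_prop), int_smul, int_smul] at h
  have p1 : 0 ≤ ∫ x in Ω, (F0 x ^ 2 + F1 x ^ 2) := int_nonneg d.op fun x _ => by positivity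
  have p2 : 0 ≤ ∫ x in Ω, (gr u0 x + gr u1 x) :=
    int_nonneg d.op fun x _ => add_nonneg (gr_nonneg _ _) (gr_nonneg _ _)
  generalize ∫ x in Ω, φ x ^ 2 * (lap u0 x ^ 2 + lap u1 x ^ 2) = X at *
  generalize ∫ x in Ω, (F0 x ^ 2 + F1 x ^ 2) = N at *
  generalize ∫ x in Ω, (gr u0 x + gr u1 x) = D at *
  have e : X = 2 / ν * (ν / 2 * X) := by field_simp
  rw [e, mul_assoc]
  refine mul_le_mul_of_nonneg_left ?_ (by positivity)
  have q1 : 0 ≤ (1 + 8 * M ^ 2 / ν) * D := by positivity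
  have q2 : 0 ≤ (128 * ν * M ^ 2 + 16 * M ^ 4) * N := by positivity
  linarith

/-- The static estimate: weighted Hessian and supremum of a Stokes solution vanishing on `∂Ω`. -/
theorem static_est (d : Dom Ω φ) (hne : Ω.Nonempty) {ν : ℝ} (hν : 0 < ν) : ∃ C : ℝ, 0 < C ∧
    ∀ u0 u1 Q F0 F1 : E2 → ℝ, ContDiff ℝ ∞ u0 → ContDiff ℝ ∞ u1 → ContDiff ℝ ∞ Q →
      Continuous F0 → Continuous F1 → (∀ x ∈ Ω, ∂₀ u0 x + ∂₁ u1 x = 0) →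
      (∀ x ∈ frontier Ω, u0 x = 0) → (∀ x ∈ frontier Ω, u1 x = 0) →
      (∀ x ∈ Ω, ν * lap u0 x = ∂₀ Q x + F0 x) → (∀ x ∈ Ω, ν * lap u1 x = ∂₁ Q x + F1 x) →
      (∫ x in Ω, φ x ^ 2 * (hs u0 x + hs u1 x) ≤
        C * ((∫ x in Ω, (F0 x ^ 2 + F1 x ^ 2)) + ∫ x in Ω, (gr u0 x + gr u1 x))) ∧
      ∀ x ∈ Ω, u0 x ^ 2 + u1 x ^ 2 ≤
        C * ((∫ x in Ω, (F0 x ^ 2 + F1 x ^ 2)) + ∫ x in Ω, (gr u0 x + gr u1 x)) := by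
  obtain ⟨C1, hC1, H1⟩ := stokes_le d hν
  obtain ⟨C2, hC2, H2⟩ := hess_le d
  obtain ⟨C3, hC3, H3⟩ := sup_est d hne
  have hφ := d.sm
  refine ⟨C2 * (C1 + 1) + C3 * (C2 * (C1 + 1) + 1), by positivity,
    fun u0 u1 Q F0 F1 h0 h1 hQ hF0 hF1 hdiv z0 z1 e0 e1 => ?_⟩
  have a1 := H1 u0 u1 Q F0 F1 h0 h1 hQ hF0 hF1 hdiv e0 e1
  have b0 := H2 u0 h0
  have b1 := H2 u1 h1
  have s1 : ∫ x in Ω, φ x ^ 2 * (hs u0 x + hs u1 x) =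
      (∫ x in Ω, φ x ^ 2 * hs u0 x) + ∫ x in Ω, φ x ^ 2 * hs u1 x := by
    simp only [mul_add]; exact int_add d.bd (by fun_prop) (by fun_prop)
  have s2 : ∫ x in Ω, φ x ^ 2 * (lap u0 x ^ 2 + lap u1 x ^ 2) =
      (∫ x in Ω, φ x ^ 2 * lap u0 x ^ 2) + ∫ x in Ω, φ x ^ 2 * lap u1 x ^ 2 := by
    simp only [mul_add]; exact int_add d.bd (by fun_prop) (by fun_prop)
  have s3 : ∫ x in Ω, (gr u0 x + gr u1 x) = (∫ x in Ω, gr u0 x) + ∫ x in Ω, gr u1 x :=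
    int_add d.bd (by fun_prop) (by fun_prop)
  have p1 : 0 ≤ ∫ x in Ω, (F0 x ^ 2 + F1 x ^ 2) := int_nonneg d.op fun x _ => by positivity
  have p2 : 0 ≤ ∫ x in Ω, gr u0 x := int_nonneg d.op fun x _ => gr_nonneg _ _
  have p3 : 0 ≤ ∫ x in Ω, gr u1 x := int_nonneg d.op fun x _ => gr_nonneg _ _
  rw [s2, s3] at a1
  rw [s1, s3]
  have c0 := fun x hx => H3 u0 h0 z0 x hx
  have c1 := fun x hx => H3 u1 h1 z1 x hx
  generalize ∫ x in Ω, φ x ^ 2 * hs u0 x = S0 at *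
  generalize ∫ x in Ω, φ x ^ 2 * hs u1 x = S1 at *
  generalize ∫ x in Ω, gr u0 x = D0 at *
  generalize ∫ x in Ω, gr u1 x = D1 at *
  generalize ∫ x in Ω, φ x ^ 2 * lap u0 x ^ 2 = L0 at *
  generalize ∫ x in Ω, φ x ^ 2 * lap u1 x ^ 2 = L1 at *
  generalize ∫ x in Ω, (F0 x ^ 2 + F1 x ^ 2) = N at *
  have t1 : S0 + S1 ≤ C2 * (C1 + 1) * (N + (D0 + D1)) := by
    nlinarith [mul_le_mul_of_nonneg_left a1 hC2.le, mul_nonneg hC2.le p1]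
  constructor
  · have : 0 ≤ C3 * (C2 * (C1 + 1) + 1) * (N + (D0 + D1)) := by positivity
    linarith
  · intro x hx
    have := c0 x hx
    have := c1 x hx
    have q := mul_le_mul_of_nonneg_left t1 hC3.le
    have : 0 ≤ C2 * (C1 + 1) * (N + (D0 + D1)) := by positivity
    nlinarith [mul_nonneg hC3.le p1]

/-! ### Differential inequalities -/

/-- A function that lies below `b` at `s` and whose derivative is smaller than `a` wherever the
function meets the line of slope `a` through `(s, b)` stays below that line. -/
theorem fence {g g' : ℝ → ℝ} (hg : ∀ t, 0 < t → HasDerivAt g (g' t) t) {s t a b : ℝ} (hs : 0 < s)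
    (hst : s ≤ t) (h0 : g s ≤ b)
    (hb : ∀ x, 0 < x → s ≤ x → x ≤ t → g x = b + a * (x - s) → g' x < a) :
    g t ≤ b + a * (t - s) := by
  refine image_le_of_deriv_right_lt_deriv_boundary (f := g) (f' := g') (a := s) (b := t)
    (B := fun x => b + a * (x - s)) (B' := fun _ => a)
    (fun x hx => (hg x (hs.trans_le hx.1)).continuousAt.continuousWithinAt)
    (fun x hx => (hg x (hs.trans_le hx.1)).hasDerivWithinAt) (by simpa using h0) ?_ ?_
    (right_mem_Icc.2 hst)
  · intro x
    have := (((hasDerivAt_id x).sub_const s).const_mul a).const_add b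
    simpa using this
  · intro x hx he
    exact hb x (hs.trans_le hx.1) hx.1 hx.2.le he

/-- The differential inequalities behind the uniform bound: dissipation of a bounded-below energy
makes `z` eventually small, and then `y` eventually bounded. -/
theorem ode_bound {E z z' y y' : ℝ → ℝ} {ν m ε0 C5 C6 : ℝ} (hν : 0 < ν) (hε0 : 0 < ε0)
    (hC5 : 0 ≤ C5) (hC6 : 0 ≤ C6)
    (hE : ∀ t, 0 < t → HasDerivAt E (-ν * z t) t) (hEm : ∀ t, 0 < t → m ≤ E t)
    (hz0 : ∀ t, 0 < t → 0 ≤ z t) (hy0 : ∀ t, 0 < t → 0 ≤ y t)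
    (hz : ∀ t, 0 < t → HasDerivAt z (z' t) t) (hy : ∀ t, 0 < t → HasDerivAt y (y' t) t)
    (h5 : ∀ t, 0 < t → z t ≤ ε0 → 1 / 4 * y t + ν / 2 * z' t ≤ C5)
    (h6 : ∀ t, 0 < t → z t ≤ ε0 → y' t ≤ C6 * (1 + y t) ^ 3) :
    ∃ T K : ℝ, 0 < T ∧ ∀ t, T ≤ t → z t ≤ ε0 ∧ y t ≤ K := by
  have hanti : AntitoneOn E (Ioi 0) := by
    refine antitoneOn_of_deriv_nonpos (convex_Ioi 0)
      (fun t ht => (hE t ht).continuousAt.continuousWithinAt)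
      (fun t ht => ?_) (fun t ht => ?_)
    · rw [interior_Ioi] at ht
      exact (hE t ht).differentiableAt.differentiableWithinAt
    · rw [interior_Ioi] at ht
      rw [(hE t ht).deriv]
      nlinarith [hz0 t ht]
  -- the energy is nonincreasing and bounded below, so its drop over late time intervals is small
  have hdrop : ∀ δ : ℝ, 0 < δ → ∃ T : ℝ, 0 < T ∧ ∀ t s, T ≤ t → t ≤ s → E t - E s < δ := by
    intro δ hδ
    have hbdd : BddBelow (E '' Ioi 0) := ⟨m, by rintro _ ⟨t, ht, rfl⟩; exact hEm t ht⟩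
    have hne : (E '' Ioi 0).Nonempty := ⟨E 1, 1, by simp, rfl⟩
    obtain ⟨_, ⟨T, hT, rfl⟩, hlt⟩ := exists_lt_of_csInf_lt hne
      (show sInf (E '' Ioi 0) < sInf (E '' Ioi 0) + δ by linarith)
    refine ⟨T, hT, fun t s ht hs => ?_⟩
    have ht0 : 0 < t := lt_of_lt_of_le hT ht
    have h1 := hanti hT ht0 ht
    have h2 := csInf_le hbdd ⟨s, (ht0.trans_le hs : 0 < s), rfl⟩
    linarith
  -- In a time window of length `h` the drop of the energy forces `z ≤ ε / 2` somewhere, and the slope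
  -- bound `z' < a` keeps `z` below `ε` until the end of the window, since `a * h = ε / 2`.
  have hsmall : ∀ ε : ℝ, 0 < ε → ε ≤ ε0 → ∃ T : ℝ, 0 < T ∧ ∀ t, T ≤ t → z t ≤ ε := by
    intro ε hε hεε
    set a := 2 * C5 / ν + 1 with ha
    have hapos : 0 < a := by positivity
    set h := ε / (2 * a) with hh
    have hpos : 0 < h := by positivity
    obtain ⟨T, hT, hTd⟩ := hdrop (ν * h * ε / 2) (by positivity)
    refine ⟨T + h, by positivity, fun t ht => ?_⟩
    have ht1 : T ≤ t - h := by linarith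
    obtain ⟨s, hs, hse⟩ := exists_hasDerivAt_eq_slope E (fun x => -ν * z x)
      (show t - h < t by linarith)
      (fun x hx => (hE x (hT.trans_le (ht1.trans hx.1))).continuousAt.continuousWithinAt)
      (fun x hx => hE x (hT.trans_le (ht1.trans hx.1.le)))
    have hs0 : 0 < s := hT.trans_le (ht1.trans hs.1.le)
    have h1 := hTd (t - h) t ht1 (by linarith)
    have h2 : z s ≤ ε / 2 := by
      rw [sub_sub_cancel, eq_div_iff hpos.ne'] at hse
      have : ν * h * (z s) < ν * h * (ε / 2) := by linarith
      exact (lt_of_mul_lt_mul_left this (by positivity)).le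
    have hah : a * h = ε / 2 := by rw [hh]; field_simp
    have h3 := fence hz hs0 hs.2.le (a := a) h2 (fun x hx0 hsx hxt hxe => by
      have h4 : z x ≤ ε0 := by
        have : a * (x - s) ≤ a * h := by
          apply mul_le_mul_of_nonneg_left _ hapos.le
          linarith [hs.1]
        linarith
      have h5' := h5 x hx0 h4
      have h6' := hy0 x hx0
      have h7 : z' x ≤ 2 * C5 / ν := by
        rw [le_div_iff₀ hν]; linarith
      linarith)
    have : a * (t - s) ≤ a * h := by
      apply mul_le_mul_of_nonneg_left _ hapos.le
      linarith [hs.1]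
    linarith
  -- In a time window of length `L⁻¹`, `z` changes so little that `ν / 2 * z' ≥ -1` somewhere, whence
  -- `y ≤ K` there; growth of `y` at rate below `L` then adds at most `1` until the end of the window.
  set K := 4 * (C5 + 1) with hK
  set L := C6 * (2 + K) ^ 3 + 1 with hL
  have hKpos : 0 < K := by positivity
  have hLpos : 0 < L := by positivity
  obtain ⟨T, hT, hTz⟩ := hsmall (min ε0 (2 * L⁻¹ / ν)) (by positivity) (min_le_left _ _)
  have hLi : 0 < L⁻¹ := by positivity
  refine ⟨T + L⁻¹, K + 1, by positivity, fun t ht => ?_⟩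
  have hzt : ∀ x, T ≤ x → z x ≤ ε0 := fun x hx => (hTz x hx).trans (min_le_left _ _)
  have ht1 : T ≤ t - L⁻¹ := by linarith
  refine ⟨hzt t (by linarith), ?_⟩
  obtain ⟨s, hs, hse⟩ := exists_hasDerivAt_eq_slope z z'
    (show t - L⁻¹ < t by linarith)
    (fun x hx => (hz x (hT.trans_le (ht1.trans hx.1))).continuousAt.continuousWithinAt)
    (fun x hx => hz x (hT.trans_le (ht1.trans hx.1.le)))
  have hs1 : T ≤ s := ht1.trans hs.1.le
  have hs0 : 0 < s := hT.trans_le hs1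
  have hys : y s ≤ K := by
    rw [sub_sub_cancel, eq_div_iff hLi.ne'] at hse
    have h1 := (hTz _ ht1).trans (min_le_right _ _)
    have h2 := hz0 t (by linarith)
    have h3 := h5 s hs0 (hzt s hs1)
    have h4 : -(2 / ν) ≤ z' s := by
      have : -(2 / ν) * L⁻¹ ≤ z' s * L⁻¹ := by
        rw [hse]
        have : 2 * L⁻¹ / ν = 2 / ν * L⁻¹ := by ring
        linarith
      exact le_of_mul_le_mul_right this hLi
    have h5 : -1 ≤ ν / 2 * z' s := by
      have := mul_le_mul_of_nonneg_left h4 (by positivity : 0 ≤ ν / 2)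
      have e : ν / 2 * -(2 / ν) = -1 := by field_simp
      linarith
    linarith
  have hLh : L * L⁻¹ = 1 := mul_inv_cancel₀ hLpos.ne'
  have h3 := fence hy hs0 hs.2.le (a := L) hys (fun x hx0 hsx hxt hxe => by
    have h4 : y x ≤ K + 1 := by
      have : L * (x - s) ≤ L * L⁻¹ := by
        apply mul_le_mul_of_nonneg_left _ hLpos.le
        linarith [hs.1]
      linarith
    have h5' := h6 x hx0 (hzt x (hs1.trans hsx))
    have h6' := hy0 x hx0
    have h7 : (1 + y x) ^ 3 ≤ (2 + K) ^ 3 := by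
      apply pow_le_pow_left₀ (by linarith); linarith
    have h8 := mul_le_mul_of_nonneg_left h7 hC6
    linarith)
  have : L * (t - s) ≤ L * L⁻¹ := by
    apply mul_le_mul_of_nonneg_left _ hLpos.le
    linarith [hs.1]
  linarith

/-! ### Space-time functions and the system in components -/

local notation "Dt" => dd ((1 : ℝ), (0 : E2))
local notation "Dx" => dd ((0 : ℝ), (EuclideanSpace.single (0 : Fin 2) (1 : ℝ) : E2))
local notation "Dy" => dd ((0 : ℝ), (EuclideanSpace.single (1 : Fin 2) (1 : ℝ) : E2))

/-- The integral over `Ω` of a space-time function at time `t`. -/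
def J (Ω : Set E2) (g : ℝ × E2 → ℝ) (t : ℝ) : ℝ := ∫ x in Ω, g (t, x)

theorem slice {g : ℝ × E2 → ℝ} (hg : ContDiff ℝ ∞ g) (e : E2) (t : ℝ) (x : E2) :
    dd e (fun x => g (t, x)) x = dd ((0 : ℝ), e) g (t, x) := by
  have h1 : HasFDerivAt (fun x : E2 => (t, x)) (ContinuousLinearMap.inr ℝ ℝ E2) x :=
    hasFDerivAt_prodMk_right t x
  have h2 := (smooth_diff hg (t, x)).hasFDerivAt.comp x h1
  unfold dd
  have h3 : (fun x => g (t, x)) = g ∘ (fun x : E2 => (t, x)) := rfl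
  rw [h3, h2.fderiv]
  simp

theorem slice_fun {g : ℝ × E2 → ℝ} (hg : ContDiff ℝ ∞ g) (e : E2) (t : ℝ) :
    dd e (fun x => g (t, x)) = fun x => dd ((0 : ℝ), e) g (t, x) :=
  funext fun x => slice hg e t x

theorem slice_time {g : ℝ × E2 → ℝ} (hg : ContDiff ℝ ∞ g) (t : ℝ) (x : E2) :
    HasDerivAt (fun s => g (s, x)) (Dt g (t, x)) t := by
  have h1 : HasDerivAt (fun s : ℝ => (s, x)) ((1 : ℝ), (0 : E2)) t :=
    (hasDerivAt_id t).prodMk (hasDerivAt_const t x)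
  exact (smooth_diff hg (t, x)).hasFDerivAt.comp_hasDerivAt t h1

theorem J_deriv (hΩ : IsOpen Ω) (hb : Bornology.IsBounded Ω) {g : ℝ × E2 → ℝ}
    (hg : ContDiff ℝ ∞ g) (t : ℝ) : HasDerivAt (J Ω g) (J Ω (Dt g) t) t := by
  have hcont : Continuous (Dt g) := by fun_prop
  obtain ⟨K, hK⟩ := ((isCompact_Icc (a := t - 1) (b := t + 1)).prod
    hb.isCompact_closure).exists_bound_of_continuousOn hcont.continuousOn
  have hgc := hg.continuous
  have hfin : IntegrableOn (fun _ : E2 => K) Ω := intC hb continuous_const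
  refine (hasDerivAt_integral_of_dominated_loc_of_deriv_le (μ := volume.restrict Ω)
    (F := fun s x => g (s, x)) (F' := fun s x => Dt g (s, x)) (x₀ := t) (s := Icc (t - 1) (t + 1))
    (bound := fun _ => K) (Icc_mem_nhds (by linarith) (by linarith)) ?_ ?_ ?_ ?_ hfin ?_).2
  · exact Eventually.of_forall fun s => (intC hb (g := fun x => g (s, x)) (by fun_prop)).1
  · exact intC hb (by fun_prop)
  · exact (intC hb (g := fun x => Dt g (t, x)) (by fun_prop)).1
  · rw [ae_restrict_iff' hΩ.measurableSet]
    exact Eventually.of_forall fun x hx s hs => hK (s, x) ⟨hs, subset_closure hx⟩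
  · exact Eventually.of_forall fun x s _ => slice_time hg s x

theorem J_le (hΩ : IsOpen Ω) (hb : Bornology.IsBounded Ω) {g h : ℝ × E2 → ℝ} (hg : Continuous g)
    (hh : Continuous h) {t : ℝ} (H : ∀ x ∈ Ω, g (t, x) ≤ h (t, x)) : J Ω g t ≤ J Ω h t :=
  int_le hΩ hb (by fun_prop) (by fun_prop) H

theorem J_nonneg (hΩ : IsOpen Ω) {g : ℝ × E2 → ℝ} {t : ℝ} (H : ∀ x ∈ Ω, 0 ≤ g (t, x)) :
    0 ≤ J Ω g t := int_nonneg hΩ H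

theorem J_add (hb : Bornology.IsBounded Ω) {g h : ℝ × E2 → ℝ} (hg : Continuous g)
    (hh : Continuous h) (t : ℝ) : J Ω (fun p => g p + h p) t = J Ω g t + J Ω h t :=
  int_add hb (by fun_prop) (by fun_prop)

theorem J_smul (c : ℝ) (g : ℝ × E2 → ℝ) (t : ℝ) : J Ω (fun p => c * g p) t = c * J Ω g t :=
  int_smul c _

theorem J_div_le (hΩ : IsOpen Ω) (hb : Bornology.IsBounded Ω) {W0 W1 G H : ℝ × E2 → ℝ} {t : ℝ}
    (h0 : ContDiff ℝ ∞ W0) (h1 : ContDiff ℝ ∞ W1)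
    (z0 : ∀ x ∈ frontier Ω, W0 (t, x) = 0) (z1 : ∀ x ∈ frontier Ω, W1 (t, x) = 0)
    (hG : Continuous G) (hH : Continuous H)
    (h : ∀ x ∈ Ω, G (t, x) ≤ Dx W0 (t, x) + Dy W1 (t, x) + H (t, x)) : J Ω G t ≤ J Ω H t := by
  refine div_le hΩ hb (W0 := fun x => W0 (t, x)) (W1 := fun x => W1 (t, x)) (by fun_prop)
    (by fun_prop) z0 z1 (by fun_prop) (by fun_prop) fun x hx => ?_
  rw [slice h0, slice h1]
  exact h x hx

theorem J_div_eq (hΩ : IsOpen Ω) (hb : Bornology.IsBounded Ω) {W0 W1 G H : ℝ × E2 → ℝ} {t : ℝ}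
    (h0 : ContDiff ℝ ∞ W0) (h1 : ContDiff ℝ ∞ W1)
    (z0 : ∀ x ∈ frontier Ω, W0 (t, x) = 0) (z1 : ∀ x ∈ frontier Ω, W1 (t, x) = 0)
    (hG : Continuous G) (hH : Continuous H)
    (h : ∀ x ∈ Ω, G (t, x) = Dx W0 (t, x) + Dy W1 (t, x) + H (t, x)) : J Ω G t = J Ω H t := by
  refine div_eq hΩ hb (W0 := fun x => W0 (t, x)) (W1 := fun x => W1 (t, x)) (by fun_prop)
    (by fun_prop) z0 z1 (by fun_prop) (by fun_prop) fun x hx => ?_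
  rw [slice h0, slice h1]
  exact h x hx

/-- Squared length of the spatial gradient of a space-time function. -/
def gM (v : ℝ × E2 → ℝ) (p : ℝ × E2) : ℝ := Dx v p ^ 2 + Dy v p ^ 2

@[fun_prop]
theorem gM_contDiff {v : ℝ × E2 → ℝ} (hv : ContDiff ℝ ∞ v) : ContDiff ℝ ∞ (gM v) := by
  unfold gM; fun_prop

@[fun_prop]
theorem gM_cont {v : ℝ × E2 → ℝ} (hv : ContDiff ℝ ∞ v) : Continuous (gM v) :=
  (gM_contDiff hv).continuous

theorem gM_nonneg (v : ℝ × E2 → ℝ) (p : ℝ × E2) : 0 ≤ gM v p := by unfold gM; positivity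

/-- Squared Hessian of a space-time function in the space variables. -/
def hM (v : ℝ × E2 → ℝ) (p : ℝ × E2) : ℝ :=
  Dx (Dx v) p ^ 2 + Dx (Dy v) p ^ 2 + Dy (Dy v) p ^ 2

@[fun_prop]
theorem hM_cont {v : ℝ × E2 → ℝ} (hv : ContDiff ℝ ∞ v) : Continuous (hM v) := by
  unfold hM; fun_prop

theorem hM_nonneg (v : ℝ × E2 → ℝ) (p : ℝ × E2) : 0 ≤ hM v p := by unfold hM; positivity

theorem gr_slice {v : ℝ × E2 → ℝ} (hv : ContDiff ℝ ∞ v) (t : ℝ) (x : E2) :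
    gr (fun x => v (t, x)) x = gM v (t, x) := by
  unfold gr gM; rw [slice hv, slice hv]

theorem hs_slice {v : ℝ × E2 → ℝ} (hv : ContDiff ℝ ∞ v) (t : ℝ) (x : E2) :
    hs (fun x => v (t, x)) x = hM v (t, x) := by
  unfold hs hM
  simp only [slice_fun hv]
  rw [slice (by fun_prop), slice (by fun_prop), slice (by fun_prop)]

theorem lap_slice {v : ℝ × E2 → ℝ} (hv : ContDiff ℝ ∞ v) (t : ℝ) (x : E2) :
    lap (fun x => v (t, x)) x = Dx (Dx v) (t, x) + Dy (Dy v) (t, x) := by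
  unfold lap
  simp only [slice_fun hv]
  rw [slice (by fun_prop), slice (by fun_prop)]

theorem dd_eq_zero_of_pos (hΩ : IsOpen Ω) {g : ℝ × E2 → ℝ}
    (h : ∀ t, 0 ≤ t → ∀ x ∈ Ω, g (t, x) = 0) (v : ℝ × E2) :
    ∀ t, 0 < t → ∀ x ∈ Ω, dd v g (t, x) = 0 := by
  intro t ht x hx
  have : g =ᶠ[𝓝 (t, x)] fun _ => 0 := by
    filter_upwards [(isOpen_Ioi.prod hΩ).mem_nhds (show (t, x) ∈ Ioi 0 ×ˢ Ω from ⟨ht, hx⟩)]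
      with p hp using h p.1 (le_of_lt hp.1) p.2 hp.2
  unfold dd
  rw [this.fderiv_eq]; simp

theorem dt_eq_zero_of_pos {g : ℝ × E2 → ℝ} (hg : ContDiff ℝ ∞ g) {x : E2}
    (h : ∀ t, 0 ≤ t → g (t, x) = 0) : ∀ t, 0 < t → Dt g (t, x) = 0 := by
  intro t ht
  have h1 := slice_time hg t x
  have h2 : (fun s => g (s, x)) =ᶠ[𝓝 t] fun _ => 0 := by
    filter_upwards [Ioi_mem_nhds ht] with s hs using h s (le_of_lt hs)
  have h3 := h2.deriv_eq
  rw [h1.deriv] at h3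
  simpa using h3

/-- A smooth solution in components on `[0, ∞) × Ω`: velocity `(U0, U1)`, total density `R`,
pressure `Q` (including the hydrostatic one) and potential `G`, which does not depend on time. -/
structure Sol (Ω : Set E2) (ν : ℝ) (U0 U1 R Q G : ℝ × E2 → ℝ) : Prop where
  s0 : ContDiff ℝ ∞ U0
  s1 : ContDiff ℝ ∞ U1
  sR : ContDiff ℝ ∞ R
  sQ : ContDiff ℝ ∞ Q
  sG : ContDiff ℝ ∞ G
  G_t : ∀ t s x, G (t, x) = G (s, x)
  mom0 : ∀ t, 0 ≤ t → ∀ x ∈ Ω,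
    R (t, x) * (Dt U0 (t, x) + (U0 (t, x) * Dx U0 (t, x) + U1 (t, x) * Dy U0 (t, x))
      + Dx G (t, x)) - ν * (Dx (Dx U0) (t, x) + Dy (Dy U0) (t, x)) + Dx Q (t, x) = 0
  mom1 : ∀ t, 0 ≤ t → ∀ x ∈ Ω,
    R (t, x) * (Dt U1 (t, x) + (U0 (t, x) * Dx U1 (t, x) + U1 (t, x) * Dy U1 (t, x))
      + Dy G (t, x)) - ν * (Dx (Dx U1) (t, x) + Dy (Dy U1) (t, x)) + Dy Q (t, x) = 0
  mass : ∀ t, 0 ≤ t → ∀ x ∈ Ω,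
    Dt R (t, x) + U0 (t, x) * Dx R (t, x) + U1 (t, x) * Dy R (t, x) = 0
  div : ∀ t, 0 ≤ t → ∀ x ∈ Ω, Dx U0 (t, x) + Dy U1 (t, x) = 0
  bc0 : ∀ t, 0 ≤ t → ∀ x ∈ frontier Ω, U0 (t, x) = 0
  bc1 : ∀ t, 0 ≤ t → ∀ x ∈ frontier Ω, U1 (t, x) = 0

variable {ν : ℝ} {U0 U1 R Q G : ℝ × E2 → ℝ}

theorem dd_const_mul {E : Type*} [NormedAddCommGroup E] [NormedSpace ℝ E] {v : E} (c : ℝ)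
    {g : E → ℝ} (hg : ContDiff ℝ ∞ g) (x : E) : dd v (fun y => c * g y) x = c * dd v g x := by
  rw [dd_mul contDiff_const hg, dd_const]; ring

theorem dd_comp {E : Type*} [NormedAddCommGroup E] [NormedSpace ℝ E] {v : E} {H : ℝ → ℝ}
    {g : E → ℝ} (hH : ContDiff ℝ ∞ H) (hg : ContDiff ℝ ∞ g) (x : E) :
    dd v (fun y => H (g y)) x = deriv H (g x) * dd v g x := by
  have h1 := (smooth_diff hH (g x)).hasDerivAt.comp_hasFDerivAt x (smooth_diff hg x).hasFDerivAt
  have h2 : (fun y => H (g y)) = H ∘ g := rfl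
  unfold dd
  rw [h2, h1.fderiv]
  simp

/-- Constancy on `[0, ∞)` of integrals with vanishing time derivative. -/
theorem J_conserved (hΩ : IsOpen Ω) (hb : Bornology.IsBounded Ω) {g : ℝ × E2 → ℝ}
    (hg : ContDiff ℝ ∞ g) (h : ∀ t, 0 ≤ t → J Ω (Dt g) t = 0) {t : ℝ} (ht : 0 ≤ t) :
    J Ω g t = J Ω g 0 := by
  refine constant_of_has_deriv_right_zero (a := 0) (b := t)
    (fun s _ => (J_deriv hΩ hb hg s).continuousAt.continuousWithinAt) (fun s hs => ?_) t
    (right_mem_Icc.2 ht)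
  have := (J_deriv hΩ hb hg s).hasDerivWithinAt (s := Ici s)
  rwa [h s hs.1] at this

theorem eq_zero_of_J (hΩ : IsOpen Ω) (hb : Bornology.IsBounded Ω) {g : ℝ × E2 → ℝ}
    (hg : Continuous g) (h0 : ∀ p, 0 ≤ g p) {t : ℝ} (h : J Ω g t = 0) : ∀ x ∈ Ω, g (t, x) = 0 := by
  have hc : Continuous (fun x => g (t, x)) := by fun_prop
  have h1 := (integral_eq_zero_iff_of_nonneg (μ := volume.restrict Ω) (f := fun x => g (t, x))
    (fun x => h0 _) (intC hb hc)).1 h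
  exact Measure.eqOn_open_of_ae_eq h1 hΩ hc.continuousOn continuousOn_const

/-- Transport of the density bounds. -/
theorem Sol.density (hΩ : IsOpen Ω) (hb : Bornology.IsBounded Ω) (S : Sol Ω ν U0 U1 R Q G)
    {α₁ α₂ : ℝ} (h0 : ∀ x ∈ Ω, α₁ ≤ R (0, x) ∧ R (0, x) ≤ α₂) :
    ∀ t, 0 ≤ t → ∀ x ∈ Ω, α₁ ≤ R (t, x) ∧ R (t, x) ≤ α₂ := by
  intro t ht
  obtain ⟨s0, s1, sR, sQ, sG, -, -, -, mass, div, bc0, bc1⟩ := S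
  -- `H` is smooth, nonnegative and vanishes exactly on `[α₁, α₂]`; `∫ H(R)` is conserved because `R` is
  -- transported by a divergence-free field
  set H : ℝ → ℝ := fun r => expNegInvGlue (r - α₂) + expNegInvGlue (α₁ - r) with hH
  have hHs : ContDiff ℝ ∞ H := by
    have : ContDiff ℝ ∞ expNegInvGlue := expNegInvGlue.contDiff
    exact (this.comp (by fun_prop)).add (this.comp (by fun_prop))
  have hH0 : ∀ r, 0 ≤ H r := fun r =>
    add_nonneg (expNegInvGlue.nonneg _) (expNegInvGlue.nonneg _)
  have hHR : ContDiff ℝ ∞ (fun p => H (R p)) := hHs.comp sR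
  have hcons := J_conserved hΩ hb hHR (fun s hs => by
    have h1 := J_div_eq hΩ hb (t := s) (W0 := fun p => - (U0 p * H (R p)))
      (W1 := fun p => - (U1 p * H (R p))) (G := Dt (fun p => H (R p))) (H := fun _ => 0)
      (by fun_prop) (by fun_prop) (fun x hx => by simp [bc0 s hs x hx])
      (fun x hx => by simp [bc1 s hs x hx]) (by fun_prop) (by fun_prop) (fun x hx => by
        simp only [dd_neg]
        rw [dd_mul s0 hHR, dd_mul s1 hHR]
        simp only [dd_comp hHs sR]
        linear_combination deriv H (R (s, x)) * mass s hs x hx + H (R (s, x)) * div s hs x hx)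
    rw [h1]; simp [J]) ht
  have hzero : J Ω (fun p => H (R p)) 0 = 0 := by
    unfold J
    rw [setIntegral_eq_zero_of_forall_eq_zero]
    intro x hx
    obtain ⟨h1, h2⟩ := h0 x hx
    simp [hH, expNegInvGlue.zero_of_nonpos (sub_nonpos.2 h1),
      expNegInvGlue.zero_of_nonpos (sub_nonpos.2 h2)]
  rw [hzero] at hcons
  intro x hx
  have h1 := eq_zero_of_J hΩ hb hHR.continuous (fun p => hH0 _) hcons x hx
  have h2 := expNegInvGlue.nonneg (R (t, x) - α₂)
  have h3 := expNegInvGlue.nonneg (α₁ - R (t, x))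
  simp only [hH] at h1
  constructor
  · by_contra hcon
    have := expNegInvGlue.pos_of_pos (x := α₁ - R (t, x)) (by linarith)
    linarith
  · by_contra hcon
    have := expNegInvGlue.pos_of_pos (x := R (t, x) - α₂) (by linarith)
    linarith

/-! ### Energy identity, static estimate, and the acceleration as test function -/

theorem time_indep {g : ℝ × E2 → ℝ} (hg : ContDiff ℝ ∞ g) (h : ∀ t s x, g (t, x) = g (s, x))
    (e : E2) : ∀ t s x, dd ((0 : ℝ), e) g (t, x) = dd ((0 : ℝ), e) g (s, x) := by
  intro t s x
  rw [← slice hg, ← slice hg]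
  congr 1
  funext y
  exact h t s y

theorem Sol.dtG (S : Sol Ω ν U0 U1 R Q G) (p : ℝ × E2) : Dt G p = 0 := by
  have h1 := slice_time S.sG p.1 p.2
  have h2 : (fun s => G (s, p.2)) = fun _ => G (0, p.2) := funext fun s => S.G_t s 0 p.2
  rw [h2] at h1
  exact h1.unique (hasDerivAt_const _ _)

theorem Sol.G_bound (hb : Bornology.IsBounded Ω) (S : Sol Ω ν U0 U1 R Q G) :
    ∃ M : ℝ, 1 ≤ M ∧ ∀ t, ∀ x ∈ Ω, |G (t, x)| ≤ M ∧ |Dx G (t, x)| ≤ M ∧ |Dy G (t, x)| ≤ M ∧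
      |Dx (Dx G) (t, x)| ≤ M ∧ |Dx (Dy G) (t, x)| ≤ M ∧ |Dy (Dy G) (t, x)| ≤ M := by
  have sG := S.sG
  obtain ⟨M, h1, h2⟩ := closure_bound hb
    (g := fun x => |G (0, x)| + |Dx G (0, x)| + |Dy G (0, x)| + |Dx (Dx G) (0, x)| +
      |Dx (Dy G) (0, x)| + |Dy (Dy G) (0, x)|) (by fun_prop)
  refine ⟨M, h1, fun t x hx => ?_⟩
  have h3 := (le_abs_self _).trans (h2 x (subset_closure hx))
  have i0 := time_indep sG S.G_t (EuclideanSpace.single (0 : Fin 2) (1 : ℝ))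
  have i1 := time_indep sG S.G_t (EuclideanSpace.single (1 : Fin 2) (1 : ℝ))
  rw [S.G_t t 0, i0 t 0, i1 t 0, time_indep (by fun_prop) i0 _ t 0,
    time_indep (by fun_prop) i1 _ t 0, time_indep (by fun_prop) i1 _ t 0]
  have := abs_nonneg (G (0, x))
  have := abs_nonneg (Dx G (0, x))
  have := abs_nonneg (Dy G (0, x))
  have := abs_nonneg (Dx (Dx G) (0, x))
  have := abs_nonneg (Dx (Dy G) (0, x))
  have := abs_nonneg (Dy (Dy G) (0, x))
  refine ⟨?_, ?_, ?_, ?_, ?_, ?_⟩ <;> linarith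

/-- The Dirichlet energy of the velocity. -/
def zz (Ω : Set E2) (U0 U1 : ℝ × E2 → ℝ) : ℝ → ℝ := J Ω (fun p => gM U0 p + gM U1 p)

/-- The squared `L²` norm of `∂ₜ U`, weighted with the density. -/
def yy (Ω : Set E2) (R U0 U1 : ℝ × E2 → ℝ) : ℝ → ℝ :=
  J Ω (fun p => R p * (Dt U0 p ^ 2 + Dt U1 p ^ 2))

/-- The total (kinetic plus potential) energy. -/
def en (Ω : Set E2) (R U0 U1 G : ℝ × E2 → ℝ) : ℝ → ℝ :=
  J Ω (fun p => 1 / 2 * (R p * (U0 p ^ 2 + U1 p ^ 2)) + R p * G p)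

/-- The energy identity: testing the momentum equation with the velocity. The work of the force is the
rate of change of the potential energy `∫ R G`, because `R` is transported. -/
theorem Sol.energy (hΩ : IsOpen Ω) (hb : Bornology.IsBounded Ω) (S : Sol Ω ν U0 U1 R Q G)
    {t : ℝ} (ht : 0 ≤ t) : HasDerivAt (en Ω R U0 U1 G) (-ν * zz Ω U0 U1 t) t := by
  have hGt := S.dtG
  obtain ⟨s0, s1, sR, sQ, sG, -, mom0, mom1, mass, div, bc0, bc1⟩ := S
  have h := J_deriv hΩ hb
    (g := fun p => 1 / 2 * (R p * (U0 p ^ 2 + U1 p ^ 2)) + R p * G p) (by fun_prop) t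
  suffices key : -ν * zz Ω U0 U1 t = J Ω (Dt (fun p => 1 / 2 * (R p * (U0 p ^ 2 + U1 p ^ 2)) +
      R p * G p)) t by
    rw [key]
    exact h
  unfold zz
  rw [← J_smul]
  refine (J_div_eq hΩ hb
    (W0 := fun p => ν * (U0 p * Dx U0 p + U1 p * Dx U1 p) -
      (1 / 2 * (R p * (U0 p ^ 2 + U1 p ^ 2)) + R p * G p + Q p) * U0 p)
    (W1 := fun p => ν * (U0 p * Dy U0 p + U1 p * Dy U1 p) -
      (1 / 2 * (R p * (U0 p ^ 2 + U1 p ^ 2)) + R p * G p + Q p) * U1 p)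
    (by fun_prop) (by fun_prop)
    (fun x hx => by simp [bc0 t ht x hx, bc1 t ht x hx])
    (fun x hx => by simp [bc0 t ht x hx, bc1 t ht x hx]) (by fun_prop) (by fun_prop)
    (fun x hx => ?_)).symm
  simp (disch := fun_prop) only [dd_mul, dd_add, dd_sub, dd_sq, dd_const]
  unfold gM
  linear_combination (1 / 2 * (U0 (t, x) ^ 2 + U1 (t, x) ^ 2) + G (t, x)) * mass t ht x hx +
    U0 (t, x) * mom0 t ht x hx + U1 (t, x) * mom1 t ht x hx + R (t, x) * hGt (t, x) +
    (1 / 2 * (R (t, x) * (U0 (t, x) ^ 2 + U1 (t, x) ^ 2)) + R (t, x) * G (t, x) + Q (t, x)) *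
      div t ht x hx

theorem zz_nonneg (hΩ : IsOpen Ω) (t : ℝ) : 0 ≤ zz Ω U0 U1 t :=
  J_nonneg hΩ fun _ _ => add_nonneg (gM_nonneg _ _) (gM_nonneg _ _)

theorem yy_nonneg (hΩ : IsOpen Ω) {α : ℝ} (hα : 0 < α) {t : ℝ} (hR : ∀ x ∈ Ω, α ≤ R (t, x)) :
    0 ≤ yy Ω R U0 U1 t :=
  J_nonneg hΩ fun x hx => mul_nonneg (hα.le.trans (hR x hx)) (by positivity)

theorem conv_sq (a b c d : ℝ) : (a * c + b * d) ^ 2 ≤ (a ^ 2 + b ^ 2) * (c ^ 2 + d ^ 2) := by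
  nlinarith [sq_nonneg (a * d - b * c)]

/-- The squared Stokes force `R (∂ₜ U + (U · ∇) U + ∇G)`, with `c0`, `c1` the convective terms and
`V0`, `V1` the time derivatives. -/
theorem force_sq {r α₁ α₂ V0 V1 c0 c1 G0 G1 K g0 g1 M : ℝ} (hα : 0 < α₁) (r1 : α₁ ≤ r)
    (r2 : r ≤ α₂) (b0 : c0 ^ 2 ≤ K * g0) (b1 : c1 ^ 2 ≤ K * g1) (h0 : G0 ^ 2 ≤ M ^ 2)
    (h1 : G1 ^ 2 ≤ M ^ 2) :
    (r * (V0 + c0 + G0)) ^ 2 + (r * (V1 + c1 + G1)) ^ 2 ≤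
      3 * α₂ ^ 2 * (1 / α₁ * (r * (V0 ^ 2 + V1 ^ 2)) + K * (g0 + g1) + 2 * M ^ 2 * 1) := by
  have q : ∀ V c G : ℝ, (r * (V + c + G)) ^ 2 ≤ α₂ ^ 2 * (3 * (V ^ 2 + c ^ 2 + G ^ 2)) := by
    intro V c G
    rw [mul_pow]
    have : r ^ 2 ≤ α₂ ^ 2 := pow_le_pow_left₀ (by linarith) r2 2
    refine mul_le_mul this ?_ (sq_nonneg _) (sq_nonneg _)
    nlinarith [sq_nonneg (V - c), sq_nonneg (V - G), sq_nonneg (c - G)]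
  have q0 := q V0 c0 G0
  have q1 := q V1 c1 G1
  have q2 : V0 ^ 2 + V1 ^ 2 ≤ 1 / α₁ * (r * (V0 ^ 2 + V1 ^ 2)) := by
    rw [← mul_assoc]
    have : 1 ≤ 1 / α₁ * r := by
      rw [one_div, ← div_eq_inv_mul, le_div_iff₀ hα]; linarith
    exact le_mul_of_one_le_left (by positivity) this
  have q3 : V0 ^ 2 + V1 ^ 2 + (c0 ^ 2 + c1 ^ 2) + (G0 ^ 2 + G1 ^ 2) ≤
    1 / α₁ * (r * (V0 ^ 2 + V1 ^ 2)) + K * (g0 + g1) + 2 * M ^ 2 * 1 := by linarith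
  have q4 := mul_le_mul_of_nonneg_left q3 (by positivity : 0 ≤ 3 * α₂ ^ 2)
  linarith

/-- Once `z` is small, the part of the force quadratic in the velocity, `C * (N + z) * z`, is absorbed
into the left-hand side `N`. -/
theorem absorb {N z y C a b α : ℝ} (hC : 0 < C) (ha : 0 ≤ a) (hb : 0 ≤ b) (hN : 0 ≤ N)
    (hz : 0 ≤ z) (hz1 : z ≤ 1) (hy : 0 ≤ y) (hz2 : z ≤ 1 / (6 * α ^ 2 * C))
    (h : N ≤ 3 * α ^ 2 * (a * y + C * (N + z) * z + b)) :
    C * (N + z) ≤ (1 + C * (2 + 6 * α ^ 2 * (a + b))) * (1 + y) := by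
  have h1 : 3 * α ^ 2 * C * z ≤ 1 / 2 := by
    rcases eq_or_ne α 0 with rfl | hα
    · norm_num
    rw [le_div_iff₀ (by positivity)] at hz2
    linarith
  have h2 := mul_le_mul_of_nonneg_right h1 (by linarith : 0 ≤ N + z)
  have h4 : N + z ≤ 2 + 6 * α ^ 2 * (a * y + b) := by linarith
  have h5 : N + z ≤ (2 + 6 * α ^ 2 * (a + b)) * (1 + y) := by
    have e1 : 0 ≤ 6 * α ^ 2 * a := by positivity
    have e2 : 0 ≤ 6 * α ^ 2 * b * y := by positivity
    nlinarith
  have h6 := mul_le_mul_of_nonneg_left h5 hC.le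
  linarith

/-- When the Dirichlet energy is small, the Stokes estimate bounds the velocity and its weighted
Hessian by the acceleration: the convective term is absorbed. -/
theorem Sol.static (d : Dom Ω φ) (hne : Ω.Nonempty) (hν : 0 < ν) (S : Sol Ω ν U0 U1 R Q G)
    {α₁ α₂ : ℝ} (hα : 0 < α₁)
    (hR : ∀ t, 0 ≤ t → ∀ x ∈ Ω, α₁ ≤ R (t, x) ∧ R (t, x) ≤ α₂) :
    ∃ ε C : ℝ, 0 < ε ∧ ε ≤ 1 ∧ 1 ≤ C ∧ ∀ t, 0 ≤ t → zz Ω U0 U1 t ≤ ε →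
      (∀ x ∈ Ω, U0 (t, x) ^ 2 + U1 (t, x) ^ 2 ≤ C * (1 + yy Ω R U0 U1 t)) ∧
      J Ω (fun p => φ p.2 ^ 2 * (hM U0 p + hM U1 p)) t ≤ C * (1 + yy Ω R U0 U1 t) := by
  obtain ⟨C1, hC1, H⟩ := static_est d hne hν
  obtain ⟨M, hM1, hMG⟩ := S.G_bound d.bd
  have hα2 : 0 < α₂ := by
    obtain ⟨x, hx⟩ := hne
    have := hR 0 le_rfl x hx
    linarith
  have hy0 := fun t ht => yy_nonneg (U0 := U0) (U1 := U1) d.op hα (fun x hx => (hR t ht x hx).1)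
  obtain ⟨s0, s1, sR, sQ, sG, -, mom0, mom1, mass, div, bc0, bc1⟩ := S
  set m := ∫ x in Ω, (1 : ℝ) with hm
  have hm0 : 0 ≤ m := int_nonneg d.op fun _ _ => zero_le_one
  refine ⟨min 1 (1 / (6 * α₂ ^ 2 * C1)), 1 + C1 * (2 + 6 * α₂ ^ 2 * (1 / α₁ + 2 * M ^ 2 * m)),
    by positivity, min_le_left _ _, by simp; positivity, fun t ht hz => ?_⟩
  have hz1 := hz.trans (min_le_left _ _)
  have hz2 := hz.trans (min_le_right _ _)
  have hz0 : 0 ≤ zz Ω U0 U1 t := zz_nonneg d.op t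
  have hy0 := hy0 t ht
  have H1 := H (fun x => U0 (t, x)) (fun x => U1 (t, x)) (fun x => Q (t, x))
    (fun x => R (t, x) * (Dt U0 (t, x) + (U0 (t, x) * Dx U0 (t, x) + U1 (t, x) * Dy U0 (t, x))
      + Dx G (t, x)))
    (fun x => R (t, x) * (Dt U1 (t, x) + (U0 (t, x) * Dx U1 (t, x) + U1 (t, x) * Dy U1 (t, x))
      + Dy G (t, x)))
    (by fun_prop) (by fun_prop) (by fun_prop) (by fun_prop) (by fun_prop)
    (fun x hx => by rw [slice s0, slice s1]; exact div t ht x hx)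
    (bc0 t ht) (bc1 t ht)
    (fun x hx => by rw [lap_slice s0, slice sQ]; linarith [mom0 t ht x hx])
    (fun x hx => by rw [lap_slice s1, slice sQ]; linarith [mom1 t ht x hx])
  simp only [gr_slice s0, gr_slice s1, hs_slice s0, hs_slice s1] at H1
  set N := ∫ x in Ω, ((R (t, x) * (Dt U0 (t, x) + (U0 (t, x) * Dx U0 (t, x) +
    U1 (t, x) * Dy U0 (t, x)) + Dx G (t, x))) ^ 2 + (R (t, x) * (Dt U1 (t, x) +
    (U0 (t, x) * Dx U1 (t, x) + U1 (t, x) * Dy U1 (t, x)) + Dy G (t, x))) ^ 2) with hN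
  change (J Ω (fun p => φ p.2 ^ 2 * (hM U0 p + hM U1 p)) t ≤ C1 * (N + zz Ω U0 U1 t)) ∧
    ∀ x ∈ Ω, U0 (t, x) ^ 2 + U1 (t, x) ^ 2 ≤ C1 * (N + zz Ω U0 U1 t) at H1
  obtain ⟨HS, HU⟩ := H1
  set K := C1 * (N + zz Ω U0 U1 t) with hK
  have hNle : N ≤ 3 * α₂ ^ 2 * (1 / α₁ * yy Ω R U0 U1 t + K * zz Ω U0 U1 t + 2 * M ^ 2 * m) := by
    have e : 3 * α₂ ^ 2 * (1 / α₁ * yy Ω R U0 U1 t + K * zz Ω U0 U1 t + 2 * M ^ 2 * m) =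
        ∫ x in Ω, 3 * α₂ ^ 2 * (1 / α₁ * (R (t, x) * (Dt U0 (t, x) ^ 2 + Dt U1 (t, x) ^ 2)) +
          K * (gM U0 (t, x) + gM U1 (t, x)) + 2 * M ^ 2 * 1) := by
      rw [int_smul, int_add d.bd (by fun_prop) (by fun_prop),
        int_add d.bd (by fun_prop) (by fun_prop), int_smul, int_smul, int_smul]
      rfl
    rw [e, hN]
    refine int_le d.op d.bd (by fun_prop) (by fun_prop) fun x hx => ?_
    obtain ⟨r1, r2⟩ := hR t ht x hx
    obtain ⟨-, g1, g2, -⟩ := hMG t x hx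
    have g1 := sq_le_of_abs g1
    have g2 := sq_le_of_abs g2
    have hu := HU x hx
    have a0 := conv_sq (U0 (t, x)) (U1 (t, x)) (Dx U0 (t, x)) (Dy U0 (t, x))
    have a1 := conv_sq (U0 (t, x)) (U1 (t, x)) (Dx U1 (t, x)) (Dy U1 (t, x))
    have b0 := a0.trans (mul_le_mul_of_nonneg_right hu (gM_nonneg U0 (t, x)))
    have b1 := a1.trans (mul_le_mul_of_nonneg_right hu (gM_nonneg U1 (t, x)))
    exact force_sq hα r1 r2 b0 b1 g1 g2
  have hN0 : 0 ≤ N := int_nonneg d.op fun x _ => by positivity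
  have hKC : K ≤ (1 + C1 * (2 + 6 * α₂ ^ 2 * (1 / α₁ + 2 * M ^ 2 * m))) *
      (1 + yy Ω R U0 U1 t) := by
    exact absorb hC1 (by positivity) (by positivity) hN0 hz0 hz1 hy0 hz2 hNle
  exact ⟨fun x hx => (HU x hx).trans hKC, HS.trans hKC⟩

/-- Testing the momentum equation with the acceleration. -/
theorem Sol.step2 (d : Dom Ω φ) (hne : Ω.Nonempty) (S : Sol Ω ν U0 U1 R Q G)
    {α₁ α₂ ε C : ℝ} (hα : 0 < α₁)
    (hR : ∀ t, 0 ≤ t → ∀ x ∈ Ω, α₁ ≤ R (t, x) ∧ R (t, x) ≤ α₂) (hε : 0 < ε)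
    (hC : 1 ≤ C) (HU : ∀ t, 0 ≤ t → zz Ω U0 U1 t ≤ ε →
      (∀ x ∈ Ω, U0 (t, x) ^ 2 + U1 (t, x) ^ 2 ≤ C * (1 + yy Ω R U0 U1 t))) :
    ∃ ε0 C5 : ℝ, 0 < ε0 ∧ ε0 ≤ ε ∧ 0 ≤ C5 ∧ ∀ t, 0 < t → zz Ω U0 U1 t ≤ ε0 →
      1 / 4 * yy Ω R U0 U1 t + ν / 2 * J Ω (Dt (fun p => gM U0 p + gM U1 p)) t ≤ C5 := by
  obtain ⟨M, hM1, hMG⟩ := S.G_bound d.bd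
  have hα2 : 0 < α₂ := by
    obtain ⟨x, hx⟩ := hne
    have := hR 0 le_rfl x hx
    linarith
  have hy0 := fun t ht => yy_nonneg (U0 := U0) (U1 := U1) d.op hα (fun x hx => (hR t ht x hx).1)
  obtain ⟨s0, s1, sR, sQ, sG, -, mom0, mom1, mass, div, bc0, bc1⟩ := S
  set m := ∫ x in Ω, (1 : ℝ) with hm
  have hm0 : 0 ≤ m := int_nonneg d.op fun _ _ => zero_le_one
  -- with this `ε0` the convective term costs at most `(1 + y) / 4`, see `h1` below
  refine ⟨min ε (1 / (4 * α₂ * C)), 1 / 4 + 2 * α₂ * M ^ 2 * m, by positivity, min_le_left _ _,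
    by positivity, fun t ht hz => ?_⟩
  have hz1 := hz.trans (min_le_left _ _)
  have hz2 := hz.trans (min_le_right _ _)
  have hz0 : 0 ≤ zz Ω U0 U1 t := zz_nonneg d.op t
  have hy0 := hy0 t ht.le
  have HU := HU t ht.le hz1
  set K := C * (1 + yy Ω R U0 U1 t) with hK
  have h := J_div_le d.op d.bd (t := t)
    (W0 := fun p => ν * (Dt U0 p * Dx U0 p + Dt U1 p * Dx U1 p) - Q p * Dt U0 p)
    (W1 := fun p => ν * (Dt U0 p * Dy U0 p + Dt U1 p * Dy U1 p) - Q p * Dt U1 p)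
    (G := fun p => 1 / 2 * (R p * (Dt U0 p ^ 2 + Dt U1 p ^ 2)) +
      ν / 2 * Dt (fun p => gM U0 p + gM U1 p) p)
    (H := fun p => α₂ * K * (gM U0 p + gM U1 p) + 2 * α₂ * M ^ 2 * 1)
    (by fun_prop) (by fun_prop)
    (fun x hx => by
      simp [dt_eq_zero_of_pos s0 (fun t ht => bc0 t ht x hx) t ht,
        dt_eq_zero_of_pos s1 (fun t ht => bc1 t ht x hx) t ht])
    (fun x hx => by
      simp [dt_eq_zero_of_pos s0 (fun t ht => bc0 t ht x hx) t ht,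
        dt_eq_zero_of_pos s1 (fun t ht => bc1 t ht x hx) t ht])
    (by fun_prop) (by fun_prop) (fun x hx => by
      have dv := dd_eq_zero_of_pos (g := fun p => Dx U0 p + Dy U1 p) d.op div ((1 : ℝ), (0 : E2)) t ht x hx
      have c1 : ∀ e : E2, Dt (dd ((0 : ℝ), e) U0) (t, x) = dd ((0 : ℝ), e) (Dt U0) (t, x) :=
        fun e => dd_comm s0 _
      have c2 : ∀ e : E2, Dt (dd ((0 : ℝ), e) U1) (t, x) = dd ((0 : ℝ), e) (Dt U1) (t, x) :=
        fun e => dd_comm s1 _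
      rw [dd_add (by fun_prop) (by fun_prop), c1, c2] at dv
      rw [dd_add (by fun_prop) (by fun_prop)]
      have eg : ∀ {u : ℝ × E2 → ℝ}, ContDiff ℝ ∞ u → Dt (gM u) (t, x) =
          2 * Dx u (t, x) * Dt (Dx u) (t, x) + 2 * Dy u (t, x) * Dt (Dy u) (t, x) := by
        intro u hu
        have : gM u = fun p => Dx u p ^ 2 + Dy u p ^ 2 := rfl
        rw [this, dd_add (by fun_prop) (by fun_prop), dd_sq (by fun_prop), dd_sq (by fun_prop)]
      rw [eg s0, eg s1, c1, c1, c2, c2]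
      simp (disch := fun_prop) only [dd_mul, dd_add, dd_sub, dd_const]
      obtain ⟨r1, r2⟩ := hR t ht.le x hx
      obtain ⟨-, g1, g2, -⟩ := hMG t x hx
      have g1 := sq_le_of_abs g1
      have g2 := sq_le_of_abs g2
      have hu := HU x hx
      have a0 := conv_sq (U0 (t, x)) (U1 (t, x)) (Dx U0 (t, x)) (Dy U0 (t, x))
      have a1 := conv_sq (U0 (t, x)) (U1 (t, x)) (Dx U1 (t, x)) (Dy U1 (t, x))
      have b0 : _ ≤ K * gM U0 (t, x) := a0.trans (mul_le_mul_of_nonneg_right hu (gM_nonneg U0 (t, x)))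
      have b1 : _ ≤ K * gM U1 (t, x) := a1.trans (mul_le_mul_of_nonneg_right hu (gM_nonneg U1 (t, x)))
      have m0 := mom0 t ht.le x hx
      have m1 := mom1 t ht.le x hx
      generalize U0 (t, x) * Dx U0 (t, x) + U1 (t, x) * Dy U0 (t, x) = c0 at *
      generalize U0 (t, x) * Dx U1 (t, x) + U1 (t, x) * Dy U1 (t, x) = c1 at *
      generalize Dx G (t, x) = G0 at *
      generalize Dy G (t, x) = G1 at *
      have key : ∀ V c g : ℝ, - (R (t, x) * (V * (c + g))) ≤ 1 / 2 * (R (t, x) * V ^ 2) +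
          α₂ * (c ^ 2 + g ^ 2) := by
        intro V c g
        have y1 : 0 ≤ R (t, x) * (V + (c + g)) ^ 2 :=
          mul_nonneg (by linarith) (sq_nonneg _)
        have y2 : 0 ≤ R (t, x) * (c - g) ^ 2 := mul_nonneg (by linarith) (sq_nonneg _)
        have y3 : R (t, x) * (c ^ 2 + g ^ 2) ≤ α₂ * (c ^ 2 + g ^ 2) := by gcongr
        nlinarith
      have k0 := key (Dt U0 (t, x)) c0 G0
      have k1 := key (Dt U1 (t, x)) c1 G1
      have k2 : α₂ * (c0 ^ 2 + c1 ^ 2 + G0 ^ 2 + G1 ^ 2) ≤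
          α₂ * (K * (gM U0 (t, x) + gM U1 (t, x)) + 2 * M ^ 2) := by
        apply mul_le_mul_of_nonneg_left _ hα2.le
        linarith
      have dv' := congrArg (fun r => Q (t, x) * r) dv
      have m0' := congrArg (fun r => Dt U0 (t, x) * r) m0
      have m1' := congrArg (fun r => Dt U1 (t, x) * r) m1
      simp only [mul_zero] at dv' m0' m1'
      linarith)
  have e1 : J Ω (fun p => 1 / 2 * (R p * (Dt U0 p ^ 2 + Dt U1 p ^ 2)) +
      ν / 2 * Dt (fun p => gM U0 p + gM U1 p) p) t = 1 / 2 * yy Ω R U0 U1 t +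
      ν / 2 * J Ω (Dt (fun p => gM U0 p + gM U1 p)) t := by
    rw [J_add d.bd (by fun_prop) (by fun_prop), J_smul, J_smul]; rfl
  have e2 : J Ω (fun p => α₂ * K * (gM U0 p + gM U1 p) + 2 * α₂ * M ^ 2 * 1) t =
      α₂ * K * zz Ω U0 U1 t + 2 * α₂ * M ^ 2 * m := by
    rw [J_add d.bd (by fun_prop) (by fun_prop), J_smul, J_smul]; rfl
  rw [e1, e2] at h
  have h1 : α₂ * K * zz Ω U0 U1 t ≤ 1 / 4 * (1 + yy Ω R U0 U1 t) := by
    rw [le_div_iff₀ (by positivity)] at hz2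
    have := mul_le_mul_of_nonneg_right hz2 (by linarith : 0 ≤ 1 + yy Ω R U0 U1 t)
    rw [hK]; linarith
  linarith

/-! ### Time derivative of the momentum equation -/

/-- The convective derivative `(U · ∇) w`. -/
def cv (U0 U1 w : ℝ × E2 → ℝ) (p : ℝ × E2) : ℝ := U0 p * Dx w p + U1 p * Dy w p

@[fun_prop]
theorem cv_contDiff {w : ℝ × E2 → ℝ} (h0 : ContDiff ℝ ∞ U0) (h1 : ContDiff ℝ ∞ U1)
    (hw : ContDiff ℝ ∞ w) : ContDiff ℝ ∞ (cv U0 U1 w) := by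
  unfold cv; fun_prop

@[fun_prop]
theorem cv_cont {w : ℝ × E2 → ℝ} (h0 : ContDiff ℝ ∞ U0) (h1 : ContDiff ℝ ∞ U1)
    (hw : ContDiff ℝ ∞ w) : Continuous (cv U0 U1 w) := (cv_contDiff h0 h1 hw).continuous

/-- The factor multiplying `∂ₜ R` when the time derivative of the momentum equation is tested with
`2 ∂ₜ U`, up to sign. -/
def qq (U0 U1 G : ℝ × E2 → ℝ) (p : ℝ × E2) : ℝ :=
  Dt U0 p ^ 2 + Dt U1 p ^ 2 +
    2 * (Dt U0 p * (cv U0 U1 U0 p + Dx G p) + Dt U1 p * (cv U0 U1 U1 p + Dy G p))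

@[fun_prop]
theorem qq_contDiff (h0 : ContDiff ℝ ∞ U0) (h1 : ContDiff ℝ ∞ U1)
    (hG : ContDiff ℝ ∞ G) : ContDiff ℝ ∞ (qq U0 U1 G) := by
  unfold qq; fun_prop

@[fun_prop]
theorem qq_cont (h0 : ContDiff ℝ ∞ U0) (h1 : ContDiff ℝ ∞ U1)
    (hG : ContDiff ℝ ∞ G) : Continuous (qq U0 U1 G) := (qq_contDiff h0 h1 hG).continuous

theorem dt_comm {w : ℝ × E2 → ℝ} (hw : ContDiff ℝ ∞ w) (e : E2) :
    Dt (dd ((0 : ℝ), e) w) = dd ((0 : ℝ), e) (Dt w) := funext fun _ => dd_comm hw _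

theorem dt_cv {w : ℝ × E2 → ℝ} (h0 : ContDiff ℝ ∞ U0) (h1 : ContDiff ℝ ∞ U1)
    (hw : ContDiff ℝ ∞ w) (p : ℝ × E2) : Dt (cv U0 U1 w) p =
      Dt U0 p * Dx w p + Dt U1 p * Dy w p + (U0 p * Dx (Dt w) p + U1 p * Dy (Dt w) p) := by
  have : cv U0 U1 w = fun p => U0 p * Dx w p + U1 p * Dy w p := rfl
  rw [this, dd_add (by fun_prop) (by fun_prop), dd_mul (by fun_prop) (by fun_prop),
    dd_mul (by fun_prop) (by fun_prop), dt_comm hw, dt_comm hw]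
  ring

theorem dd_cv {w : ℝ × E2 → ℝ} (h0 : ContDiff ℝ ∞ U0) (h1 : ContDiff ℝ ∞ U1)
    (hw : ContDiff ℝ ∞ w) (e p : ℝ × E2) : dd e (cv U0 U1 w) p =
      dd e U0 p * Dx w p + dd e U1 p * Dy w p + (U0 p * dd e (Dx w) p + U1 p * dd e (Dy w) p) := by
  have : cv U0 U1 w = fun p => U0 p * Dx w p + U1 p * Dy w p := rfl
  rw [this, dd_add (by fun_prop) (by fun_prop), dd_mul (by fun_prop) (by fun_prop),
    dd_mul (by fun_prop) (by fun_prop)]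
  ring

theorem dd_qq (h0 : ContDiff ℝ ∞ U0) (h1 : ContDiff ℝ ∞ U1) (hG : ContDiff ℝ ∞ G)
    (e p : ℝ × E2) : dd e (qq U0 U1 G) p =
      2 * (Dt U0 p * dd e (Dt U0) p + Dt U1 p * dd e (Dt U1) p) +
      2 * (dd e (Dt U0) p * (cv U0 U1 U0 p + Dx G p) + dd e (Dt U1) p * (cv U0 U1 U1 p + Dy G p)) +
      2 * (Dt U0 p * (dd e (cv U0 U1 U0) p + dd e (Dx G) p) +
        Dt U1 p * (dd e (cv U0 U1 U1) p + dd e (Dy G) p)) := by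
  have : qq U0 U1 G = fun p => Dt U0 p ^ 2 + Dt U1 p ^ 2 +
    2 * (Dt U0 p * (cv U0 U1 U0 p + Dx G p) + Dt U1 p * (cv U0 U1 U1 p + Dy G p)) := rfl
  rw [this]
  simp (disch := fun_prop) only [dd_mul, dd_add, dd_sq, dd_const]
  ring

/-- The time derivative of the momentum equation, tested with `2 ∂ₜ U`: the rate of change of
`R |∂ₜ U|²` is a divergence plus controllable terms. -/
theorem Sol.accel (hΩ : IsOpen Ω) (S : Sol Ω ν U0 U1 R Q G) {t : ℝ} (ht : 0 < t)
    {x : E2} (hx : x ∈ Ω) :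
    Dt (fun p => R p * (Dt U0 p ^ 2 + Dt U1 p ^ 2)) (t, x) =
      Dx (fun p => 2 * ν * (Dt U0 p * Dx (Dt U0) p + Dt U1 p * Dx (Dt U1) p) -
        2 * (Dt U0 p * Dt Q p) + R p * U0 p * qq U0 U1 G p) (t, x) +
      Dy (fun p => 2 * ν * (Dt U0 p * Dy (Dt U0) p + Dt U1 p * Dy (Dt U1) p) -
        2 * (Dt U1 p * Dt Q p) + R p * U1 p * qq U0 U1 G p) (t, x) +
      (-(2 * ν) * (gM (Dt U0) (t, x) + gM (Dt U1) (t, x)) -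
        R (t, x) * (U0 (t, x) * Dx (qq U0 U1 G) (t, x) + U1 (t, x) * Dy (qq U0 U1 G) (t, x)) -
        2 * R (t, x) * (Dt U0 (t, x) * Dt (cv U0 U1 U0) (t, x) +
          Dt U1 (t, x) * Dt (cv U0 U1 U1) (t, x))) := by
  have hGt : Dt G = fun _ => 0 := funext S.dtG
  obtain ⟨s0, s1, sR, sQ, sG, -, mom0, mom1, mass, div, bc0, bc1⟩ := S
  have dv := dd_eq_zero_of_pos (g := fun p => Dx U0 p + Dy U1 p) hΩ div ((1 : ℝ), (0 : E2)) t ht x hx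
  have m0 := dd_eq_zero_of_pos (g := fun p => R p * (Dt U0 p + cv U0 U1 U0 p + Dx G p) -
    ν * (Dx (Dx U0) p + Dy (Dy U0) p) + Dx Q p) hΩ mom0 ((1 : ℝ), (0 : E2)) t ht x hx
  have m1 := dd_eq_zero_of_pos (g := fun p => R p * (Dt U1 p + cv U0 U1 U1 p + Dy G p) -
    ν * (Dx (Dx U1) p + Dy (Dy U1) p) + Dy Q p) hΩ mom1 ((1 : ℝ), (0 : E2)) t ht x hx
  have ms := mass t ht.le x hx
  have d0 := div t ht.le x hx
  simp (disch := fun_prop) only [dd_mul, dd_add, dd_sub, dd_const, dt_comm, hGt] at dv m0 m1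
  simp (disch := fun_prop) only [dd_mul, dd_add, dd_sub, dd_sq, dd_const]
  have eq : qq U0 U1 G (t, x) = Dt U0 (t, x) ^ 2 + Dt U1 (t, x) ^ 2 +
    2 * (Dt U0 (t, x) * (cv U0 U1 U0 (t, x) + Dx G (t, x)) +
      Dt U1 (t, x) * (cv U0 U1 U1 (t, x) + Dy G (t, x))) := rfl
  unfold gM
  linear_combination 2 * Dt U0 (t, x) * m0 + 2 * Dt U1 (t, x) * m1 -
    qq U0 U1 G (t, x) * ms - R (t, x) * qq U0 U1 G (t, x) * d0 + 2 * Dt Q (t, x) * dv +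
    Dt R (t, x) * eq

theorem abs_pair {a b c d X : ℝ} (hb : |b| ≤ X) (hd : |d| ≤ X) :
    |a * b + c * d| ≤ (|a| + |c|) * X := by
  have h1 := abs_add_le (a * b) (c * d)
  rw [abs_mul, abs_mul] at h1
  have h2 := mul_le_mul_of_nonneg_left hb (abs_nonneg a)
  have h3 := mul_le_mul_of_nonneg_left hd (abs_nonneg c)
  linarith

theorem dir_bound {V0 V1 w0 w1 c0 c1 b0 b1 A B : ℝ} (h0 : |c0| ≤ A) (h1 : |c1| ≤ A)
    (k0 : |b0| ≤ B) (k1 : |b1| ≤ B) :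
    |2 * (V0 * w0 + V1 * w1) + 2 * (w0 * c0 + w1 * c1) + 2 * (V0 * b0 + V1 * b1)| ≤
      2 * ((|V0| + |V1|) * (|w0| + |w1|)) + 2 * ((|w0| + |w1|) * A) + 2 * ((|V0| + |V1|) * B) := by
  have e1 := abs_pair (a := V0) (c := V1) (b := w0) (d := w1) (X := |w0| + |w1|)
    (by linarith [abs_nonneg w1]) (by linarith [abs_nonneg w0])
  have e2 := abs_pair (a := w0) (c := w1) h0 h1
  have e3 := abs_pair (a := V0) (c := V1) k0 k1
  rw [abs_le] at *
  constructor <;> linarith [e1.1, e1.2, e2.1, e2.2, e3.1, e3.2]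

/-- Sum of the absolute values of the second space derivatives of the velocity. -/
def hA (U0 U1 : ℝ × E2 → ℝ) (p : ℝ × E2) : ℝ :=
  |Dx (Dx U0) p| + |Dx (Dy U0) p| + |Dy (Dy U0) p| +
    (|Dx (Dx U1) p| + |Dx (Dy U1) p| + |Dy (Dy U1) p|)

@[fun_prop]
theorem hA_cont (h0 : ContDiff ℝ ∞ U0) (h1 : ContDiff ℝ ∞ U1) : Continuous (hA U0 U1) := by
  unfold hA; fun_prop

theorem hA_sq (p : ℝ × E2) : hA U0 U1 p ^ 2 ≤ 6 * (hM U0 p + hM U1 p) := by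
  unfold hA hM
  rw [← sq_abs (Dx (Dx U0) p), ← sq_abs (Dx (Dy U0) p), ← sq_abs (Dy (Dy U0) p),
    ← sq_abs (Dx (Dx U1) p), ← sq_abs (Dx (Dy U1) p), ← sq_abs (Dy (Dy U1) p)]
  generalize |Dx (Dx U0) p| = a
  generalize |Dx (Dy U0) p| = b
  generalize |Dy (Dy U0) p| = c
  generalize |Dx (Dx U1) p| = d
  generalize |Dx (Dy U1) p| = e
  generalize |Dy (Dy U1) p| = f
  linarith [sq_nonneg (a - b), sq_nonneg (a - c), sq_nonneg (a - d), sq_nonneg (a - e),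
    sq_nonneg (a - f), sq_nonneg (b - c), sq_nonneg (b - d), sq_nonneg (b - e),
    sq_nonneg (b - f), sq_nonneg (c - d), sq_nonneg (c - e), sq_nonneg (c - f),
    sq_nonneg (d - e), sq_nonneg (d - f), sq_nonneg (e - f)]

theorem hA_nonneg (p : ℝ × E2) : 0 ≤ hA U0 U1 p := by unfold hA; positivity

/-- Sum of the absolute values of the first space derivatives of a planar field. -/
def gA (U0 U1 : ℝ × E2 → ℝ) (p : ℝ × E2) : ℝ :=
  |Dx U0 p| + |Dy U0 p| + (|Dx U1 p| + |Dy U1 p|)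

theorem gA_sq (p : ℝ × E2) : gA U0 U1 p ^ 2 ≤ 4 * (gM U0 p + gM U1 p) := by
  unfold gA gM
  rw [← sq_abs (Dx U0 p), ← sq_abs (Dy U0 p), ← sq_abs (Dx U1 p), ← sq_abs (Dy U1 p)]
  generalize |Dx U0 p| = a
  generalize |Dy U0 p| = b
  generalize |Dx U1 p| = c
  generalize |Dy U1 p| = d
  linarith [sq_nonneg (a - b), sq_nonneg (a - c), sq_nonneg (a - d), sq_nonneg (b - c),
    sq_nonneg (b - d), sq_nonneg (c - d)]

theorem gA_nonneg (p : ℝ × E2) : 0 ≤ gA U0 U1 p := by unfold gA; positivity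

theorem cv_le {w : ℝ × E2 → ℝ} {κ : ℝ} {p : ℝ × E2} (h0 : |U0 p| ≤ κ) (h1 : |U1 p| ≤ κ) :
    |cv U0 U1 w p| ≤ κ * (|Dx w p| + |Dy w p|) := by
  have := abs_pair (a := Dx w p) (c := Dy w p) h0 h1
  unfold cv
  rw [mul_comm (U0 p), mul_comm (U1 p)]
  linarith

set_option maxHeartbeats 1000000 in
/-- Pointwise bound of the terms produced by `Sol.accel`. -/
theorem accel_le (s0 : ContDiff ℝ ∞ U0) (s1 : ContDiff ℝ ∞ U1) (sG : ContDiff ℝ ∞ G) {p : ℝ × E2}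
    {κ M : ℝ} (h0 : |U0 p| ≤ κ) (h1 : |U1 p| ≤ κ) (G0 : |Dx G p| ≤ M) (G1 : |Dy G p| ≤ M)
    (G00 : |Dx (Dx G) p| ≤ M) (G01 : |Dx (Dy G) p| ≤ M) (G11 : |Dy (Dy G) p| ≤ M)
    {v w g h : ℝ} (hv : v = |Dt U0 p| + |Dt U1 p|) (hw : w = gA (Dt U0) (Dt U1) p)
    (hg : g = gA U0 U1 p) (hh : h = hA U0 U1 p) :
    |U0 p * Dx (qq U0 U1 G) p + U1 p * Dy (qq U0 U1 G) p| +
      2 * |Dt U0 p * Dt (cv U0 U1 U0) p + Dt U1 p * Dt (cv U0 U1 U1) p| ≤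
    4 * κ * v * w + 2 * κ ^ 2 * g * w + 2 * κ * M * w + 4 * κ * v * g ^ 2 + 4 * κ ^ 2 * v * h +
      4 * κ * M * v + 2 * v ^ 2 * g := by
  have hκ : 0 ≤ κ := (abs_nonneg _).trans h0
  have hv0 : 0 ≤ v := by rw [hv]; positivity
  have hg0 : 0 ≤ g := by rw [hg]; exact gA_nonneg _
  have n1 := abs_nonneg (Dx U0 p)
  have n2 := abs_nonneg (Dy U0 p)
  have n3 := abs_nonneg (Dx U1 p)
  have n4 := abs_nonneg (Dy U1 p)
  have l1 := abs_nonneg (Dx (Dt U0) p)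
  have l2 := abs_nonneg (Dy (Dt U0) p)
  have l3 := abs_nonneg (Dx (Dt U1) p)
  have l4 := abs_nonneg (Dy (Dt U1) p)
  have k1 := abs_nonneg (Dx (Dx U0) p)
  have k2 := abs_nonneg (Dx (Dy U0) p)
  have k3 := abs_nonneg (Dy (Dy U0) p)
  have k4 := abs_nonneg (Dx (Dx U1) p)
  have k5 := abs_nonneg (Dx (Dy U1) p)
  have k6 := abs_nonneg (Dy (Dy U1) p)
  have eg : g = |Dx U0 p| + |Dy U0 p| + (|Dx U1 p| + |Dy U1 p|) := hg
  have ew : w = |Dx (Dt U0) p| + |Dy (Dt U0) p| + (|Dx (Dt U1) p| + |Dy (Dt U1) p|) := hw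
  have eh : h = |Dx (Dx U0) p| + |Dx (Dy U0) p| + |Dy (Dy U0) p| +
    (|Dx (Dx U1) p| + |Dx (Dy U1) p| + |Dy (Dy U1) p|) := hh
  have y0 : Dy (Dx U0) p = Dx (Dy U0) p := dd_comm s0 _
  have y1 : Dy (Dx U1) p = Dx (Dy U1) p := dd_comm s1 _
  have yG : Dy (Dx G) p = Dx (Dy G) p := dd_comm sG _
  have hA0 : |cv U0 U1 U0 p + Dx G p| ≤ κ * g + M :=
    (abs_add_le _ _).trans (add_le_add ((cv_le h0 h1).trans
      (mul_le_mul_of_nonneg_left (by linarith) hκ)) G0)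
  have hA1 : |cv U0 U1 U1 p + Dy G p| ≤ κ * g + M :=
    (abs_add_le _ _).trans (add_le_add ((cv_le h0 h1).trans
      (mul_le_mul_of_nonneg_left (by linarith) hκ)) G1)
  have aux : ∀ {a b c d e f m : ℝ}, |a| + |b| ≤ g → |c| ≤ g → |d| ≤ g → |e| + |f| ≤ h → |m| ≤ M →
      |a * c + b * d + (U0 p * e + U1 p * f) + m| ≤ g ^ 2 + κ * h + M := by
    intro a b c d e f m hab hc hd hef hm
    have e1 := (abs_pair (a := a) (c := b) hc hd).trans (mul_le_mul_of_nonneg_right hab hg0)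
    have e2 := (abs_pair (a := e) (c := f) h0 h1).trans (mul_le_mul_of_nonneg_right hef hκ)
    have e3 := (abs_add_le (a * c + b * d + (U0 p * e + U1 p * f)) m)
    have e4 := (abs_add_le (a * c + b * d) (U0 p * e + U1 p * f))
    rw [mul_comm e, mul_comm f] at e2
    nlinarith
  have qx := dir_bound (V0 := Dt U0 p) (V1 := Dt U1 p) (w0 := Dx (Dt U0) p) (w1 := Dx (Dt U1) p)
    hA0 hA1 (b0 := Dx (cv U0 U1 U0) p + Dx (Dx G) p) (b1 := Dx (cv U0 U1 U1) p + Dx (Dy G) p)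
    (B := g ^ 2 + κ * h + M)
    (by rw [dd_cv s0 s1 s0]; exact aux (by linarith) (by linarith) (by linarith) (by linarith) G00)
    (by rw [dd_cv s0 s1 s1]; exact aux (by linarith) (by linarith) (by linarith) (by linarith) G01)
  have qy := dir_bound (V0 := Dt U0 p) (V1 := Dt U1 p) (w0 := Dy (Dt U0) p) (w1 := Dy (Dt U1) p)
    hA0 hA1 (b0 := Dy (cv U0 U1 U0) p + Dy (Dx G) p) (b1 := Dy (cv U0 U1 U1) p + Dy (Dy G) p)
    (B := g ^ 2 + κ * h + M)
    (by rw [dd_cv s0 s1 s0, y0, yG]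
        exact aux (by linarith) (by linarith) (by linarith) (by linarith) G01)
    (by rw [dd_cv s0 s1 s1, y1]
        exact aux (by linarith) (by linarith) (by linarith) (by linarith) G11)
  rw [← dd_qq s0 s1 sG, ← hv] at qx qy
  have e1 := abs_pair (a := Dx (qq U0 U1 G) p) (c := Dy (qq U0 U1 G) p) h0 h1
  rw [mul_comm _ (U0 p), mul_comm _ (U1 p)] at e1
  have aux2 : ∀ {c d e f : ℝ}, |c| ≤ g → |d| ≤ g → |e| + |f| ≤ w →
      |Dt U0 p * c + Dt U1 p * d + (U0 p * e + U1 p * f)| ≤ v * g + κ * w := by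
    intro c d e f hc hd hef
    have e1 := (abs_pair (a := Dt U0 p) (c := Dt U1 p) hc hd)
    have e2 := (abs_pair (a := e) (c := f) h0 h1).trans (mul_le_mul_of_nonneg_right hef hκ)
    have e4 := (abs_add_le (Dt U0 p * c + Dt U1 p * d) (U0 p * e + U1 p * f))
    rw [mul_comm e, mul_comm f] at e2
    rw [← hv] at e1
    linarith
  have e2 := abs_pair (a := Dt U0 p) (c := Dt U1 p) (X := v * g + κ * w)
    (b := Dt (cv U0 U1 U0) p) (d := Dt (cv U0 U1 U1) p)
    (by rw [dt_cv s0 s1 s0]; exact aux2 (by linarith) (by linarith) (by linarith))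
    (by rw [dt_cv s0 s1 s1]; exact aux2 (by linarith) (by linarith) (by linarith))
  rw [← hv] at e2
  have e3 : |Dx (qq U0 U1 G) p| + |Dy (qq U0 U1 G) p| ≤
      2 * (v * w) + 2 * (w * (κ * g + M)) + 4 * (v * (g ^ 2 + κ * h + M)) := by
    rw [ew]; linarith
  have e4 := mul_le_mul_of_nonneg_right e3 hκ
  linarith

/-- `accel_le` after Young's inequality; the products of acceleration with derivatives of the
velocity that are left are the ones handled by Hardy's inequality. -/
theorem accel_young {α κ M δ s v w g h b2 g2 v0 v1 : ℝ} (hα : 0 ≤ α) (hκ : 0 ≤ κ) (hδ : 0 < δ)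
    (hs : 0 < s) (hv : v = |v0| + |v1|) (hw : w ^ 2 ≤ 4 * b2) (hg : g ^ 2 ≤ 4 * g2) :
    α * (4 * κ * v * w + 2 * κ ^ 2 * g * w + 2 * κ * M * w + 4 * κ * v * g ^ 2 +
      4 * κ ^ 2 * v * h + 4 * κ * M * v + 2 * v ^ 2 * g) ≤
    12 * δ * b2 + (1 / δ * (32 * α ^ 2 * κ ^ 2) + 2) * (v0 ^ 2 + v1 ^ 2) +
      (1 / δ * (16 * α ^ 2 * κ ^ 4) + 1 / s * (16 * α ^ 2)) * g2 +
      (1 / δ * (4 * α ^ 2 * κ ^ 2 * M ^ 2) + 16 * α ^ 2 * κ ^ 2 * M ^ 2) +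
      (|v0 * (16 * α * κ * g2 + 4 * α * κ ^ 2 * h)| + |v1 * (16 * α * κ * g2 + 4 * α * κ ^ 2 * h)|) +
      8 * s * (v0 ^ 4 + v1 ^ 4) := by
  have hv0 : 0 ≤ v := by rw [hv]; positivity
  have hδ' : 0 < 1 / δ := by positivity
  have hs' : 0 < 1 / s := by positivity
  have hv2 : v ^ 2 ≤ 2 * (v0 ^ 2 + v1 ^ 2) := by
    rw [hv, ← sq_abs v0, ← sq_abs v1]; linarith [sq_nonneg (|v0| - |v1|)]
  have hv4 : (v ^ 2) ^ 2 ≤ 8 * (v0 ^ 4 + v1 ^ 4) := by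
    have := pow_le_pow_left₀ (sq_nonneg v) hv2 2
    linarith [sq_nonneg (v0 ^ 2 - v1 ^ 2)]
  have y1 := young hδ w (4 * α * κ * v)
  have y2 := young hδ w (2 * α * κ ^ 2 * g)
  have y3 := young hδ w (2 * α * κ * M)
  have y4 := young one_pos v (4 * α * κ * M)
  have y5 := young hs (v ^ 2) (2 * α * g)
  have z1 : δ * w ^ 2 ≤ 4 * δ * b2 := by linarith [mul_le_mul_of_nonneg_left hw hδ.le]
  have z2 : 1 / δ * (4 * α * κ * v) ^ 2 ≤ 1 / δ * (32 * α ^ 2 * κ ^ 2) * (v0 ^ 2 + v1 ^ 2) := by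
    have := mul_le_mul_of_nonneg_left hv2 (by positivity : 0 ≤ 1 / δ * (16 * α ^ 2 * κ ^ 2))
    linarith
  have z3 : 1 / δ * (2 * α * κ ^ 2 * g) ^ 2 ≤ 1 / δ * (16 * α ^ 2 * κ ^ 4) * g2 := by
    have := mul_le_mul_of_nonneg_left hg (by positivity : 0 ≤ 1 / δ * (4 * α ^ 2 * κ ^ 4))
    linarith
  have z5 : s * (v ^ 2) ^ 2 ≤ 8 * s * (v0 ^ 4 + v1 ^ 4) := by
    linarith [mul_le_mul_of_nonneg_left hv4 hs.le]
  have z6 : 1 / s * (2 * α * g) ^ 2 ≤ 1 / s * (16 * α ^ 2) * g2 := by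
    have := mul_le_mul_of_nonneg_left hg (by positivity : 0 ≤ 1 / s * (4 * α ^ 2))
    linarith
  have z7 : α * (4 * κ * v * g ^ 2 + 4 * κ ^ 2 * v * h) ≤
      |v0 * (16 * α * κ * g2 + 4 * α * κ ^ 2 * h)| +
        |v1 * (16 * α * κ * g2 + 4 * α * κ ^ 2 * h)| := by
    rw [abs_mul, abs_mul, ← add_mul, ← hv]
    have a1 := le_abs_self (16 * α * κ * g2 + 4 * α * κ ^ 2 * h)
    have a2 := mul_le_mul_of_nonneg_left a1 hv0
    have a3 := mul_le_mul_of_nonneg_left hg (by positivity : 0 ≤ 4 * α * κ * v)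
    linarith
  linarith

/-! ### Growth of the acceleration -/

theorem cube_bound {a b c Y : ℝ} (ha : 0 ≤ a) (hb : 0 ≤ b) (hY : 1 ≤ Y) :
    a * Y + b * Y ^ 2 + c * Y ^ 3 ≤ (a + b + c) * Y ^ 3 := by
  have h1 : Y ≤ Y ^ 3 := le_self_pow₀ hY (by norm_num)
  have h2 : Y ^ 2 ≤ Y ^ 3 := pow_le_pow_right₀ hY (by norm_num)
  linarith [mul_le_mul_of_nonneg_left h1 ha, mul_le_mul_of_nonneg_left h2 hb]

/-- Bookkeeping of constants for the growth estimate of the acceleration. Here `B` and `A` are the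
squared `L²` norms of `∇∂ₜU` and `∂ₜU`, `L` is the fourth power integral of `∂ₜU`, `h` the pairing of
`∂ₜU` with second-order terms in the velocity, and `S` the weighted Hessian. The choices of `δ` and
`s` let `-2νB` absorb the Young (`12δB`), Hardy (`hh`) and Ladyzhenskaya (`hL`) terms, each of which
costs at most `νB/2`. -/
theorem growth_close {X B A y z m ν α₁ α₂ C M δ s K h L Φ S Ch Cg : ℝ} (hν : 0 < ν) (hα : 0 < α₁)
    (hC : 1 ≤ C) (hy : 0 ≤ y) (hz1 : z ≤ 1) (hm : 0 ≤ m) (hB : 0 ≤ B)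
    (hCh : 0 < Ch) (hCg : 0 < Cg) (hδ : δ = ν / 24) (hs : s = ν * α₁ / (64 * (1 + y)))
    (hK : K = C * (1 + y))
    (hX : X ≤ -(2 * ν) * B + (12 * δ * B + (1 / δ * (32 * α₂ ^ 2 * K) + 2) * A +
      (1 / δ * (16 * α₂ ^ 2 * K ^ 2) + 1 / s * (16 * α₂ ^ 2)) * z +
      (1 / δ * (4 * α₂ ^ 2 * K * M ^ 2) + 16 * α₂ ^ 2 * K * M ^ 2) * m + h + 8 * s * L))
    (hA : A ≤ 1 / α₁ * y) (hh : h ≤ ν / 2 * B + 2 * (Ch / (ν / 2) * Φ))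
    (hL : L ≤ 4 * (1 / α₁ * y) * B)
    (hΦ : Φ ≤ 1024 * α₂ ^ 2 * K * (Cg * K * (S + z)) + 192 * α₂ ^ 2 * K ^ 2 * S) (hS : S ≤ K) :
    X ≤ ((24 / ν * (32 * α₂ ^ 2 * C) * (1 / α₁)) * 1 + (24 / ν * (16 * α₂ ^ 2 * C ^ 2)) +
      (2 * (1 / α₁) + 64 / (ν * α₁) * (16 * α₂ ^ 2) +
        (24 / ν * (4 * α₂ ^ 2 * C * M ^ 2) + 16 * α₂ ^ 2 * C * M ^ 2) * m) +
      4 * Ch / ν * (1024 * α₂ ^ 2 * C * (Cg * C * (C + 1)) + 192 * α₂ ^ 2 * C ^ 3)) *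
      (1 + y) ^ 3 := by
  obtain ⟨Y, hY⟩ : ∃ Y, Y = 1 + y := ⟨_, rfl⟩
  have hY1 : 1 ≤ Y := by linarith
  have hyY : y ≤ Y := by linarith
  rw [← hY] at hs hK ⊢
  have hK0 : 0 < K := by rw [hK]; positivity
  have hδ0 : 0 < δ := by rw [hδ]; positivity
  have hs0 : 0 < s := by rw [hs]; positivity
  have iδ : 1 / δ = 24 / ν := by rw [hδ]; field_simp
  have is : 1 / s = 64 / (ν * α₁) * Y := by rw [hs]; field_simp
  have hA' : A ≤ 1 / α₁ * Y := hA.trans (mul_le_mul_of_nonneg_left hyY (by positivity))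
  have b1 : (1 / δ * (32 * α₂ ^ 2 * K) + 2) * A ≤
      (1 / δ * (32 * α₂ ^ 2 * K) + 2) * (1 / α₁ * Y) :=
    mul_le_mul_of_nonneg_left hA' (by positivity)
  have b2 : (1 / δ * (16 * α₂ ^ 2 * K ^ 2) + 1 / s * (16 * α₂ ^ 2)) * z ≤
      (1 / δ * (16 * α₂ ^ 2 * K ^ 2) + 1 / s * (16 * α₂ ^ 2)) * 1 :=
    mul_le_mul_of_nonneg_left hz1 (by positivity)
  have b3 : 8 * s * L ≤ ν / 2 * B := by
    have e1 := mul_le_mul_of_nonneg_left hL (by positivity : 0 ≤ 8 * s)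
    have e2 : 8 * s * (4 * (1 / α₁ * y) * B) = ν / 2 * B * (y / Y) := by
      rw [hs]; field_simp; ring
    have e3 : y / Y ≤ 1 := by rw [div_le_one (by linarith)]; exact hyY
    have e4 := mul_le_mul_of_nonneg_left e3 (by positivity : 0 ≤ ν / 2 * B)
    linarith
  have hKY : S + z ≤ (C + 1) * Y := by rw [hK] at hS; linarith
  have b4 : Φ ≤ (1024 * α₂ ^ 2 * C * (Cg * C * (C + 1)) + 192 * α₂ ^ 2 * C ^ 3) * Y ^ 3 := by
    have e1 := mul_le_mul_of_nonneg_left hKY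
      (by positivity : 0 ≤ 1024 * α₂ ^ 2 * K * (Cg * K))
    have e2 := mul_le_mul_of_nonneg_left hS (by positivity : 0 ≤ 192 * α₂ ^ 2 * K ^ 2)
    calc Φ ≤ 1024 * α₂ ^ 2 * K * (Cg * K) * ((C + 1) * Y) + 192 * α₂ ^ 2 * K ^ 2 * K := by linarith
      _ = _ := by rw [hK]; ring
  have b5 : 2 * (Ch / (ν / 2) * Φ) ≤ 4 * Ch / ν * (1024 * α₂ ^ 2 * C * (Cg * C * (C + 1)) +
      192 * α₂ ^ 2 * C ^ 3) * Y ^ 3 := by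
    have := mul_le_mul_of_nonneg_left b4 (by positivity : 0 ≤ 4 * Ch / ν)
    have e : 2 * (Ch / (ν / 2) * Φ) = 4 * Ch / ν * Φ := by field_simp; ring
    rw [e]; linarith
  have b6 : 12 * δ * B = ν / 2 * B := by rw [hδ]; ring
  have b7 : 0 ≤ ν * B := by positivity
  rw [iδ, is] at hX b2
  rw [iδ] at b1
  have hM2 : 0 ≤ (24 / ν * (4 * α₂ ^ 2 * C * M ^ 2) + 16 * α₂ ^ 2 * C * M ^ 2) * m := by positivity
  have fin := cube_bound (Y := Y)
    (a := 2 * (1 / α₁) + 64 / (ν * α₁) * (16 * α₂ ^ 2) +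
        (24 / ν * (4 * α₂ ^ 2 * C * M ^ 2) + 16 * α₂ ^ 2 * C * M ^ 2) * m)
    (b := (24 / ν * (32 * α₂ ^ 2 * C) * (1 / α₁)) * 1 + (24 / ν * (16 * α₂ ^ 2 * C ^ 2)))
    (c := 4 * Ch / ν * (1024 * α₂ ^ 2 * C * (Cg * C * (C + 1)) + 192 * α₂ ^ 2 * C ^ 3))
    (by positivity) (by positivity) hY1
  rw [hK] at b1 b2 hX
  linarith

/-- Growth of the acceleration while the Dirichlet energy is small. -/
theorem Sol.step3 (d : Dom Ω φ) (hne : Ω.Nonempty) (hν : 0 < ν) (S : Sol Ω ν U0 U1 R Q G)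
    {α₁ α₂ ε C : ℝ} (hα : 0 < α₁)
    (hR : ∀ t, 0 ≤ t → ∀ x ∈ Ω, α₁ ≤ R (t, x) ∧ R (t, x) ≤ α₂) (hε1 : ε ≤ 1) (hC : 1 ≤ C)
    (HU : ∀ t, 0 ≤ t → zz Ω U0 U1 t ≤ ε →
      (∀ x ∈ Ω, U0 (t, x) ^ 2 + U1 (t, x) ^ 2 ≤ C * (1 + yy Ω R U0 U1 t)) ∧
      J Ω (fun p => φ p.2 ^ 2 * (hM U0 p + hM U1 p)) t ≤ C * (1 + yy Ω R U0 U1 t)) :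
    ∃ C6 : ℝ, 0 ≤ C6 ∧ ∀ t, 0 < t → zz Ω U0 U1 t ≤ ε →
      J Ω (Dt (fun p => R p * (Dt U0 p ^ 2 + Dt U1 p ^ 2))) t ≤
        C6 * (1 + yy Ω R U0 U1 t) ^ 3 := by
  obtain ⟨M, hM1, hMG⟩ := S.G_bound d.bd
  obtain ⟨Ch, hCh, Hh⟩ := hardy_pair d hne
  obtain ⟨Cg, hCg, Hg⟩ := grad4_le d
  have hacc := fun t (ht : 0 < t) x (hx : x ∈ Ω) => S.accel d.op ht hx
  have hα2 : 0 < α₂ := by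
    obtain ⟨x, hx⟩ := hne
    have := hR 0 le_rfl x hx
    linarith
  have hy0 := fun t ht => yy_nonneg (U0 := U0) (U1 := U1) d.op hα (fun x hx => (hR t ht x hx).1)
  have hφ := d.sm
  obtain ⟨s0, s1, sR, sQ, sG, -, mom0, mom1, mass, div, bc0, bc1⟩ := S
  obtain ⟨m, hm⟩ : ∃ m, m = J Ω (fun _ => (1 : ℝ)) 0 := ⟨_, rfl⟩
  have hm0 : 0 ≤ m := by rw [hm]; exact J_nonneg d.op fun _ _ => zero_le_one
  refine ⟨_, ?_, fun t ht hz => growth_close (M := M) (m := m) (Ch := Ch) (Cg := Cg)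
    (B := J Ω (fun p => gM (Dt U0) p + gM (Dt U1) p) t)
    (A := J Ω (fun p => Dt U0 p ^ 2 + Dt U1 p ^ 2) t) hν hα hC (hy0 t ht.le)
    (hz.trans hε1) hm0
    (J_nonneg d.op fun _ _ => add_nonneg (gM_nonneg _ _) (gM_nonneg _ _)) hCh hCg rfl rfl rfl
    (h := J Ω (fun p => |Dt U0 p * (16 * α₂ * √(C * (1 + yy Ω R U0 U1 t)) * (gM U0 p + gM U1 p) +
        4 * α₂ * √(C * (1 + yy Ω R U0 U1 t)) ^ 2 * hA U0 U1 p)| +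
      |Dt U1 p * (16 * α₂ * √(C * (1 + yy Ω R U0 U1 t)) * (gM U0 p + gM U1 p) +
        4 * α₂ * √(C * (1 + yy Ω R U0 U1 t)) ^ 2 * hA U0 U1 p)|) t)
    (L := J Ω (fun p => Dt U0 p ^ 4 + Dt U1 p ^ 4) t)
    (Φ := J Ω (fun p => φ p.2 ^ 2 *
      (16 * α₂ * √(C * (1 + yy Ω R U0 U1 t)) * (gM U0 p + gM U1 p) +
        4 * α₂ * √(C * (1 + yy Ω R U0 U1 t)) ^ 2 * hA U0 U1 p) ^ 2) t)
    (S := J Ω (fun p => φ p.2 ^ 2 * (hM U0 p + hM U1 p)) t)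
    (α₂ := α₂) ?_ ?_ ?_ ?_ ?_ (HU t ht.le hz).2⟩
  · positivity
  all_goals
    have hy := hy0 t ht.le
    obtain ⟨HU, HS⟩ := HU t ht.le hz
    obtain ⟨K, hK⟩ : ∃ K, K = C * (1 + yy Ω R U0 U1 t) := ⟨_, rfl⟩
    simp only [← hK] at HU HS ⊢
    have hK0 : 0 < K := by rw [hK]; positivity
    obtain ⟨κ, hκ⟩ : ∃ κ, κ = √K := ⟨_, rfl⟩
    have hκ0 : 0 ≤ κ := by rw [hκ]; positivity
    have hκ2 : κ ^ 2 = K := by rw [hκ]; exact Real.sq_sqrt hK0.le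
    have v0 : ∀ x ∈ frontier Ω, Dt U0 (t, x) = 0 := fun x hx =>
      dt_eq_zero_of_pos s0 (fun t ht => bc0 t ht x hx) t ht
    have v1 : ∀ x ∈ frontier Ω, Dt U1 (t, x) = 0 := fun x hx =>
      dt_eq_zero_of_pos s1 (fun t ht => bc1 t ht x hx) t ht
  · rw [← hκ]
    have hs0 : 0 < ν * α₁ / (64 * (1 + yy Ω R U0 U1 t)) := by positivity
    have hδ0 : 0 < ν / 24 := by positivity
    generalize ν * α₁ / (64 * (1 + yy Ω R U0 U1 t)) = s at *
    generalize ν / 24 = δ at *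
    rw [← hκ2]
    have h := J_div_le d.op d.bd (t := t)
      (W0 := fun p => 2 * ν * (Dt U0 p * Dx (Dt U0) p + Dt U1 p * Dx (Dt U1) p) -
        2 * (Dt U0 p * Dt Q p) + R p * U0 p * qq U0 U1 G p)
      (W1 := fun p => 2 * ν * (Dt U0 p * Dy (Dt U0) p + Dt U1 p * Dy (Dt U1) p) -
        2 * (Dt U1 p * Dt Q p) + R p * U1 p * qq U0 U1 G p)
      (G := Dt (fun p => R p * (Dt U0 p ^ 2 + Dt U1 p ^ 2)))
      (H := fun p => -(2 * ν) * (gM (Dt U0) p + gM (Dt U1) p) +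
        (12 * δ * (gM (Dt U0) p + gM (Dt U1) p) +
        (1 / δ * (32 * α₂ ^ 2 * κ ^ 2) + 2) * (Dt U0 p ^ 2 + Dt U1 p ^ 2) +
        (1 / δ * (16 * α₂ ^ 2 * κ ^ 4) + 1 / s * (16 * α₂ ^ 2)) * (gM U0 p + gM U1 p) +
        (1 / δ * (4 * α₂ ^ 2 * κ ^ 2 * M ^ 2) + 16 * α₂ ^ 2 * κ ^ 2 * M ^ 2) * 1 +
        (|Dt U0 p * (16 * α₂ * κ * (gM U0 p + gM U1 p) + 4 * α₂ * κ ^ 2 * hA U0 U1 p)| +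
          |Dt U1 p * (16 * α₂ * κ * (gM U0 p + gM U1 p) + 4 * α₂ * κ ^ 2 * hA U0 U1 p)|) +
        8 * s * (Dt U0 p ^ 4 + Dt U1 p ^ 4)))
      (by fun_prop) (by fun_prop)
      (fun x hx => by simp [v0 x hx, v1 x hx, bc0 t ht.le x hx])
      (fun x hx => by simp [v0 x hx, v1 x hx, bc1 t ht.le x hx])
      (by fun_prop) (by fun_prop) (fun x hx => by
        rw [hacc t ht x hx]
        obtain ⟨-, g1, g2, g3, g4, g5⟩ := hMG t x hx
        have u0 : |U0 (t, x)| ≤ κ := by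
          rw [hκ]; exact abs_le_sqrt (by linarith [HU x hx, sq_nonneg (U1 (t, x))])
        have u1 : |U1 (t, x)| ≤ κ := by
          rw [hκ]; exact abs_le_sqrt (by linarith [HU x hx, sq_nonneg (U0 (t, x))])
        have e1 := accel_le s0 s1 sG u0 u1 g1 g2 g3 g4 g5 rfl rfl rfl rfl
        have e2 := accel_young (M := M) (h := hA U0 U1 (t, x)) hα2.le hκ0 hδ0 hs0 rfl
          (gA_sq (U0 := Dt U0) (U1 := Dt U1) (t, x)) (gA_sq (U0 := U0) (U1 := U1) (t, x))
          (v0 := Dt U0 (t, x)) (v1 := Dt U1 (t, x))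
        have e3 := mul_le_mul_of_nonneg_left e1 hα2.le
        obtain ⟨r1, r2⟩ := hR t ht.le x hx
        have hr : |R (t, x)| ≤ α₂ := by rw [abs_of_pos (by linarith)]; exact r2
        generalize U0 (t, x) * Dx (qq U0 U1 G) (t, x) + U1 (t, x) * Dy (qq U0 U1 G) (t, x) = X1 at *
        generalize Dt U0 (t, x) * Dt (cv U0 U1 U0) (t, x) +
          Dt U1 (t, x) * Dt (cv U0 U1 U1) (t, x) = X2 at *
        have e4 : -(R (t, x) * X1) ≤ α₂ * |X1| := by
          refine (neg_le_abs _).trans ?_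
          rw [abs_mul]; exact mul_le_mul_of_nonneg_right hr (abs_nonneg _)
        have e5 : -(R (t, x) * X2) ≤ α₂ * |X2| := by
          refine (neg_le_abs _).trans ?_
          rw [abs_mul]; exact mul_le_mul_of_nonneg_right hr (abs_nonneg _)
        have e6 := e3.trans e2
        linarith)
    rw [J_add d.bd (by fun_prop) (by fun_prop), J_add d.bd (by fun_prop) (by fun_prop),
      J_add d.bd (by fun_prop) (by fun_prop), J_add d.bd (by fun_prop) (by fun_prop),
      J_add d.bd (by fun_prop) (by fun_prop), J_add d.bd (by fun_prop) (by fun_prop),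
      J_smul, J_smul, J_smul, J_smul, J_smul, J_smul] at h
    rw [hm]
    have e : (κ ^ 2) ^ 2 = κ ^ 4 := by ring
    rw [e]
    exact h
  · rw [yy, ← J_smul]
    refine J_le d.op d.bd (by fun_prop) (by fun_prop) fun x hx => ?_
    obtain ⟨r1, -⟩ := hR t ht.le x hx
    have : 1 ≤ 1 / α₁ * R (t, x) := by
      rw [one_div, ← div_eq_inv_mul, le_div_iff₀ hα]; linarith
    rw [← mul_assoc]
    exact le_mul_of_one_le_left (by positivity) this
  · rw [← hκ]
    have k0 := Hh (ν / 2) (by positivity) (fun x => Dt U0 (t, x)) (by fun_prop) v0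
      (fun x => 16 * α₂ * κ * (gM U0 (t, x) + gM U1 (t, x)) + 4 * α₂ * κ ^ 2 * hA U0 U1 (t, x))
      (by fun_prop)
    have k1 := Hh (ν / 2) (by positivity) (fun x => Dt U1 (t, x)) (by fun_prop) v1
      (fun x => 16 * α₂ * κ * (gM U0 (t, x) + gM U1 (t, x)) + 4 * α₂ * κ ^ 2 * hA U0 U1 (t, x))
      (by fun_prop)
    simp only [gr_slice (show ContDiff ℝ ∞ (Dt U0) by fun_prop),
      gr_slice (show ContDiff ℝ ∞ (Dt U1) by fun_prop)] at k0 k1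
    rw [J_add d.bd (by fun_prop) (by fun_prop), J_add d.bd (by fun_prop) (by fun_prop)]
    unfold J
    linarith
  · have hA : ∀ W : ℝ × E2 → ℝ, Continuous W → (∀ p, W p ^ 2 ≤ Dt U0 p ^ 2 + Dt U1 p ^ 2) →
        J Ω (fun p => W p ^ 2) t ≤ 1 / α₁ * yy Ω R U0 U1 t := by
      intro W hW hle
      rw [yy, ← J_smul]
      refine J_le d.op d.bd (by fun_prop) (by fun_prop) fun x hx => ?_
      obtain ⟨r1, -⟩ := hR t ht.le x hx
      have : 1 ≤ 1 / α₁ * R (t, x) := by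
        rw [one_div, ← div_eq_inv_mul, le_div_iff₀ hα]; linarith
      rw [← mul_assoc]
      exact (hle _).trans (le_mul_of_one_le_left (by positivity) this)
    have a0 := hA (Dt U0) (by fun_prop) (fun p => by linarith [sq_nonneg (Dt U1 p)])
    have a1 := hA (Dt U1) (by fun_prop) (fun p => by linarith [sq_nonneg (Dt U0 p)])
    have l0 := lady d.op d.bd (h := fun x => Dt U0 (t, x)) (by fun_prop) v0
    have l1 := lady d.op d.bd (h := fun x => Dt U1 (t, x)) (by fun_prop) v1
    simp only [gr_slice (show ContDiff ℝ ∞ (Dt U0) by fun_prop),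
      gr_slice (show ContDiff ℝ ∞ (Dt U1) by fun_prop)] at l0 l1
    rw [J_add d.bd (by fun_prop) (by fun_prop), J_add d.bd (by fun_prop) (by fun_prop)]
    have b0 : 0 ≤ J Ω (gM (Dt U0)) t := J_nonneg d.op fun _ _ => gM_nonneg _ _
    have b1 : 0 ≤ J Ω (gM (Dt U1)) t := J_nonneg d.op fun _ _ => gM_nonneg _ _
    have c0 := mul_le_mul_of_nonneg_right a0 b0
    have c1 := mul_le_mul_of_nonneg_right a1 b1
    unfold J at *
    linarith
  · rw [← hκ]
    have g0 := Hg (fun x => U0 (t, x)) (by fun_prop) K hK0.le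
      (fun x hx => by linarith [HU x hx, sq_nonneg (U1 (t, x))])
    have g1 := Hg (fun x => U1 (t, x)) (by fun_prop) K hK0.le
      (fun x hx => by linarith [HU x hx, sq_nonneg (U0 (t, x))])
    simp only [gr_slice s0, gr_slice s1, hs_slice s0, hs_slice s1] at g0 g1
    have h := J_le d.op d.bd (t := t) (g := fun p => φ p.2 ^ 2 *
        (16 * α₂ * κ * (gM U0 p + gM U1 p) + 4 * α₂ * κ ^ 2 * hA U0 U1 p) ^ 2)
      (h := fun p => 1024 * α₂ ^ 2 * K * (φ p.2 ^ 2 * gM U0 p ^ 2 + φ p.2 ^ 2 * gM U1 p ^ 2) +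
        192 * α₂ ^ 2 * K ^ 2 * (φ p.2 ^ 2 * hM U0 p + φ p.2 ^ 2 * hM U1 p))
      (by fun_prop) (by fun_prop) (fun x hx => by
        have q1 := hA_sq (U0 := U0) (U1 := U1) (t, x)
        show φ x ^ 2 * (16 * α₂ * κ * (gM U0 (t, x) + gM U1 (t, x)) +
          4 * α₂ * κ ^ 2 * hA U0 U1 (t, x)) ^ 2 ≤ 1024 * α₂ ^ 2 * K * (φ x ^ 2 * gM U0 (t, x) ^ 2 +
          φ x ^ 2 * gM U1 (t, x) ^ 2) + 192 * α₂ ^ 2 * K ^ 2 * (φ x ^ 2 * hM U0 (t, x) +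
          φ x ^ 2 * hM U1 (t, x))
        generalize hA U0 U1 (t, x) = h at *
        generalize gM U0 (t, x) = p at *
        generalize gM U1 (t, x) = q at *
        have q2 : (16 * α₂ * κ * (p + q) + 4 * α₂ * κ ^ 2 * h) ^ 2 ≤
            1024 * α₂ ^ 2 * K * (p ^ 2 + q ^ 2) + 32 * α₂ ^ 2 * K ^ 2 * h ^ 2 := by
          rw [← hκ2]
          have := sq_nonneg (16 * α₂ * κ * (p + q) - 4 * α₂ * κ ^ 2 * h)
          have := sq_nonneg (α₂ * κ * (p - q))
          linarith
        have q3 := mul_le_mul_of_nonneg_left q1 (by positivity : 0 ≤ 32 * α₂ ^ 2 * K ^ 2)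
        have q4 := mul_le_mul_of_nonneg_left (q2.trans (add_le_add_right q3 _)) (sq_nonneg (φ x))
        linarith)
    rw [J_add d.bd (by fun_prop) (by fun_prop), J_smul, J_smul,
      J_add d.bd (by fun_prop) (by fun_prop), J_add d.bd (by fun_prop) (by fun_prop)] at h
    have e1 : J Ω (fun p => φ p.2 ^ 2 * (hM U0 p + hM U1 p)) t =
        J Ω (fun p => φ p.2 ^ 2 * hM U0 p) t + J Ω (fun p => φ p.2 ^ 2 * hM U1 p) t := by
      rw [← J_add d.bd (by fun_prop) (by fun_prop)]; simp only [mul_add]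
    have e2 : zz Ω U0 U1 t = J Ω (gM U0) t + J Ω (gM U1) t := by
      unfold zz; rw [J_add d.bd (by fun_prop) (by fun_prop)]
    rw [e1, e2]
    refine h.trans (add_le_add_left (mul_le_mul_of_nonneg_left ?_ (by positivity)) _)
    unfold J
    linarith

/-! ### The uniform bound in components -/

/-- The uniform bound in coordinates: `ode_bound` bounds the Dirichlet energy and the acceleration
after some time `T`, and there `Sol.static` bounds the velocity. -/
theorem Sol.bounded (d : Dom Ω φ) (hne : Ω.Nonempty) (hν : 0 < ν) (S : Sol Ω ν U0 U1 R Q G)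
    {α₁ α₂ : ℝ} (hα : 0 < α₁) (h0 : ∀ x ∈ Ω, α₁ ≤ R (0, x) ∧ R (0, x) ≤ α₂) :
    ∃ K : ℝ, ∀ t, 0 ≤ t → ∀ x ∈ Ω, U0 (t, x) ^ 2 + U1 (t, x) ^ 2 ≤ K := by
  have hR := S.density d.op d.bd h0
  obtain ⟨ε, C, hε, hε1, hC, HU⟩ := S.static d hne hν hα hR
  obtain ⟨ε0, C5, hε0, hεε, hC5, H5⟩ := S.step2 d hne hα hR hε hC
    (fun t ht hz => (HU t ht hz).1)
  obtain ⟨C6, hC6, H6⟩ := S.step3 d hne hν hα hR hε1 hC HU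
  obtain ⟨M, hM1, hMG⟩ := S.G_bound d.bd
  have s0 := S.s0
  have s1 := S.s1
  have sR := S.sR
  have sG := S.sG
  obtain ⟨T, K, hT, H⟩ := ode_bound (E := en Ω R U0 U1 G) (z := zz Ω U0 U1) (y := yy Ω R U0 U1)
    (m := J Ω (fun _ => -(α₂ * M)) 0) hν hε0 hC5 hC6 (fun t ht => S.energy d.op d.bd ht.le)
    (fun t ht => by
      have := J_le d.op d.bd (t := t) (g := fun _ => -(α₂ * M))
        (h := fun p => 1 / 2 * (R p * (U0 p ^ 2 + U1 p ^ 2)) + R p * G p)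
        (by fun_prop) (by fun_prop) (fun x hx => by
          obtain ⟨r1, r2⟩ := hR t ht.le x hx
          obtain ⟨g1, -⟩ := hMG t x hx
          have r0 : 0 ≤ R (t, x) := by linarith
          have e1 : 0 ≤ 1 / 2 * (R (t, x) * (U0 (t, x) ^ 2 + U1 (t, x) ^ 2)) := by positivity
          have e2 : |R (t, x) * G (t, x)| ≤ α₂ * M := by
            rw [abs_mul, abs_of_nonneg r0]
            exact mul_le_mul r2 g1 (abs_nonneg _) (by linarith)
          linarith [(abs_le.1 e2).1])
      exact this)
    (fun t _ => zz_nonneg d.op t)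
    (fun t ht => yy_nonneg d.op hα (fun x hx => (hR t ht.le x hx).1))
    (fun t _ => J_deriv d.op d.bd (by fun_prop) t)
    (fun t _ => J_deriv d.op d.bd (by fun_prop) t)
    (fun t ht hz => H5 t ht hz) (fun t ht hz => H6 t ht (hz.trans hεε))
  -- up to time `T` the bound comes from compactness of `[0, T] × closure Ω`
  have hc : Continuous (fun p : ℝ × E2 => U0 p ^ 2 + U1 p ^ 2) := by fun_prop
  obtain ⟨K', hK'⟩ := ((isCompact_Icc (a := 0) (b := T)).prod
    d.bd.isCompact_closure).exists_bound_of_continuousOn hc.continuousOn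
  refine ⟨max K' (C * (1 + K)), fun t ht x hx => ?_⟩
  rcases le_total t T with h | h
  · exact ((le_abs_self _).trans (hK' (t, x) ⟨⟨ht, h⟩, subset_closure hx⟩)).trans (le_max_left _ _)
  · obtain ⟨hz, hy⟩ := H t h
    refine ((HU t ht (hz.trans hεε)).1 x hx).trans (le_trans ?_ (le_max_right _ _))
    exact mul_le_mul_of_nonneg_left (by linarith) (by linarith)

/-- A sublevel set of a function with nonvanishing gradient on the boundary has that function as a
defining function. -/
theorem Dom.of_sublevel (hop : IsOpen Ω) (hbd : Bornology.IsBounded Ω) (hφ : ContDiff ℝ ∞ φ)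
    (hs : Ω = {x | φ x < 0}) (hreg : ∀ x ∈ frontier Ω, fderiv ℝ φ x ≠ 0) : Dom Ω φ where
  op := hop
  bd := hbd
  sm := hφ
  neg x hx := by rw [hs] at hx; exact hx
  zero x hx := by
    have h1 : x ∈ closure Ω := frontier_subset_closure hx
    have h2 : closure Ω ⊆ {x | φ x ≤ 0} := by
      refine closure_minimal (fun y hy => ?_) (isClosed_le hφ.continuous continuous_const)
      have hy2 : y ∈ {x | φ x < 0} := hs ▸ hy
      show φ y ≤ 0; exact le_of_lt (show φ y < 0 from hy2)
    have h3 : x ∉ Ω := by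
      rw [hop.frontier_eq] at hx
      exact hx.2
    rw [hs] at h3
    exact le_antisymm (h2 h1) (not_lt.1 h3)
  reg x hx := by
    have h0 : 0 ≤ gr φ x := by unfold gr; positivity
    refine lt_of_le_of_ne h0 fun h => hreg x hx ?_
    have e0 : ∂₀ φ x = 0 := by
      unfold gr at h; nlinarith [sq_nonneg (∂₀ φ x), sq_nonneg (∂₁ φ x)]
    have e1 : ∂₁ φ x = 0 := by
      unfold gr at h; nlinarith [sq_nonneg (∂₀ φ x), sq_nonneg (∂₁ φ x)]
    ext y
    have hy : y = y 0 • EuclideanSpace.single (0 : Fin 2) (1 : ℝ) +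
        y 1 • EuclideanSpace.single (1 : Fin 2) (1 : ℝ) := by
      ext i; fin_cases i <;> simp
    unfold dd at e0 e1
    rw [hy, map_add, map_smul, map_smul, e0, e1]
    simp

/-! ### From the vector-valued system to coordinates -/

theorem contDiff_coord {F : Type*} [NormedAddCommGroup F] [NormedSpace ℝ F] {v : F → E2}
    (hv : ContDiff ℝ ∞ v) (i : Fin 2) : ContDiff ℝ ∞ (fun y => v y i) :=
  (EuclideanSpace.proj (𝕜 := ℝ) i : E2 →L[ℝ] ℝ).contDiff.comp hv

theorem fderiv_coord {v : E2 → E2} (hv : ContDiff ℝ ∞ v) (i : Fin 2) (x e : E2) :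
    (fderiv ℝ v x e) i = dd e (fun y => v y i) x := by
  have h1 := (EuclideanSpace.proj (𝕜 := ℝ) i : E2 →L[ℝ] ℝ).hasFDerivAt.comp x
    (hv.differentiable (by norm_num) x).hasFDerivAt
  have h2 : (fun y => v y i) = (EuclideanSpace.proj (𝕜 := ℝ) i : E2 →L[ℝ] ℝ) ∘ v := rfl
  unfold dd
  rw [h2, h1.fderiv]
  rfl

theorem vlap_coord {v : E2 → E2} (hv : ContDiff ℝ ∞ v) (i : Fin 2) (x : E2) :
    vlap v x i = ∂₀ (∂₀ (fun y => v y i)) x + ∂₁ (∂₁ (fun y => v y i)) x := by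
  have hd : ∀ e : E2, ContDiff ℝ ∞ (fun y => fderiv ℝ v y e) := fun e =>
    (hv.fderiv_right (m := ∞) (by norm_cast)).clm_apply contDiff_const
  have key : ∀ e : E2, (fderiv ℝ (fun y => fderiv ℝ v y e) x e) i
      = dd e (dd e (fun y => v y i)) x := by
    intro e
    rw [fderiv_coord (hd e)]
    congr 1
    funext y
    exact fderiv_coord hv i y e
  simp only [vlap, Fin.sum_univ_two, PiLp.add_apply, key]

theorem gradient_coord (g : E2 → ℝ) (x : E2) (i : Fin 2) :
    gradient g x i = dd (EuclideanSpace.single i (1 : ℝ)) g x := by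
  have h : ⟪gradient g x, EuclideanSpace.single i (1 : ℝ)⟫ = fderiv ℝ g x (EuclideanSpace.single i 1) :=
    by simp [gradient]
  rw [EuclideanSpace.inner_single_right] at h
  simpa [dd] using h

theorem dd_eq_coord (g : E2 → ℝ) (x y : E2) : dd y g x = y 0 * ∂₀ g x + y 1 * ∂₁ g x := by
  have hy : y = y 0 • EuclideanSpace.single (0 : Fin 2) (1 : ℝ)
      + y 1 • EuclideanSpace.single (1 : Fin 2) (1 : ℝ) := by
    ext i; fin_cases i <;> simp
  conv_lhs => rw [hy]
  simp [dd]

/-- One coordinate of the material derivative and of the Laplacian of `u`, rewritten with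
space-time derivatives. -/
theorem coord_rules {u : ℝ → E2 → E2} (hu : ContDiff ℝ ∞ (fun p : ℝ × E2 => u p.1 p.2))
    (i : Fin 2) (t : ℝ) (x : E2) :
    (deriv (fun s => u s x) t) i = Dt (fun p : ℝ × E2 => u p.1 p.2 i) (t, x) ∧
    (∀ e : E2, (fderiv ℝ (u t) x e) i
      = e 0 * Dx (fun p : ℝ × E2 => u p.1 p.2 i) (t, x)
        + e 1 * Dy (fun p : ℝ × E2 => u p.1 p.2 i) (t, x)) ∧
    vlap (u t) x i = Dx (Dx (fun p : ℝ × E2 => u p.1 p.2 i)) (t, x)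
      + Dy (Dy (fun p : ℝ × E2 => u p.1 p.2 i)) (t, x) := by
  have hi := contDiff_coord hu i
  have ht : ContDiff ℝ ∞ (u t) := hu.comp (contDiff_const.prodMk contDiff_id)
  have hx : ContDiff ℝ ∞ (fun s => u s x) := hu.comp (contDiff_id.prodMk contDiff_const)
  have sl : ∀ e : E2, dd e (fun y => u t y i) = fun y =>
      dd ((0 : ℝ), e) (fun p : ℝ × E2 => u p.1 p.2 i) (t, y) := fun e => slice_fun hi e t
  refine ⟨?_, fun e => ?_, ?_⟩
  · have h1 := (EuclideanSpace.proj (𝕜 := ℝ) i : E2 →L[ℝ] ℝ).hasFDerivAt.comp_hasDerivAt t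
      (hx.differentiable (by norm_num) t).hasDerivAt
    exact h1.unique (slice_time hi t x)
  · rw [fderiv_coord ht, dd_eq_coord, sl, sl]
  · rw [vlap_coord ht, sl, sl, slice (dd_contDiff hi), slice (dd_contDiff hi)]

/-- The total density `ϱ + ρ_s` and the total pressure `P + p_s` solve the inhomogeneous
Navier–Stokes equations with force `-∇f`. -/
theorem Sol.of_perturbation {Ω : Set E2} {ν : ℝ} {f ρs ps : E2 → ℝ} (hf : ContDiff ℝ ∞ f)
    (hρs : ContDiff ℝ ∞ ρs) (hps : ContDiff ℝ ∞ ps)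
    (hst : ∀ x ∈ Ω, gradient ps x = -(ρs x • gradient f x))
    {u : ℝ → E2 → E2} {ϱ P : ℝ → E2 → ℝ} (hsm : SmoothSol u ϱ P)
    (hsys : PerturbationSystem Ω ν f ρs u ϱ P) :
    Sol Ω ν (fun p => u p.1 p.2 0) (fun p => u p.1 p.2 1) (fun p => ϱ p.1 p.2 + ρs p.2)
      (fun p => P p.1 p.2 + ps p.2) (fun p => f p.2) := by
  obtain ⟨hu, hϱ, hP⟩ := hsm
  obtain ⟨hm, hr, hdv, hbc⟩ := hsys
  have lift : ∀ {g : E2 → ℝ}, ContDiff ℝ ∞ g → ContDiff ℝ ∞ (fun p : ℝ × E2 => g p.2) :=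
    fun hg => hg.comp contDiff_snd
  have sp : ∀ {g : E2 → ℝ}, ContDiff ℝ ∞ g → ∀ (e : E2) t x,
      dd ((0 : ℝ), e) (fun p : ℝ × E2 => g p.2) (t, x) = dd e g x := fun hg e t x =>
    (slice (lift hg) e t x).symm
  have st : ∀ {g : E2 → ℝ}, ContDiff ℝ ∞ g → ∀ t x,
      Dt (fun p : ℝ × E2 => g p.2) (t, x) = 0 := fun {g} hg t x =>
    (slice_time (lift hg) t x).unique (hasDerivAt_const t (g x))
  have mom : ∀ i : Fin 2, ∀ t, 0 ≤ t → ∀ x ∈ Ω,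
      (ϱ t x + ρs x) * (Dt (fun p : ℝ × E2 => u p.1 p.2 i) (t, x)
        + (u t x 0 * Dx (fun p : ℝ × E2 => u p.1 p.2 i) (t, x)
          + u t x 1 * Dy (fun p : ℝ × E2 => u p.1 p.2 i) (t, x))
        + dd ((0 : ℝ), (EuclideanSpace.single i (1 : ℝ) : E2)) (fun p => f p.2) (t, x))
      - ν * (Dx (Dx (fun p : ℝ × E2 => u p.1 p.2 i)) (t, x)
        + Dy (Dy (fun p : ℝ × E2 => u p.1 p.2 i)) (t, x))
      + dd ((0 : ℝ), (EuclideanSpace.single i (1 : ℝ) : E2))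
          (fun p => P p.1 p.2 + ps p.2) (t, x) = 0 := by
    intro i t ht x hx
    obtain ⟨c1, c2, c3⟩ := coord_rules hu i t x
    have e1 := congrArg (fun w : E2 => w i) (hm t ht x hx)
    have e2 := congrArg (fun w : E2 => w i) (hst x hx)
    simp only [PiLp.add_apply, PiLp.sub_apply, PiLp.smul_apply, PiLp.neg_apply, smul_eq_mul,
      gradient_coord, c1, c2, c3] at e1 e2
    have e3 : dd (EuclideanSpace.single i (1 : ℝ)) (P t) x = _ :=
      slice (g := fun p : ℝ × E2 => P p.1 p.2) hP (EuclideanSpace.single i (1 : ℝ)) t x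
    rw [dd_add hP (lift hps), sp hf, sp hps, ← e3]
    linear_combination e1 + e2
  refine ⟨contDiff_coord hu 0, contDiff_coord hu 1, hϱ.add (lift hρs), hP.add (lift hps), lift hf,
    fun _ _ _ => rfl, mom 0, mom 1, fun t ht x hx => ?_, fun t ht x hx => ?_,
    fun t ht x hx => ?_, fun t ht x hx => ?_⟩
  · have h := hr t ht x hx
    have e1 : deriv (fun s => ϱ s x) t = _ :=
      (slice_time (g := fun p : ℝ × E2 => ϱ p.1 p.2) hϱ t x).deriv
    have e2 : ∀ e : E2, dd e (ϱ t) x = _ := fun e =>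
      slice (g := fun p : ℝ × E2 => ϱ p.1 p.2) hϱ e t x
    change _ + dd (u t x) (ϱ t) x + dd (u t x) ρs x = 0 at h
    rw [dd_eq_coord (ϱ t), dd_eq_coord ρs, e1, e2, e2] at h
    rw [dd_add hϱ (lift hρs), dd_add hϱ (lift hρs), dd_add hϱ (lift hρs), st hρs, sp hρs, sp hρs]
    linear_combination h
  · have h := hdv t ht x hx
    simp only [vdiv, Fin.sum_univ_two, (coord_rules hu _ t x).2.1] at h
    simpa using h
  · simp [hbc t ht x hx]
  · simp [hbc t ht x hx]

end

/-- The velocity is uniformly bounded in space and time: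
`‖u(t)‖_{L^∞(Ω)} ≤ C₀` for all `t ∈ [0,∞)`. -/
theorem u_uniform_Linfty_bound
    (Ω : Set E2) (hΩ : SmoothBoundedDomain Ω)
    (ν : ℝ) (hν : 0 < ν)
    (f ρs : E2 → ℝ) (hf : ContDiff ℝ (⊤ : ℕ∞) f) (hρs : ContDiff ℝ (⊤ : ℕ∞) ρs)
    (hhyd : Hydrostatic Ω f ρs)
    (hgradf : GradfW1inf Ω f)
    (u : ℝ → E2 → E2) (ϱ P : ℝ → E2 → ℝ)
    (hsmooth : SmoothSol u ϱ P)
    (hsys : PerturbationSystem Ω ν f ρs u ϱ P)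
    (α₁ α₂ : ℝ) (hα₁ : 0 < α₁)
    (hinit : ∀ x ∈ Ω, α₁ ≤ ϱ 0 x + ρs x ∧ ϱ 0 x + ρs x ≤ α₂)
    -- initial data (u₀, ϱ₀) ∈ H²(Ω) × L^∞(Ω)
    (hu₀ : MemHk 2 Ω (u 0))
    (hϱ₀ : ∃ M : ℝ, ∀ x ∈ Ω, |ϱ 0 x| ≤ M) :
    ∃ C₀ : ℝ, ∀ t ∈ Ici (0:ℝ), ∀ x ∈ Ω, ‖u t x‖ ≤ C₀ := by
  obtain ⟨hop, hbd, hne, φ, hφ, hs, hreg⟩ := hΩ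
  obtain ⟨ps, hps, hst⟩ := hhyd
  have d := Dom.of_sublevel hop hbd hφ hs hreg
  have S := Sol.of_perturbation hf hρs hps hst hsmooth hsys
  obtain ⟨K, hK⟩ := S.bounded d hne hν hα₁ hinit
  refine ⟨√K, fun t ht x hx => Real.le_sqrt_of_sq_le ?_⟩
  rw [EuclideanSpace.norm_sq_eq, Fin.sum_univ_two, Real.norm_eq_abs, Real.norm_eq_abs, sq_abs,
    sq_abs]
  exact hK t ht x hx
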